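/- Let β≥2 be an integer with ⌊(β−3)/3⌋ ≥ 1, and let c > 1/⌊(β−3)/3⌋. For every β-buildable graph H, and every σ>0 with c−σ > 1/⌊(β−3)/3⌋, there exist integers K,N>0 and λ>0 such that (N,K,σ,λ,c) forces H. -/

import Mathlib

noncomputable section

namespace PurePairs

open SimpleGraph

variable {V W : Type*}

/-- A pure pair in `G`: a pair of disjoint vertex sets that are complete
or anticomplete to each other. -/
def PurePair (G : SimpleGraph V) (A B : Set V) : Prop :=
  Disjoint A B ∧
    ((∀ a ∈ A, ∀ b ∈ B, G.Adj a b) ∨ (∀ a ∈ A, ∀ b ∈ B, ¬ G.Adj a b))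

/-- `G` contains `H`: some induced subgraph of `G` is isomorphic to `H`. -/
def Contains (G : SimpleGraph V) (H : SimpleGraph W) : Prop :=
  Nonempty (H ↪g G)

/-- The congestion of a graph `H`: the maximum (here: supremum, together with `0`)
of `1 - (|J|-1)/|E(J)|` over all subgraphs `J` of `H` with at least one edge.
If `H` has no edges this is `0`. -/
def congestion (H : SimpleGraph V) : ℝ :=
  sSup ({0} ∪ {x : ℝ | ∃ J : H.Subgraph, J.edgeSet.Nonempty ∧
    x = 1 - ((J.verts.ncard : ℝ) - 1) / (J.edgeSet.ncard : ℝ)})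

/-- `A` is anticomplete to `B`: no edges between them. -/
def Anticomplete (G : SimpleGraph V) (A B : Set V) : Prop :=
  ∀ a ∈ A, ∀ b ∈ B, ¬ G.Adj a b

/-- `A` covers `B`: every vertex of `B` has a neighbour in `A`. -/
def Covers (G : SimpleGraph V) (A B : Set V) : Prop :=
  ∀ b ∈ B, ∃ a ∈ A, G.Adj a b

/-- `G` is `ε`-sparse: every vertex has degree less than `ε|G|`. -/
def EpsSparse (G : SimpleGraph V) [Fintype V] (ε : ℝ) : Prop :=
  ∀ v : V, ((G.neighborSet v).ncard : ℝ) < ε * (Fintype.card V : ℝ)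

/-- `G` is `(γ,δ)`-coherent: there is no pair of disjoint anticomplete sets `A`, `B`
with `|A| ≥ γ` and `|B| ≥ δ`. -/
def Coherent (G : SimpleGraph V) (γ δ : ℝ) : Prop :=
  ¬ ∃ A B : Set V, Disjoint A B ∧ Anticomplete G A B ∧
      γ ≤ (A.ncard : ℝ) ∧ δ ≤ (B.ncard : ℝ)

/-- `N(X)`: the set of vertices with a neighbour in `X`. -/
def nbhd (G : SimpleGraph V) (X : Set V) : Set V :=
  {v | ∃ x ∈ X, G.Adj x v}

/-- A blockade: a family of nonempty pairwise disjoint vertex sets indexed by a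
finite set of integers. -/
def IsBlockade (I : Finset ℤ) (A : ℤ → Set V) : Prop :=
  (∀ i ∈ I, (A i).Nonempty) ∧
    ∀ i ∈ I, ∀ j ∈ I, i ≠ j → Disjoint (A i) (A j)

/-- The blockade `(A i : i ∈ I)` is `(γ,δ)`-divergent. -/
def Divergent (G : SimpleGraph V) (I : Finset ℤ) (A : ℤ → Set V) (γ δ : ℝ) : Prop :=
  ∃ i ∈ I, ∃ j ∈ I, i ≠ j ∧ ∃ X ⊆ A i, ∃ Y ⊆ A j,
    γ * ((A i).ncard : ℝ) ≤ (X.ncard : ℝ) ∧ δ * ((A j).ncard : ℝ) ≤ (Y.ncard : ℝ) ∧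
    Anticomplete G X Y

/-- The blockade `(A i : i ∈ I)` is `τ`-expanding. -/
def Expanding (G : SimpleGraph V) (I : Finset ℤ) (A : ℤ → Set V) (τ : ℝ) : Prop :=
  ∀ i ∈ I, ∀ j ∈ I, i ≠ j → ∀ X ⊆ A i,
    min (τ * (X.ncard : ℝ) / ((A i).ncard : ℝ)) (1/4)
      ≤ (((nbhd G X) ∩ A j).ncard : ℝ) / ((A j).ncard : ℝ)

/-- The linkage of the blockade `(A i : i ∈ I)` is at most `lam`. -/
def LinkageLE (G : SimpleGraph V) (I : Finset ℤ) (A : ℤ → Set V) (lam : ℝ) : Prop :=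
  ∀ i ∈ I, ∀ j ∈ I, i ≠ j → ∀ v ∈ A i,
    ((G.neighborSet v ∩ A j).ncard : ℝ) ≤ lam * ((A j).ncard : ℝ)

/-- The shrinkage of the blockade `(A i : i ∈ I)` is at most `σ`, i.e. its width is at
least `|G|^{1-σ}`. -/
def ShrinkageLE [Fintype V] (I : Finset ℤ) (A : ℤ → Set V) (σ : ℝ) : Prop :=
  ∀ i ∈ I, (Fintype.card V : ℝ) ^ (1 - σ) ≤ ((A i).ncard : ℝ)

/-- `(L 0, …, L k)` is a levelling in `G`. -/
def IsLevelling (G : SimpleGraph V) (L : ℕ → Set V) (k : ℕ) : Prop :=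
  1 ≤ k ∧ (L 0).ncard = 1 ∧
  (∀ i ≤ k, ∀ j ≤ k, i ≠ j → Disjoint (L i) (L j)) ∧
  (∀ i, 1 ≤ i → i ≤ k → Covers G (L (i-1)) (L i)) ∧
  (∀ i, 2 ≤ i → i ≤ k → ∀ h, h + 2 ≤ i → Anticomplete G (L h) (L i))

/-- The levelling `(L 0, …, L k)` reaches `C`, i.e. `(L 0, …, L k, C)` is a levelling. -/
def Reaches (G : SimpleGraph V) (L : ℕ → Set V) (k : ℕ) (C : Set V) : Prop :=
  IsLevelling G (fun i => if i = k + 1 then C else L i) (k + 1)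

/-- The levelling `(L 0, …, L k)` is `(B i : i ∈ I)`-rainbow. -/
def RainbowLevelling (I : Finset ℤ) (B : ℤ → Set V) (L : ℕ → Set V) (k : ℕ) : Prop :=
  ∃ q : ℕ → ℤ, (∀ i ≤ k, q i ∈ I ∧ L i ⊆ B (q i)) ∧
    ∀ i ≤ k, ∀ j ≤ k, q i = q j → i = j

/-- The levelling `(L 0, …, L k)` grades the blockade `(C j : j ∈ J)` (in some order). -/
def Grades (G : SimpleGraph V) (L : ℕ → Set V) (k : ℕ) (J : Finset ℤ) (C : ℤ → Set V) :
    Prop :=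
  Reaches G L k (⋃ j ∈ J, C j) ∧
  ∃ e : ℕ → ℤ, (∀ g < J.card, e g ∈ J) ∧
    (∀ g < J.card, ∀ h < J.card, e g = e h → g = h) ∧
    ∀ g < J.card, ∃ Y ⊆ L k,
      (∀ h, g ≤ h → h < J.card → Covers G Y (C (e h))) ∧
      (∀ h, h < g → Anticomplete G Y (C (e h)))

/-- The levelling `(L 0, …, L k)` grades the blockade `(C j : j ∈ J)` forwards. -/
def GradesFwd (G : SimpleGraph V) (L : ℕ → Set V) (k : ℕ) (J : Finset ℤ) (C : ℤ → Set V) :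
    Prop :=
  Reaches G L k (⋃ j ∈ J, C j) ∧
  ∀ j ∈ J, ∃ Y ⊆ L k,
    (∀ i ∈ J, j ≤ i → Covers G Y (C i)) ∧
    (∀ i ∈ J, i < j → Anticomplete G Y (C i))

/-- The levelling `(L 0, …, L k)` grades the blockade `(C j : j ∈ J)` backwards. -/
def GradesBwd (G : SimpleGraph V) (L : ℕ → Set V) (k : ℕ) (J : Finset ℤ) (C : ℤ → Set V) :
    Prop :=
  Reaches G L k (⋃ j ∈ J, C j) ∧
  ∀ j ∈ J, ∃ Y ⊆ L k,
    (∀ i ∈ J, i ≤ j → Covers G Y (C i)) ∧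
    (∀ i ∈ J, j < i → Anticomplete G Y (C i))

/-- Two levellings are parallel. -/
def Parallel (G : SimpleGraph V) (L : ℕ → Set V) (k : ℕ) (M : ℕ → Set V) (m : ℕ) : Prop :=
  L 0 = M 0 ∧
  Disjoint (⋃ j ∈ Finset.Icc 1 m, M j) (⋃ i ∈ Finset.Icc 1 k, L i) ∧
  Anticomplete G (⋃ j ∈ Finset.Icc 1 m, M j) (⋃ i ∈ Finset.Icc 1 k, L i)

/-- `(L, M, C)` is a bi-levelling, where `L` has height `k` and `M` has height `m`:
`C` is a blockade, `L, M` are parallel levellings both reaching the union of the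
blocks of `C`, and `L` grades `C` forwards. Its height is `k + m` and its length is
the length of `C`. -/
def IsBiLevelling (G : SimpleGraph V) (L : ℕ → Set V) (k : ℕ) (M : ℕ → Set V) (m : ℕ)
    (J : Finset ℤ) (C : ℤ → Set V) : Prop :=
  IsBlockade J C ∧ IsLevelling G L k ∧ IsLevelling G M m ∧ Parallel G L k M m ∧
    Reaches G M m (⋃ j ∈ J, C j) ∧ GradesFwd G L k J C

/-- A bi-grading: a bi-levelling in which `M` also grades `C` backwards. -/
def IsBiGrading (G : SimpleGraph V) (L : ℕ → Set V) (k : ℕ) (M : ℕ → Set V) (m : ℕ)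
    (J : Finset ℤ) (C : ℤ → Set V) : Prop :=
  IsBiLevelling G L k M m J C ∧ GradesBwd G M m J C

/-- The bi-levelling `(L, M, C)` is `(A i : i ∈ I)`-rainbow: each block of `C`, each
level of `L`, and each level of `M` other than `M 0 = L 0` is included in a block of
`A`, and distinct such sets lie in distinct blocks. -/
def RainbowBiLevelling (I : Finset ℤ) (A : ℤ → Set V)
    (L : ℕ → Set V) (k : ℕ) (M : ℕ → Set V) (m : ℕ)
    (J : Finset ℤ) (C : ℤ → Set V) : Prop :=
  ∃ (qc : ℤ → ℤ) (ql qm : ℕ → ℤ),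
    (∀ j ∈ J, qc j ∈ I ∧ C j ⊆ A (qc j)) ∧
    (∀ i ≤ k, ql i ∈ I ∧ L i ⊆ A (ql i)) ∧
    (∀ i, 1 ≤ i → i ≤ m → qm i ∈ I ∧ M i ⊆ A (qm i)) ∧
    (∀ j ∈ J, ∀ j' ∈ J, qc j = qc j' → j = j') ∧
    (∀ i ≤ k, ∀ i' ≤ k, ql i = ql i' → i = i') ∧
    (∀ i, 1 ≤ i → i ≤ m → ∀ i', 1 ≤ i' → i' ≤ m → qm i = qm i' → i = i') ∧
    (∀ j ∈ J, ∀ i ≤ k, qc j ≠ ql i) ∧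
    (∀ j ∈ J, ∀ i, 1 ≤ i → i ≤ m → qc j ≠ qm i) ∧
    (∀ i ≤ k, ∀ i', 1 ≤ i' → i' ≤ m → ql i ≠ qm i')

/-- Each block of `(C j : j ∈ J)` lies in a block of `(A i : i ∈ I)`; the `A`-size of
`C` is at least `η` when every block of `C` has size at least `η` times the size of the
block of `A` containing it. -/
def SizeGE (I : Finset ℤ) (A : ℤ → Set V) (J : Finset ℤ) (C : ℤ → Set V) (η : ℝ) : Prop :=
  ∀ j ∈ J, ∀ i ∈ I, C j ⊆ A i → η * ((A i).ncard : ℝ) ≤ ((C j).ncard : ℝ)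

/-- A `(B i : i ∈ I)`-rainbow induced path `p 0 - p 1 - ⋯ - p n` in `G`. -/
def RainbowPath (G : SimpleGraph V) (I : Finset ℤ) (B : ℤ → Set V)
    (n : ℕ) (p : ℕ → V) : Prop :=
  (∀ i ≤ n, ∀ j ≤ n, p i = p j → i = j) ∧
  (∀ i < n, G.Adj (p i) (p (i+1))) ∧
  (∀ i j, i + 1 < j → j ≤ n → ¬ G.Adj (p i) (p j)) ∧
  ∃ q : ℕ → ℤ, (∀ i ≤ n, q i ∈ I ∧ p i ∈ B (q i)) ∧
    ∀ i ≤ n, ∀ j ≤ n, q i = q j → i = j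

/-- A `(B i : i ∈ I)`-rainbow copy of `H` in `G`: an induced copy of `H` with each
vertex in a different block. -/
def RainbowCopy (G : SimpleGraph V) (I : Finset ℤ) (B : ℤ → Set V)
    (H : SimpleGraph W) : Prop :=
  ∃ (f : H ↪g G) (q : W → ℤ), Function.Injective q ∧ ∀ w : W, q w ∈ I ∧ f w ∈ B (q w)

/-- `(N,K,σ,lam,c)` forces `H`. -/
def Forces (H : SimpleGraph W) (N K : ℕ) (σ lam c : ℝ) : Prop :=
  ∀ {V : Type} [Fintype V] (G : SimpleGraph V),
    Coherent G ((Fintype.card V : ℝ) ^ (1 - c)) ((Fintype.card V : ℝ) ^ (1 - c)) →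
    N ≤ Fintype.card V →
    ∀ (I : Finset ℤ) (A : ℤ → Set V), IsBlockade I A → I.card = K →
      ShrinkageLE I A σ → LinkageLE G I A lam →
      RainbowCopy G I A H

/-- `p 0 - ⋯ - p n` is a handle of length `n` that can be added to (the graph induced
on) `S` inside the ambient graph `H`: an induced path of `H[S ∪ p]` of length at least
two whose ends lie in `S`, whose internal vertices avoid `S` and have degree two in
`H[S ∪ p]`. -/
def IsHandle (H : SimpleGraph V) (S : Set V) (n : ℕ) (p : ℕ → V) : Prop :=
  2 ≤ n ∧
  (∀ i ≤ n, ∀ j ≤ n, p i = p j → i = j) ∧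
  p 0 ∈ S ∧ p n ∈ S ∧
  (∀ i, 0 < i → i < n → p i ∉ S) ∧
  (∀ i < n, H.Adj (p i) (p (i+1))) ∧
  (∀ i j, i + 1 < j → j ≤ n → ¬ H.Adj (p i) (p j)) ∧
  (∀ i, 0 < i → i < n → ∀ w, (w ∈ S ∨ ∃ j ≤ n, w = p j) → H.Adj (p i) w →
    w = p (i-1) ∨ w = p (i+1))

/-- The vertex sets `S` such that the induced subgraph `H[S]` can be built, starting
from the two-vertex graph with no edges, by repeatedly adding handles of length at
least `β`. -/
inductive BuildableOn (H : SimpleGraph V) (β : ℕ) : Set V → Prop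
  | base (u v : V) (huv : u ≠ v) (hadj : ¬ H.Adj u v) : BuildableOn H β {u, v}
  | handle (S : Set V) (n : ℕ) (p : ℕ → V) (hS : BuildableOn H β S)
      (hh : IsHandle H S n p) (hn : β ≤ n) :
      BuildableOn H β (S ∪ {w | ∃ j ≤ n, w = p j})

/-- `H` is `β`-buildable. -/
def Buildable [Fintype V] (H : SimpleGraph V) (β : ℕ) : Prop :=
  BuildableOn H β Set.univ

/-- The vertex sets `S` such that the induced subgraph `H[S]` can be built, starting
from the null graph, by repeatedly adding a subleaf or a handle of length at least
`β`. -/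
inductive WeaklyBuildableOn (H : SimpleGraph V) (β : ℕ) : Set V → Prop
  | empty : WeaklyBuildableOn H β ∅
  | subleaf (S : Set V) (v : V) (hv : v ∉ S) (hdeg : (S ∩ H.neighborSet v).ncard ≤ 1)
      (hS : WeaklyBuildableOn H β S) : WeaklyBuildableOn H β (insert v S)
  | handle (S : Set V) (n : ℕ) (p : ℕ → V) (hS : WeaklyBuildableOn H β S)
      (hh : IsHandle H S n p) (hn : β ≤ n) :
      WeaklyBuildableOn H β (S ∪ {w | ∃ j ≤ n, w = p j})

/-- `H` is weakly `β`-buildable. -/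
def WeaklyBuildable [Fintype V] (H : SimpleGraph V) (β : ℕ) : Prop :=
  WeaklyBuildableOn H β Set.univ

/-!
Follow the construction of `H`, letting `σ` grow slightly with each handle. It suffices to find, in
a long blockade of small linkage, a sub-blockade of prescribed length and slightly smaller blocks,
any two vertices `u`, `v` from distinct blocks of which are joined by a rainbow path of prescribed
length whose interior is induced and has no unwanted neighbours in the sub-blockade.

These paths are made of levellings. Removing from the blocks the sets that expand badly leaves a
blockade in which neighbourhoods grow by a factor of order `|G| ^ (c - σ)`. With
`k = ⌊(β - 3) / 3⌋` we have `k * (c - σ) > 1`, so a levelling grown from a single vertex sees a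
constant fraction of an unused block after at most `k` steps; from then on coherence lets it run
through as many further blocks as desired. By averaging over random subsets of the last level,
biased by the number of hits, one finds private covers: parts of that level, each covering
a large part of one block and having no neighbours in the others.

Grow two levellings from a common root `w`. Part of the last level of the first covers a block `E`
privately, and the last level of the second contains private covers of the other blocks. Then grow
a third levelling from some `x` in `E`, with private covers in its last level. The path runs from
`u` through its private cover down the third levelling to `x`, down the first to `w`, and up the
second to a private cover of `v`. The first two levellings have height at most `k`; that
of the third can be any number from `k` on, so every length from `3 * k + 3 ≤ β` on is attained.
-/

open Finset
open scoped Classical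

/-! ### Neighbourhoods in finite sets -/

section Neighbourhoods

variable {G : SimpleGraph V}

/-- The vertices of `B` with a neighbour in `X`. In particular `#(nbhdIn G {x} B)` is the degree
of `x` into `B`. -/
def nbhdIn (G : SimpleGraph V) (X B : Finset V) : Finset V :=
  {v ∈ B | ∃ x ∈ X, G.Adj x v}

theorem mem_nbhdIn {X B : Finset V} {v : V} : v ∈ nbhdIn G X B ↔ v ∈ B ∧ ∃ x ∈ X, G.Adj x v :=
  mem_filter

theorem mem_nbhdIn_singleton {x v : V} {B : Finset V} :
    v ∈ nbhdIn G {x} B ↔ v ∈ B ∧ G.Adj x v := by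
  simp [mem_nbhdIn]

theorem nbhdIn_subset (X B : Finset V) : nbhdIn G X B ⊆ B :=
  filter_subset _ _

theorem nbhdIn_mono {X Y B C : Finset V} (hXY : X ⊆ Y) (hBC : B ⊆ C) :
    nbhdIn G X B ⊆ nbhdIn G Y C := fun v hv ↦ by
  obtain ⟨hvB, x, hx, hxv⟩ := mem_nbhdIn.1 hv
  exact mem_nbhdIn.2 ⟨hBC hvB, x, hXY hx, hxv⟩

theorem nbhdIn_empty (B : Finset V) : nbhdIn G ∅ B = ∅ := by
  simp [nbhdIn]

theorem nbhdIn_union (X Y B : Finset V) :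
    nbhdIn G (X ∪ Y) B = nbhdIn G X B ∪ nbhdIn G Y B := by
  ext v
  simp only [mem_nbhdIn, mem_union]
  grind

theorem card_nbhdIn_union_le (X Y B : Finset V) :
    #(nbhdIn G (X ∪ Y) B) ≤ #(nbhdIn G X B) + #(nbhdIn G Y B) :=
  nbhdIn_union (G := G) X Y B ▸ card_union_le _ _

theorem nbhdIn_eq_of_covers {D C : Finset V} (h : Covers G (D : Set V) C) :
    nbhdIn G D C = C :=
  filter_true_of_mem h

theorem anticomplete_sdiff_nbhdIn (X B : Finset V) :
    Anticomplete G (X : Set V) (B \ nbhdIn G X B : Finset V) := fun x hx v hv hxv ↦ by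
  obtain ⟨hvB, hvX⟩ := mem_sdiff.1 (mem_coe.1 hv)
  exact hvX (mem_nbhdIn.2 ⟨hvB, x, hx, hxv⟩)

theorem covers_nbhdIn (X B : Finset V) : Covers G (X : Set V) (nbhdIn G X B : Finset V) :=
  fun _ hv ↦ (mem_nbhdIn.1 hv).2

theorem Covers.mono_right {A B C : Set V} (h : Covers G A B) (hCB : C ⊆ B) : Covers G A C :=
  fun v hv ↦ h v (hCB hv)

theorem Anticomplete.mono {A B C D : Set V} (h : Anticomplete G A B) (hCA : C ⊆ A)
    (hDB : D ⊆ B) : Anticomplete G C D :=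
  fun v hv w hw ↦ h v (hCA hv) w (hDB hw)

theorem Coherent.exists_adj {γ δ : ℝ} (hG : Coherent G γ δ) {X Y : Finset V}
    (hXY : Disjoint X Y) (hX : γ ≤ #X) (hY : δ ≤ #Y) : ∃ x ∈ X, ∃ y ∈ Y, G.Adj x y := by
  by_contra! h
  exact hG ⟨X, Y, disjoint_coe.2 hXY, h, by simpa using hX, by simpa using hY⟩

theorem Coherent.card_lt_card_nbhdIn_add {γ δ : ℝ} (hG : Coherent G γ δ) {X C : Finset V}
    (hXC : Disjoint X C) (hX : γ ≤ #X) : (#C : ℝ) < #(nbhdIn G X C) + δ := by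
  have hsplit : (#(C \ nbhdIn G X C) : ℝ) + #(nbhdIn G X C) = #C := by
    exact_mod_cast card_sdiff_add_card_eq_card (nbhdIn_subset X C)
  by_contra! h
  obtain ⟨x, hx, v, hv, hxv⟩ := hG.exists_adj (hXC.mono_right (sdiff_subset (t := nbhdIn G X C))) hX
    (by linarith)
  exact anticomplete_sdiff_nbhdIn X C x hx v hv hxv

/-- Every vertex of `X` has at most `lam * #Y` neighbours in `Y`. -/
def MaxDegLE (G : SimpleGraph V) (X Y : Finset V) (lam : ℝ) : Prop :=
  ∀ x ∈ X, (#(nbhdIn G {x} Y) : ℝ) ≤ lam * #Y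

theorem MaxDegLE.mono_left {X X' Y : Finset V} {lam : ℝ} (h : MaxDegLE G X Y lam)
    (hX : X' ⊆ X) : MaxDegLE G X' Y lam :=
  fun x hx ↦ h x (hX hx)

theorem MaxDegLE.mono {X Y : Finset V} {lam lam' : ℝ} (h : MaxDegLE G X Y lam)
    (hlam : lam ≤ lam') : MaxDegLE G X Y lam' :=
  fun x hx ↦ (h x hx).trans (by gcongr)

/-- `C` is a subset of `A` containing at least the fraction `1 / κ` of its vertices. -/
structure LargePart (κ : ℝ) (C A : Finset V) : Prop where
  subset : C ⊆ A
  card_le : (#A : ℝ) ≤ κ * #C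

namespace LargePart

variable {κ κ' : ℝ} {A B C : Finset V}

theorem refl (A : Finset V) : LargePart 1 A A :=
  ⟨subset_rfl, (one_mul _).ge⟩

theorem trans (hκ : 0 ≤ κ) (hBA : LargePart κ B A) (hCB : LargePart κ' C B) :
    LargePart (κ * κ') C A where
  subset := hCB.subset.trans hBA.subset
  card_le := by
    rw [mul_assoc]
    exact hBA.card_le.trans (mul_le_mul_of_nonneg_left hCB.card_le hκ)

theorem mono (h : LargePart κ C A) (hκ : κ ≤ κ') : LargePart κ' C A :=
  ⟨h.subset, h.card_le.trans (by gcongr)⟩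

theorem nonempty (h : LargePart κ C A) (hA : A.Nonempty) : C.Nonempty := by
  refine nonempty_of_ne_empty fun hC ↦ ?_
  have := h.card_le
  have : (0 : ℝ) < #A := by exact_mod_cast hA.card_pos
  simp_all only [card_empty, Nat.cast_zero, mul_zero]
  linarith

theorem maxDegLE {X : Finset V} {lam : ℝ} (h : LargePart κ C A) (hlam : 0 ≤ lam)
    (hX : MaxDegLE G X A lam) : MaxDegLE G X C (lam * κ) := fun x hx ↦ calc
  (#(nbhdIn G {x} C) : ℝ) ≤ #(nbhdIn G {x} A) := by
    exact_mod_cast card_le_card (nbhdIn_mono subset_rfl h.subset)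
  _ ≤ lam * #A := hX x hx
  _ ≤ lam * (κ * #C) := mul_le_mul_of_nonneg_left h.card_le hlam
  _ = lam * κ * #C := (mul_assoc _ _ _).symm

end LargePart

end Neighbourhoods

/-! ### Making a blockade expanding -/

section Expansion

variable {ι : Type*} {G : SimpleGraph V}

/-- Division-free form of `τ`-expansion for a blockade of finite sets. -/
def ExpandingOn (G : SimpleGraph V) (J : Finset ι) (B : ι → Finset V) (τ : ℝ) : Prop :=
  (J : Set ι).Pairwise fun i j ↦ ∀ X ⊆ B i,
    (#(B j) : ℝ) ≤ 4 * #(nbhdIn G X (B j)) ∨ τ * #X * #(B j) ≤ (#(nbhdIn G X (B j)) : ℝ) * #(B i)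

theorem ExpandingOn.mono {J J' : Finset ι} {B : ι → Finset V} {τ : ℝ}
    (h : ExpandingOn G J B τ) (hJ : J' ⊆ J) : ExpandingOn G J' B τ :=
  Set.Pairwise.mono (coe_subset.2 hJ) h

/-- What remains of the block `A i` once the sets `Z i j` (`j ∈ J`) have been removed. -/
def residue (J : Finset ι) (A : ι → Finset V) (Z : ι → ι → Finset V) (i : ι) : Finset V :=
  A i \ J.biUnion (Z i)

/-- The sets `Z i j ⊆ A i` are small, and `Z i j` has few neighbours in the residue of `A j`:
they collect the witnesses to non-expansion that are to be removed. -/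
structure IsBottleneckFamily (G : SimpleGraph V) (Γ κ : ℝ) (J : Finset ι) (A : ι → Finset V)
    (Z : ι → ι → Finset V) : Prop where
  subset : ∀ i ∈ J, ∀ j ∈ J, Z i j ⊆ A i
  card_lt : ∀ i ∈ J, ∀ j ∈ J, (#(Z i j) : ℝ) < Γ
  card_nbhdIn : (J : Set ι).Pairwise fun i j ↦
    (#(nbhdIn G (Z i j) (residue J A Z j)) : ℝ) * #(A i) ≤ κ * #(Z i j) * #(A j)

theorem residue_subset (J : Finset ι) (A : ι → Finset V) (Z : ι → ι → Finset V) (i : ι) :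
    residue J A Z i ⊆ A i :=
  sdiff_subset

theorem residue_anti {J : Finset ι} {A : ι → Finset V} {Z Z' : ι → ι → Finset V} {i : ι}
    (h : ∀ j, Z i j ⊆ Z' i j) : residue J A Z' i ⊆ residue J A Z i :=
  sdiff_subset_sdiff subset_rfl (biUnion_mono fun j _ ↦ h j)

theorem disjoint_of_subset_residue {J : Finset ι} {A : ι → Finset V} {Z : ι → ι → Finset V}
    {i j : ι} {X : Finset V} (hX : X ⊆ residue J A Z i) (hj : j ∈ J) : Disjoint (Z i j) X :=
  disjoint_of_subset_left (subset_biUnion_of_mem (Z i) hj) (disjoint_sdiff.mono_right hX)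

namespace IsBottleneckFamily

variable {Γ κ : ℝ} {J : Finset ι} {A : ι → Finset V} {Z : ι → ι → Finset V}

theorem largePart_residue (hZ : IsBottleneckFamily G Γ κ J A Z) {i : ι} (hi : i ∈ J)
    (hJ : 2 * (#J : ℝ) * Γ ≤ #(A i)) : LargePart 2 (residue J A Z i) (A i) where
  subset := residue_subset J A Z i
  card_le := by
    have hremoved : (#(J.biUnion (Z i)) : ℝ) ≤ #J * Γ := calc
      (#(J.biUnion (Z i)) : ℝ) ≤ ∑ j ∈ J, (#(Z i j) : ℝ) := by exact_mod_cast card_biUnion_le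
      _ ≤ #J * Γ := by
        simpa using sum_le_sum fun j hj ↦ (hZ.card_lt i hi j hj).le
    have hsplit : (#(A i) : ℝ) ≤ #(residue J A Z i) + #(J.biUnion (Z i)) := by
      have := le_card_sdiff (J.biUnion (Z i)) (A i)
      exact_mod_cast Nat.sub_le_iff_le_add.1 this
    linarith

theorem empty (hΓ : 0 < Γ) : IsBottleneckFamily G Γ κ J A fun _ _ ↦ ∅ where
  subset := by simp
  card_lt := by simpa using fun _ _ _ _ ↦ hΓ
  card_nbhdIn i _ j _ _ := by simp [nbhdIn_empty]

theorem insert_part (hZ : IsBottleneckFamily G Γ κ J A Z) {i j : ι} {X : Finset V} (hj : j ∈ J)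
    (hX : X ⊆ residue J A Z i) (hcard : (#(Z i j ∪ X) : ℝ) < Γ)
    (hXnb : (#(nbhdIn G X (residue J A Z j)) : ℝ) * #(A i) ≤ κ * #X * #(A j)) :
    IsBottleneckFamily G Γ κ J A
      (Function.update Z i (Function.update (Z i) j (Z i j ∪ X))) := by
  set Z' := Function.update Z i (Function.update (Z i) j (Z i j ∪ X)) with hZ'
  have hdiag : Z' i j = Z i j ∪ X := by simp [hZ']
  have hoff : ∀ a b, (a, b) ≠ (i, j) → Z' a b = Z a b := fun a b hab ↦ by
    by_cases ha : a = i
    · subst ha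
      simp [hZ', Function.update_of_ne (show b ≠ j by grind)]
    · simp [hZ', ha]
  have hres : ∀ a, residue J A Z' a ⊆ residue J A Z a := fun a ↦ residue_anti fun b ↦ by
    by_cases hab : (a, b) = (i, j)
    · obtain ⟨rfl, rfl⟩ := Prod.mk.inj hab
      exact hdiag ▸ subset_union_left
    · rw [hoff a b hab]
  refine ⟨fun a ha b hb ↦ ?_, fun a ha b hb ↦ ?_, fun a ha b hb hne ↦ ?_⟩ <;>
    by_cases hab : (a, b) = (i, j)
  · obtain ⟨rfl, rfl⟩ := Prod.mk.inj hab
    exact hdiag ▸ union_subset (hZ.subset a ha b hb) (hX.trans (residue_subset J A Z a))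
  · exact hoff a b hab ▸ hZ.subset a ha b hb
  · obtain ⟨rfl, rfl⟩ := Prod.mk.inj hab
    rwa [hdiag]
  · exact hoff a b hab ▸ hZ.card_lt a ha b hb
  · obtain ⟨rfl, rfl⟩ := Prod.mk.inj hab
    have hnb : (#(nbhdIn G (Z a b ∪ X) (residue J A Z' b)) : ℝ) ≤
        #(nbhdIn G (Z a b) (residue J A Z b)) + #(nbhdIn G X (residue J A Z b)) := by
      exact_mod_cast (card_le_card (nbhdIn_mono subset_rfl (hres b))).trans
        (card_nbhdIn_union_le _ _ _)
    have hcardU : (#(Z a b ∪ X) : ℝ) = #(Z a b) + #X := by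
      exact_mod_cast card_union_of_disjoint (disjoint_of_subset_residue hX hj)
    rw [hdiag, hcardU]
    calc _ ≤ (#(nbhdIn G (Z a b) (residue J A Z b)) +
          #(nbhdIn G X (residue J A Z b)) : ℝ) * #(A a) := by gcongr
      _ ≤ κ * #(Z a b) * #(A b) + κ * #X * #(A b) := by
        rw [add_mul]
        exact add_le_add (hZ.card_nbhdIn ha hb hne) hXnb
      _ = κ * (#(Z a b) + #X) * #(A b) := by ring
  · simp only [hoff a b hab]
    refine le_trans ?_ (hZ.card_nbhdIn ha hb hne)
    gcongr
    exact nbhdIn_mono subset_rfl (hres b)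

theorem exists_residue_minimal (hΓ : 0 < Γ) : ∃ Z, IsBottleneckFamily G Γ κ J A Z ∧
    ∀ i ∈ J, ∀ j ∈ J, ∀ X ⊆ residue J A Z i, X.Nonempty → (#(Z i j ∪ X) : ℝ) < Γ →
      κ * #X * #(A j) < #(nbhdIn G X (residue J A Z j)) * #(A i) := by
  obtain ⟨Z, hZ, hmin⟩ := exists_minimalFor_of_wellFoundedLT
    (IsBottleneckFamily G Γ κ J A) (fun Z ↦ ∑ i ∈ J, #(residue J A Z i)) ⟨_, empty hΓ⟩
  refine ⟨Z, hZ, fun i hi j hj X hX hXne hcard ↦ ?_⟩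
  by_contra! hnb
  set Z' := Function.update Z i (Function.update (Z i) j (Z i j ∪ X)) with hZ'
  have hsub : ∀ a b, Z a b ⊆ Z' a b := fun a b ↦ by
    simp only [hZ', Function.update_apply]
    grind
  have hlt : ∑ a ∈ J, #(residue J A Z' a) < ∑ a ∈ J, #(residue J A Z a) := by
    refine sum_lt_sum (fun a _ ↦ card_le_card (residue_anti (hsub a))) ⟨i, hi, card_lt_card ?_⟩
    obtain ⟨x, hx⟩ := hXne
    refine (residue_anti (hsub i)).ssubset_of_ne fun heq ↦ ?_
    have hxZ' : x ∈ J.biUnion (Z' i) := mem_biUnion.2 ⟨j, hj, by simp [hZ', hx]⟩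
    exact (mem_sdiff.1 (heq ▸ hX hx : x ∈ residue J A Z' i)).2 hxZ'
  exact (hmin (hZ.insert_part hj hX hcard hnb) hlt.le).not_gt hlt

end IsBottleneckFamily

theorem Coherent.exists_expandingOn {Γ m : ℝ} (hG : Coherent G Γ Γ) (hΓ : 0 < Γ) {J : Finset ι}
    {A : ι → Finset V} (hA : (J : Set ι).PairwiseDisjoint A) (hm : ∀ i ∈ J, m ≤ #(A i))
    (hmΓ : 4 * Γ ≤ m) (hmJ : 2 * (#J : ℝ) * Γ ≤ m) :
    ∃ B : ι → Finset V, (∀ i ∈ J, LargePart 2 (B i) (A i)) ∧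
      ExpandingOn G J B (m / (16 * Γ)) := by
  obtain ⟨Z, hZ, hmin⟩ := IsBottleneckFamily.exists_residue_minimal (G := G) (κ := m / (8 * Γ))
    (J := J) (A := A) hΓ
  have hlarge : ∀ i ∈ J, LargePart 2 (residue J A Z i) (A i) := fun i hi ↦
    hZ.largePart_residue hi (hmJ.trans (hm i hi))
  refine ⟨residue J A Z, hlarge, fun i hi j hj hij X hX ↦ ?_⟩
  rcases X.eq_empty_or_nonempty with rfl | hXne
  · right
    simpa only [card_empty, Nat.cast_zero, mul_zero, zero_mul] using by positivity
  have hRA := card_le_card (residue_subset J A Z j)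
  have hAi : (0 : ℝ) < #(A i) := by linarith [hm i hi]
  by_cases hbig : Γ ≤ #(Z i j ∪ X)
  · -- By coherence almost all of the residue of `A j` sees `Z i j ∪ X`, but little of it sees
    -- `Z i j`.
    left
    have hcoh := hG.card_lt_card_nbhdIn_add (C := residue J A Z j) ((hA hi hj hij).mono
      (union_subset (hZ.subset i hi j hj) (hX.trans (residue_subset J A Z i)))
      (residue_subset J A Z j)) hbig
    have hunion : (#(nbhdIn G (Z i j ∪ X) (residue J A Z j)) : ℝ) ≤
        #(nbhdIn G (Z i j) (residue J A Z j)) + #(nbhdIn G X (residue J A Z j)) := by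
      exact_mod_cast card_nbhdIn_union_le _ _ _
    have hfew : (#(nbhdIn G (Z i j) (residue J A Z j)) : ℝ) ≤ #(A j) / 8 := by
      refine le_of_mul_le_mul_right ?_ hAi
      calc _ ≤ m / (8 * Γ) * #(Z i j) * #(A j) := hZ.card_nbhdIn hi hj hij
        _ ≤ m / (8 * Γ) * Γ * #(A j) := by
          have : 0 ≤ m := by linarith
          gcongr
          exact (hZ.card_lt i hi j hj).le
        _ = #(A j) / 8 * m := by field_simp
        _ ≤ #(A j) / 8 * #(A i) := by gcongr; exact hm i hi
    linarith [(hlarge j hj).card_le, hm j hj]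
  · right
    have hτ : 0 ≤ m / (8 * Γ) * #X := by
      have : 0 ≤ m := by linarith
      positivity
    have := hmin i hi j hj X hX hXne (not_le.1 hbig)
    have hi2 := mul_le_mul_of_nonneg_left (hlarge i hi).card_le
      (Nat.cast_nonneg (α := ℝ) #(nbhdIn G X (residue J A Z j)))
    have hj2 : m / (8 * Γ) * #X * #(residue J A Z j) ≤ m / (8 * Γ) * #X * #(A j) := by gcongr
    calc m / (16 * Γ) * #X * #(residue J A Z j)
        = m / (8 * Γ) * #X * #(residue J A Z j) / 2 := by field_simp; ring
      _ ≤ _ := by linarith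

end Expansion

section Grading

variable {ι : Type*} {G : SimpleGraph V}

/-- Take a minimal subset of `D` that sees a quarter of some block. -/
theorem exists_subset_largePart_nbhdIn {D : Finset V} {J : Finset ι} {C : ι → Finset V}
    (hJ : J.Nonempty) (hne : ∀ j ∈ J, (C j).Nonempty)
    (hcov : ∀ j ∈ J, Covers G (D : Set V) (C j))
    (hdeg : ∀ j ∈ J, MaxDegLE G D (C j) (1 / 4)) :
    ∃ b ∈ J, ∃ Y ⊆ D, LargePart 4 (nbhdIn G Y (C b)) (C b) ∧
      ∀ j ∈ J, LargePart 2 (C j \ nbhdIn G Y (C j)) (C j) := by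
  obtain ⟨b₀, hb₀⟩ := hJ
  obtain ⟨Y, hYD, hY⟩ := exists_minimal_le_of_wellFoundedLT
    (fun Y ↦ ∃ b ∈ J, (#(C b) : ℝ) ≤ 4 * #(nbhdIn G Y (C b))) D
    ⟨b₀, hb₀, by rw [nbhdIn_eq_of_covers (hcov b₀ hb₀)]; linarith [(#(C b₀)).cast_nonneg (α := ℝ)]⟩
  obtain ⟨b, hb, hYb⟩ := hY.prop
  have hYne : Y.Nonempty := by
    refine nonempty_of_ne_empty fun h ↦ ?_
    have : (0 : ℝ) < #(C b) := by exact_mod_cast (hne b hb).card_pos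
    simp only [h, nbhdIn_empty, card_empty, Nat.cast_zero, mul_zero] at hYb
    linarith
  obtain ⟨y, hy⟩ := hYne
  refine ⟨b, hb, Y, hYD, ⟨nbhdIn_subset _ _, hYb⟩, fun j hj ↦ ⟨sdiff_subset, ?_⟩⟩
  have herase : 4 * #(nbhdIn G (Y.erase y) (C j)) < (#(C j) : ℝ) := by
    by_contra! h
    exact hY.not_prop_of_lt (erase_ssubset hy) ⟨j, hj, h⟩
  have hunion : (#(nbhdIn G Y (C j)) : ℝ) ≤
      #(nbhdIn G {y} (C j)) + #(nbhdIn G (Y.erase y) (C j)) := by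
    have := card_nbhdIn_union_le (G := G) {y} (Y.erase y) (C j)
    rw [← insert_eq, insert_erase hy] at this
    exact_mod_cast this
  have hsplit : (#(C j \ nbhdIn G Y (C j)) : ℝ) + #(nbhdIn G Y (C j)) = #(C j) := by
    exact_mod_cast card_sdiff_add_card_eq_card (nbhdIn_subset Y (C j))
  linarith [hdeg j hj y (hYD hy)]

end Grading

/-! ### Rainbow levellings -/

section Levellings

variable {ι : Type*} {G : SimpleGraph V} {A : ι → Finset V} {x : V} {b : ι} {Q : Finset ι}

/-- A levelling with root `x` whose levels lie in distinct blocks of `A`: the root in the block of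
colour `b`, the other levels in blocks with colours in `Q`. The level of the root may be trimmed to
the empty set, and `level i` and `color i` are junk for `i > height`. -/
structure Levelling (G : SimpleGraph V) (A : ι → Finset V) (x : V) (b : ι) (Q : Finset ι) where
  height : ℕ
  level : ℕ → Finset V
  color : ℕ → ι
  level_zero_subset : level 0 ⊆ {x}
  color_zero : color 0 = b
  color_mem : ∀ i, 1 ≤ i → i ≤ height → color i ∈ Q
  color_injOn : Set.InjOn color (Set.Iic height)
  level_subset : ∀ i ≤ height, level i ⊆ A (color i)
  covers : ∀ i < height, Covers G (level i : Set V) (level (i + 1))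
  anticomplete : ∀ h i, h + 2 ≤ i → i ≤ height → Anticomplete G (level h : Set V) (level i)

namespace Levelling

/-- The last level. -/
def top (L : Levelling G A x b Q) : Finset V := L.level L.height

/-- The union of all levels but the last. -/
def below (L : Levelling G A x b Q) : Finset V := (range L.height).biUnion L.level

/-- The union of all levels. -/
def verts (L : Levelling G A x b Q) : Finset V := L.top ∪ L.below

/-- The colours in `Q` not used by any level. -/
def free (L : Levelling G A x b Q) : Finset ι := Q \ (Iic L.height).image L.color

/-- The levelling can be continued by the level `C`. -/
structure Reaches (L : Levelling G A x b Q) (C : Finset V) : Prop where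
  covers : Covers G (L.top : Set V) C
  anticomplete : Anticomplete G (L.below : Set V) C

/-- The vertices of `C` seen by the last level but by no earlier one. -/
def fresh (L : Levelling G A x b Q) (C : Finset V) : Finset V :=
  nbhdIn G L.verts C \ nbhdIn G L.below C

theorem level_subset_below (L : Levelling G A x b Q) {i : ℕ} (hi : i < L.height) :
    L.level i ⊆ L.below :=
  subset_biUnion_of_mem L.level (mem_range.2 hi)

theorem mem_free {L : Levelling G A x b Q} {j : ι} :
    j ∈ L.free ↔ j ∈ Q ∧ ∀ i ≤ L.height, L.color i ≠ j := by
  simp [free]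

theorem color_mem_insert (L : Levelling G A x b Q) {i : ℕ} (hi : i ≤ L.height) :
    L.color i ∈ insert b Q := by
  rcases i.eq_zero_or_pos with rfl | hpos
  · rw [L.color_zero]
    exact mem_insert_self b Q
  · exact mem_insert_of_mem (L.color_mem i hpos hi)

theorem Reaches.mono {L : Levelling G A x b Q} {C C' : Finset V} (h : L.Reaches C)
    (hC : C' ⊆ C) : L.Reaches C' :=
  ⟨h.covers.mono_right hC, h.anticomplete.mono subset_rfl hC⟩

theorem fresh_subset (L : Levelling G A x b Q) (C : Finset V) : L.fresh C ⊆ C :=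
  sdiff_subset.trans (nbhdIn_subset _ _)

theorem reaches_fresh (L : Levelling G A x b Q) (C : Finset V) : L.Reaches (L.fresh C) := by
  refine ⟨fun v hv ↦ ?_, (anticomplete_sdiff_nbhdIn L.below C).mono subset_rfl
    (sdiff_subset_sdiff (nbhdIn_subset _ _) subset_rfl)⟩
  obtain ⟨hvL, hvbelow⟩ := mem_sdiff.1 (mem_coe.1 hv)
  rw [verts, nbhdIn_union, mem_union] at hvL
  exact (mem_nbhdIn.1 (hvL.resolve_right hvbelow)).2

theorem card_nbhdIn_verts_le (L : Levelling G A x b Q) (C : Finset V) :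
    (#(nbhdIn G L.verts C) : ℝ) ≤ #(L.fresh C) + #(nbhdIn G L.below C) := by
  exact_mod_cast Nat.sub_le_iff_le_add.1
    (le_card_sdiff (nbhdIn G L.below C) (nbhdIn G L.verts C))

/-- The levelling consisting of its root only. -/
@[simps height level color]
def single (G : SimpleGraph V) (Q : Finset ι) (hx : x ∈ A b) : Levelling G A x b Q where
  height := 0
  level _ := {x}
  color _ := b
  level_zero_subset := subset_rfl
  color_zero := rfl
  color_mem _ _ _ := by omega
  color_injOn := by simp [Set.InjOn]
  level_subset _ _ := singleton_subset_iff.2 hx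
  covers _ _ := by omega
  anticomplete _ _ _ _ := by omega

/-- The same levels, in larger blocks and with more colours at hand. -/
@[simps height level color]
def mono (L : Levelling G A x b Q) {A' : ι → Finset V} {Q' : Finset ι} (hQ : Q ⊆ Q')
    (hA : ∀ j ∈ insert b Q, A j ⊆ A' j) : Levelling G A' x b Q' where
  height := L.height
  level := L.level
  color := L.color
  level_zero_subset := L.level_zero_subset
  color_zero := L.color_zero
  color_mem i h1 hi := hQ (L.color_mem i h1 hi)
  color_injOn := L.color_injOn
  level_subset i hi := (L.level_subset i hi).trans (hA _ (L.color_mem_insert hi))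
  covers := L.covers
  anticomplete := L.anticomplete

theorem Reaches.map_mono {L : Levelling G A x b Q} {C : Finset V} (h : L.Reaches C)
    {A' : ι → Finset V} {Q' : Finset ι} (hQ : Q ⊆ Q') (hA : ∀ j ∈ insert b Q, A j ⊆ A' j) :
    (L.mono hQ hA).Reaches C :=
  ⟨h.covers, h.anticomplete⟩

/-- Replace the last level by a subset. -/
@[simps height level color]
def shrinkTop (L : Levelling G A x b Q) {Y : Finset V} (hY : Y ⊆ L.top) :
    Levelling G A x b Q where
  height := L.height
  level := Function.update L.level L.height Y
  color := L.color
  level_zero_subset := by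
    rw [Function.update_apply]
    split_ifs with h
    · exact hY.trans (by rw [top, ← h]; exact L.level_zero_subset)
    · exact L.level_zero_subset
  color_zero := L.color_zero
  color_mem := L.color_mem
  color_injOn := L.color_injOn
  level_subset i hi := by
    rw [Function.update_apply]
    split_ifs with h
    · exact hY.trans (by rw [top, ← h]; exact L.level_subset i hi)
    · exact L.level_subset i hi
  covers i hi := by
    rw [Function.update_of_ne hi.ne, Function.update_apply]
    split_ifs with h
    · exact (L.covers i hi).mono_right (h ▸ hY)
    · exact L.covers i hi
  anticomplete h i hhi hi := by
    rw [Function.update_of_ne (by omega : h ≠ L.height), Function.update_apply]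
    split_ifs with he
    · subst he
      exact (L.anticomplete h _ hhi hi).mono subset_rfl hY
    · exact L.anticomplete h i hhi hi

theorem top_shrinkTop (L : Levelling G A x b Q) {Y : Finset V} (hY : Y ⊆ L.top) :
    (L.shrinkTop hY).top = Y := by
  simp [top]

theorem below_shrinkTop (L : Levelling G A x b Q) {Y : Finset V} (hY : Y ⊆ L.top) :
    (L.shrinkTop hY).below = L.below :=
  biUnion_congr rfl fun _ hi ↦ Function.update_of_ne (mem_range.1 hi).ne _ _

/-- Continue a levelling by the level `X`, of colour `j`. -/
@[simps height level color]
def extend (L : Levelling G A x b Q) {j : ι} {X : Finset V} (hj : j ∈ L.free) (hXA : X ⊆ A j)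
    (hX : L.Reaches X) : Levelling G A x b Q where
  height := L.height + 1
  level := Function.update L.level (L.height + 1) X
  color := Function.update L.color (L.height + 1) j
  level_zero_subset := by simpa using L.level_zero_subset
  color_zero := by simpa using L.color_zero
  color_mem i h1 hi := by
    rw [Function.update_apply]
    split_ifs with h
    · exact (mem_free.1 hj).1
    · exact L.color_mem i h1 (by omega)
  color_injOn i hi i' hi' hii' := by
    have hj := (mem_free.1 hj).2
    simp only [Set.mem_Iic, Function.update_apply] at hi hi' hii'
    split_ifs at hii' with h h' h'
    · omega
    · exact absurd hii'.symm (hj i' (by omega))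
    · exact absurd hii' (hj i (by omega))
    · exact L.color_injOn (Set.mem_Iic.2 (by omega)) (Set.mem_Iic.2 (by omega)) hii'
  level_subset i hi := by
    by_cases h : i = L.height + 1
    · simpa [h] using hXA
    · simpa [h] using L.level_subset i (by omega)
  covers i hi := by
    rw [Function.update_of_ne hi.ne, Function.update_apply]
    split_ifs with h
    · obtain rfl : i = L.height := by omega
      exact hX.covers
    · exact L.covers i (by omega)
  anticomplete h i hhi hi := by
    rw [Function.update_of_ne (by omega : h ≠ L.height + 1), Function.update_apply]
    split_ifs with he
    · exact hX.anticomplete.mono (L.level_subset_below (by omega)) subset_rfl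
    · exact L.anticomplete h i hhi (by omega)

section Extend

variable (L : Levelling G A x b Q) {j : ι} {X : Finset V} (hj : j ∈ L.free) (hXA : X ⊆ A j)
  (hX : L.Reaches X)

theorem top_extend : (L.extend hj hXA hX).top = X := by
  simp [top]

theorem below_extend : (L.extend hj hXA hX).below = L.verts := by
  have hbelow : (range L.height).biUnion (L.extend hj hXA hX).level = L.below :=
    biUnion_congr rfl fun i hi ↦ Function.update_of_ne (by have := mem_range.1 hi; omega) _ _
  have htop : (L.extend hj hXA hX).level L.height = L.top := Function.update_of_ne (by omega) _ _
  rw [below, extend_height, range_add_one, biUnion_insert, hbelow, htop, verts]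

theorem mem_free_of_mem_free_extend {i : ι} (hi : i ∈ (L.extend hj hXA hX).free) :
    i ∈ L.free ∧ j ≠ i := by
  rw [mem_free] at hi ⊢
  obtain ⟨hiQ, hcol⟩ := hi
  refine ⟨⟨hiQ, fun a ha ↦ ?_⟩, by simpa using hcol (L.height + 1) le_rfl⟩
  have := hcol a (by rw [extend_height]; omega)
  rwa [extend_color, Function.update_of_ne (by omega)] at this

end Extend

theorem exists_extend_shrinkTop (L : Levelling G A x b Q) {j : ι} (hj : j ∉ insert b Q)
    {X Y : Finset V} (hY : Y ⊆ L.top) (hXA : X ⊆ A j) (hYX : Covers G (Y : Set V) X)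
    (hX : L.Reaches X) :
    ∃ L' : Levelling G A x b (insert j Q),
      L'.height = L.height + 1 ∧ L'.top = X ∧ L'.below = Y ∪ L.below := by
  let L₁ : Levelling G A x b (insert j Q) :=
    (L.mono (subset_insert j Q) fun _ _ ↦ subset_rfl).shrinkTop hY
  have htop : L₁.top = Y := top_shrinkTop _ hY
  have hbelow : L₁.below = L.below := below_shrinkTop _ hY
  have hfree : j ∈ L₁.free := mem_free.2 ⟨mem_insert_self j Q, fun i hi h ↦
    hj (h ▸ L.color_mem_insert hi)⟩
  have hreach : L₁.Reaches X := ⟨by rwa [htop], by rw [hbelow]; exact hX.anticomplete⟩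
  refine ⟨L₁.extend hfree hXA hreach, rfl, top_extend L₁ hfree hXA hreach, ?_⟩
  rw [below_extend L₁ hfree hXA hreach, verts, hbelow, htop]

/-- One more level: a subset `Y` of the last level that sees a quarter of some block `C b'`
provides the next level, which by coherence sees most of what `Y` misses. -/
theorem exists_extension_one {Γ : ℝ} (hG : Coherent G Γ Γ) (hΓ : 0 < Γ)
    (L : Levelling G A x b Q) {J : Finset ι} {C : ι → Finset V} (hbJ : Disjoint (insert b Q) J)
    (hJ : J.Nonempty) (hCA : ∀ j ∈ J, C j ⊆ A j) (hreach : ∀ j ∈ J, L.Reaches (C j))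
    (hsize : ∀ j ∈ J, 4 * Γ ≤ #(C j)) (hC : (J : Set ι).PairwiseDisjoint C)
    (hdeg : ∀ j ∈ J, MaxDegLE G L.top (C j) (1 / 4)) :
    ∃ b' ∈ J, ∃ L' : Levelling G A x b (insert b' Q), L'.height = L.height + 1 ∧
      L'.top ⊆ C b' ∧ ∃ C' : ι → Finset V, ∀ j ∈ J.erase b',
        LargePart 4 (C' j) (C j) ∧ L'.Reaches (C' j) := by
  have hne : ∀ j ∈ J, (C j).Nonempty := fun j hj ↦ card_pos.1 <| by
    have : (0 : ℝ) < #(C j) := by linarith [hsize j hj]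
    exact_mod_cast this
  obtain ⟨b', hb', Y, hY, hYb', hYC⟩ := exists_subset_largePart_nbhdIn hJ hne
    (fun j hj ↦ (hreach j hj).covers) hdeg
  have hXC : nbhdIn G Y (C b') ⊆ C b' := nbhdIn_subset Y (C b')
  obtain ⟨L', hheight, htop, hbelow⟩ := L.exists_extend_shrinkTop
    (fun h ↦ disjoint_left.1 hbJ h hb') hY (hXC.trans (hCA b' hb')) (covers_nbhdIn Y (C b'))
    ((hreach b' hb').mono hXC)
  refine ⟨b', hb', L', hheight, htop ▸ hXC,
    fun j ↦ nbhdIn G L'.top (C j \ nbhdIn G Y (C j)), fun j hj ↦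
    ⟨⟨(nbhdIn_subset _ _).trans sdiff_subset, ?_⟩, covers_nbhdIn L'.top _, ?_⟩⟩ <;>
    obtain ⟨hjb', hj⟩ := mem_erase.1 hj
  · have := hG.card_lt_card_nbhdIn_add (X := L'.top) (C := C j \ nbhdIn G Y (C j))
      ((hC hb' hj (Ne.symm hjb')).mono (htop ▸ hXC) sdiff_subset)
      (by rw [htop]; linarith [hsize b' hb', hYb'.card_le])
    linarith [(hYC j hj).card_le, hsize j hj]
  · rw [hbelow, coe_union]
    rintro u (hu | hu) v hv
    · exact anticomplete_sdiff_nbhdIn Y (C j) u hu v (nbhdIn_subset _ _ hv)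
    · exact (hreach j hj).anticomplete u hu v (sdiff_subset (nbhdIn_subset _ _ hv))

theorem exists_extension {Γ : ℝ} (hG : Coherent G Γ Γ) (hΓ : 0 < Γ) (r : ℕ) {lam : ℝ}
    (hlam : 0 ≤ lam) (hlam1 : 4 ^ r * lam ≤ 1) (L : Levelling G A x b Q) {J : Finset ι}
    {C : ι → Finset V} (hbJ : Disjoint (insert b Q) J) (hr : r < #J) (hCA : ∀ j ∈ J, C j ⊆ A j)
    (hreach : ∀ j ∈ J, L.Reaches (C j)) (hsize : ∀ j ∈ J, 4 ^ r * Γ ≤ #(C j))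
    (hC : (J : Set ι).PairwiseDisjoint C) (htop : ∀ j ∈ J, MaxDegLE G L.top (C j) lam)
    (hdeg : (J : Set ι).Pairwise fun i j ↦ MaxDegLE G (C i) (C j) lam) :
    ∃ J' ⊆ J, #J' + r = #J ∧ ∃ L' : Levelling G A x b (Q ∪ (J \ J')),
      L'.height = L.height + r ∧ ∃ C' : ι → Finset V, ∀ j ∈ J',
        LargePart (4 ^ r) (C' j) (C j) ∧ L'.Reaches (C' j) := by
  induction r generalizing Q J C lam with
  | zero =>
    refine ⟨J, subset_rfl, rfl, L.mono subset_union_left fun _ _ ↦ subset_rfl, rfl, C,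
      fun j hj ↦ ⟨pow_zero (4 : ℝ) ▸ LargePart.refl (C j), (hreach j hj).map_mono _ _⟩⟩
  | succ r ih =>
    have hpow : (1 : ℝ) ≤ 4 ^ r := one_le_pow₀ (by norm_num)
    rw [pow_succ] at hlam1
    have hsize' : ∀ j ∈ J, 4 * (4 ^ r * Γ) ≤ (#(C j) : ℝ) := fun j hj ↦ by
      linarith [hsize j hj, pow_succ (4 : ℝ) r ▸ hsize j hj]
    obtain ⟨b', hb', L₁, hL₁, hL₁top, C₁, hC₁⟩ := L.exists_extension_one hG hΓ hbJ
      (card_pos.1 (by omega)) hCA hreach (fun j hj ↦ by nlinarith [hsize' j hj]) hC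
      (fun j hj ↦ (htop j hj).mono (by nlinarith))
    have hdeg₁ : ∀ i ∈ J, ∀ j ∈ J.erase b', i ≠ j → MaxDegLE G (C i) (C₁ j) (lam * 4) :=
      fun i hi j hj hij ↦
        (hC₁ j hj).1.maxDegLE hlam (hdeg hi (mem_of_mem_erase hj) hij)
    obtain ⟨J', hJ', hcard, L', hL', C', hC'⟩ := ih (lam := lam * 4) (J := J.erase b') (C := C₁)
      (by positivity) (by linarith) L₁
      (by
        rw [insert_comm, disjoint_insert_left]
        exact ⟨notMem_erase b' J, hbJ.mono_right (erase_subset b' J)⟩)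
      (by rw [card_erase_of_mem hb']; omega)
      (fun j hj ↦ (hC₁ j hj).1.subset.trans (hCA j (mem_of_mem_erase hj)))
      (fun j hj ↦ (hC₁ j hj).2)
      (fun j hj ↦ by linarith [hsize' j (mem_of_mem_erase hj), (hC₁ j hj).1.card_le])
      (fun i hi j hj hij ↦ (hC (mem_of_mem_erase hi) (mem_of_mem_erase hj) hij).mono
        (hC₁ i hi).1.subset (hC₁ j hj).1.subset)
      (fun j hj ↦ (hdeg₁ b' hb' j hj (ne_of_mem_erase hj).symm).mono_left hL₁top)
      (fun i hi j hj hij ↦ (hdeg₁ i (mem_of_mem_erase hi) j hj hij).mono_left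
        (hC₁ i hi).1.subset)
    have hcolors : insert b' Q ∪ (J.erase b' \ J') ⊆ Q ∪ (J \ J') := fun a ha ↦ by
      have hb'J' : b' ∉ J' := fun h ↦ notMem_erase b' J (hJ' h)
      simp only [mem_union, mem_insert, mem_sdiff, mem_erase] at ha ⊢
      obtain (rfl | haQ) | ⟨⟨-, haJ⟩, haJ'⟩ := ha
      exacts [.inr ⟨hb', hb'J'⟩, .inl haQ, .inr ⟨haJ, haJ'⟩]
    refine ⟨J', hJ'.trans (erase_subset b' J), ?_, L'.mono hcolors fun _ _ ↦ subset_rfl, ?_, C',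
      fun j hj ↦ ⟨?_, (hC' j hj).2.map_mono _ _⟩⟩
    · rw [card_erase_of_mem hb'] at hcard
      omega
    · rw [mono_height, hL', hL₁]
      ring
    · rw [pow_succ, mul_comm]
      exact (hC₁ j (hJ' hj)).1.trans (by norm_num) (hC' j hj).1

end Levelling

end Levellings

/-! ### Growing a levelling in an expanding blockade -/

section Growth

variable {ι : Type*} {G : SimpleGraph V} {B : ι → Finset V} {x : V} {b : ι} {Q : Finset ι}
  {τ n Γ : ℝ}

namespace Levelling

theorem free_nonempty (L : Levelling G B x b Q) (hb : b ∉ Q) (h : L.height < #Q) :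
    L.free.Nonempty := by
  obtain ⟨j, hjQ, hj⟩ := exists_mem_notMem_of_card_lt_card
    (s := (Icc 1 L.height).image L.color) (t := Q) (card_image_le.trans_lt (by simpa using h))
  refine ⟨j, mem_free.2 ⟨hjQ, fun i hi hij ↦ ?_⟩⟩
  rcases i.eq_zero_or_pos with rfl | hpos
  · exact hb (L.color_zero ▸ hij ▸ hjQ)
  · exact hj (mem_image.2 ⟨i, mem_Icc.2 ⟨hpos, hi⟩, hij⟩)

theorem largePart_fresh_of_le (L : Levelling G B x b Q) {κ : ℝ} (hκ : 0 ≤ κ) {C : Finset V}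
    (h : #C + κ * #(nbhdIn G L.below C) ≤ κ * #(nbhdIn G L.verts C)) :
    LargePart κ (L.fresh C) C where
  subset := L.fresh_subset C
  card_le := by
    linarith [mul_le_mul_of_nonneg_left (L.card_nbhdIn_verts_le C) hκ]

/-- In every unused block, the last level sees at least as much as all earlier levels together, and
the whole levelling sees either a quarter of the block or at least the fraction
`(τ / 2) ^ (height + 1) / n` of it. -/
def IsGrowing (L : Levelling G B x b Q) (τ n : ℝ) : Prop :=
  ∀ j ∈ L.free, 2 * #(nbhdIn G L.below (B j)) ≤ #(nbhdIn G L.verts (B j)) ∧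
    ((#(B j) : ℝ) ≤ 4 * #(nbhdIn G L.verts (B j)) ∨
      (τ / 2) ^ (L.height + 1) * #(B j) ≤ n * #(nbhdIn G L.verts (B j)))

/-- Continue a levelling by everything that is fresh in the block of colour `j`. -/
def grow (L : Levelling G B x b Q) {j : ι} (hj : j ∈ L.free) : Levelling G B x b Q :=
  L.extend hj (L.fresh_subset (B j)) (L.reaches_fresh (B j))

theorem height_grow (L : Levelling G B x b Q) {j : ι} (hj : j ∈ L.free) :
    (L.grow hj).height = L.height + 1 :=
  rfl

theorem below_grow (L : Levelling G B x b Q) {j : ι} (hj : j ∈ L.free) :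
    (L.grow hj).below = L.verts :=
  L.below_extend _ _ _

theorem verts_grow (L : Levelling G B x b Q) {j : ι} (hj : j ∈ L.free) :
    (L.grow hj).verts = L.fresh (B j) ∪ L.verts := by
  rw [verts, below_grow, grow, top_extend]

theorem isGrowing_single (hb : b ∉ Q) (hexp : ExpandingOn G (insert b Q) B τ) (hτ : 0 ≤ τ)
    (hn : #(B b) ≤ n) (hx : x ∈ B b) : (single G Q hx).IsGrowing τ n := fun j hj ↦ by
  have hjQ : j ∈ Q := (mem_free.1 hj).1
  have hbelow : (single G Q hx).below = ∅ := rfl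
  have hverts : (single G Q hx).verts = {x} := by rw [verts, hbelow, union_empty]; rfl
  rw [hbelow, hverts, nbhdIn_empty, single_height, zero_add, pow_one]
  refine ⟨by simp, (hexp (mem_coe.2 (mem_insert_self b Q)) (mem_insert_of_mem hjQ)
    (fun h ↦ hb (h ▸ hjQ)) {x} (singleton_subset_iff.2 hx)).imp_right fun h ↦ ?_⟩
  rw [card_singleton, Nat.cast_one, mul_one] at h
  calc τ / 2 * (#(B j) : ℝ) ≤ τ * #(B j) := by gcongr; linarith
    _ ≤ #(nbhdIn G {x} (B j)) * #(B b) := h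
    _ ≤ n * #(nbhdIn G {x} (B j)) := by rw [mul_comm]; gcongr

namespace IsGrowing

variable {L : Levelling G B x b Q} {j : ι} {C : Finset V}

theorem largePart_fresh (hL : L.IsGrowing τ n) (hj : j ∈ L.free) :
    LargePart 2 (L.fresh (B j)) (nbhdIn G L.verts (B j)) where
  subset := sdiff_subset
  card_le := by
    have h : (2 * #(nbhdIn G L.below (B j)) : ℝ) ≤ #(nbhdIn G L.verts (B j)) := by
      exact_mod_cast (hL j hj).1
    linarith [L.card_nbhdIn_verts_le (B j)]

/-- If some unused block is seen substantially then coherence lets its fresh part, taken as the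
next level, see most of `C`. -/
theorem largePart_fresh_grow (hL : L.IsGrowing τ n) (hG : Coherent G Γ Γ) (hj : j ∈ L.free)
    (hB : 16 * Γ ≤ #(B j)) (hheavy : (#(B j) : ℝ) ≤ 8 * #(nbhdIn G L.verts (B j)))
    (hBC : Disjoint (B j) C) (hC : 4 * Γ ≤ #C) (hseen : (16 * #(nbhdIn G L.verts C) : ℝ) ≤ #C) :
    LargePart 2 ((L.grow hj).fresh C) C where
  subset := fresh_subset _ C
  card_le := by
    have hfresh := hG.card_lt_card_nbhdIn_add (hBC.mono_left (L.fresh_subset (B j)))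
      (by linarith [(hL.largePart_fresh hj).card_le])
    have hmono : (#(nbhdIn G (L.fresh (B j)) C) : ℝ) ≤ #(nbhdIn G (L.grow hj).verts C) := by
      rw [verts_grow]
      exact_mod_cast card_le_card (nbhdIn_mono subset_union_left subset_rfl)
    have hgrow := (L.grow hj).card_nbhdIn_verts_le C
    rw [below_grow] at hgrow
    linarith

theorem largePart_pow_fresh_grow (hL : L.IsGrowing τ n) (hG : Coherent G Γ Γ) (hj : j ∈ L.free)
    (hB : 16 * Γ ≤ #(B j)) (hheavy : (#(B j) : ℝ) ≤ 8 * #(nbhdIn G L.verts (B j)))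
    (hBC : Disjoint (B j) C) (hC : 4 * Γ ≤ #C) {l : ℕ} (hl : L.height < l)
    (hseen : 4 ^ (l + 1) * (#(nbhdIn G L.verts C) : ℝ) ≤ 4 ^ L.height * #C) :
    LargePart (4 ^ (l + 1)) ((L.grow hj).fresh C) C := by
  refine (hL.largePart_fresh_grow hG hj hB hheavy hBC hC ?_).mono ?_
  · refine le_of_mul_le_mul_left ?_ (by positivity : (0 : ℝ) < 4 ^ L.height)
    calc 4 ^ L.height * (16 * #(nbhdIn G L.verts C) : ℝ)
        = 4 ^ (L.height + 2) * #(nbhdIn G L.verts C) := by ring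
      _ ≤ 4 ^ (l + 1) * #(nbhdIn G L.verts C) := by
        gcongr 4 ^ ?_ * _
        · norm_num
        · omega
      _ ≤ 4 ^ L.height * #C := hseen
  · calc (2 : ℝ) ≤ 4 ^ 1 := by norm_num
      _ ≤ 4 ^ (l + 1) := pow_le_pow_right₀ (by norm_num) (by omega)

theorem pow_lt (hL : L.IsGrowing τ n) (hτ : 4 ≤ τ) (hj : j ∈ L.free)
    (hlight : (8 * #(nbhdIn G L.verts (B j)) : ℝ) < #(B j)) : (τ / 2) ^ (L.height + 1) < n := by
  have hpow : 0 < (τ / 2) ^ (L.height + 1) := by positivity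
  have hseen := (#(nbhdIn G L.verts (B j))).cast_nonneg (α := ℝ)
  rcases (hL j hj).2 with h | h
  · linarith
  · by_contra! hn
    nlinarith [mul_le_mul_of_nonneg_right hn hseen, mul_lt_mul_of_pos_left hlight hpow]

/-- Growing into the unused block of which the largest fraction is seen, expansion multiplies the
seen fraction of every other unused block by `τ / 2`. -/
theorem grow (hL : L.IsGrowing τ n) (hexp : ExpandingOn G Q B τ) (hτ : 4 ≤ τ) (hn : 0 ≤ n)
    (hlight : ∀ i ∈ L.free, (8 * #(nbhdIn G L.verts (B i)) : ℝ) < #(B i)) (hj : j ∈ L.free)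
    (hmax : ∀ i ∈ L.free, (#(nbhdIn G L.verts (B i)) : ℝ) / #(B i) ≤
      #(nbhdIn G L.verts (B j)) / #(B j)) : (L.grow hj).IsGrowing τ n := fun i hi ↦ by
  obtain ⟨hi, hji⟩ := L.mem_free_of_mem_free_extend _ _ _ hi
  have hpos : ∀ i ∈ L.free, (0 : ℝ) < #(B i) := fun i hi ↦
    lt_of_le_of_lt (by positivity) (hlight i hi)
  have hmono : (#(nbhdIn G (L.fresh (B j)) (B i)) : ℝ) ≤ #(nbhdIn G (L.grow hj).verts (B i)) := by
    rw [verts_grow]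
    exact_mod_cast card_le_card (nbhdIn_mono subset_union_left subset_rfl)
  rw [below_grow, height_grow, ← Nat.cast_le (α := ℝ), Nat.cast_mul, Nat.cast_ofNat]
  have hlighti := hlight i hi
  rcases hexp (mem_free.1 hj).1 (mem_free.1 hi).1 hji _ (L.fresh_subset (B j)) with h | h
  · exact ⟨by linarith, Or.inl (by linarith)⟩
  have hfresh := (hL.largePart_fresh hj).card_le
  have hseenj : (τ / 2) ^ (L.height + 1) * #(B j) ≤ n * #(nbhdIn G L.verts (B j)) :=
    (hL j hj).2.resolve_left fun h ↦ by linarith [hlight j hj, hpos j hj]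
  have hmaxi := hmax i hi
  rw [div_le_div_iff₀ (hpos i hi) (hpos j hj)] at hmaxi
  set seen : ℝ := (#(nbhdIn G L.verts (B j)) : ℝ)
  set new : ℝ := (#(nbhdIn G (L.grow hj).verts (B i)) : ℝ)
  have hgrowth : τ / 2 * seen * #(B i) ≤ new * #(B j) := calc
    τ / 2 * seen * #(B i) ≤ τ / 2 * (2 * #(L.fresh (B j))) * #(B i) := by gcongr
    _ = τ * #(L.fresh (B j)) * #(B i) := by ring
    _ ≤ _ := h.trans (by gcongr)
  refine ⟨le_of_mul_le_mul_right ?_ (hpos j hj),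
    Or.inr (le_of_mul_le_mul_right ?_ (hpos j hj))⟩
  · calc 2 * (#(nbhdIn G L.verts (B i)) : ℝ) * #(B j)
        = 2 * (#(nbhdIn G L.verts (B i)) * #(B j)) := by ring
      _ ≤ τ / 2 * (seen * #(B i)) := by gcongr; linarith
      _ ≤ new * #(B j) := by rwa [← mul_assoc]
  · calc (τ / 2) ^ (L.height + 1 + 1) * #(B i) * #(B j)
        = τ / 2 * #(B i) * ((τ / 2) ^ (L.height + 1) * #(B j)) := by ring
      _ ≤ τ / 2 * #(B i) * (n * seen) := by gcongr
      _ = n * (τ / 2 * seen * #(B i)) := by ring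
      _ ≤ n * (new * #(B j)) := by gcongr
      _ = n * new * #(B j) := by ring

theorem exists_largePart_fresh (hG : Coherent G Γ Γ) (hb : b ∉ Q)
    (hB : ∀ j ∈ Q, 16 * Γ ≤ #(B j)) (hexp : ExpandingOn G Q B τ) (hτ : 4 ≤ τ) (hn : 0 ≤ n)
    (hτn : n ≤ (τ / 2) ^ #Q) {J : Finset ι} {C : ι → Finset V} (hC : ∀ j ∈ J, 4 * Γ ≤ #(C j))
    (hBC : ∀ i ∈ Q, ∀ j ∈ J, Disjoint (B i) (C j)) (d : ℕ) (hL : L.IsGrowing τ n)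
    (hd : L.height + (d + 1) = #Q)
    (hseen : ∀ j ∈ J, 4 ^ (#Q + 1) * (#(nbhdIn G L.verts (C j)) : ℝ) ≤ 4 ^ L.height * #(C j)) :
    ∃ L' : Levelling G B x b Q, 1 ≤ L'.height ∧ L'.height ≤ #Q ∧ ∃ J' ⊆ J,
      #J ≤ 2 ^ (d + 1) * #J' ∧ ∀ j ∈ J', LargePart (4 ^ (#Q + 1)) (L'.fresh (C j)) (C j) := by
  induction d using Nat.strong_induction_on generalizing L J with | _ d ih
  by_cases hheavy : ∃ i ∈ L.free, (#(B i) : ℝ) ≤ 8 * #(nbhdIn G L.verts (B i))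
  · obtain ⟨i, hi, hBi⟩ := hheavy
    have hiQ : i ∈ Q := (mem_free.1 hi).1
    refine ⟨L.grow hi, by simp [height_grow], by rw [height_grow]; omega, J, subset_rfl,
      Nat.le_mul_of_pos_left _ (by positivity), fun j hj ↦ ?_⟩
    exact hL.largePart_pow_fresh_grow hG hi (hB i hiQ) hBi (hBC i hiQ j hj) (hC j hj) (by omega)
      (hseen j hj)
  push Not at hheavy
  obtain ⟨i, hi, hmax⟩ := exists_max_image L.free
    (fun i ↦ (#(nbhdIn G L.verts (B i)) : ℝ) / #(B i)) (L.free_nonempty hb (by omega))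
  obtain ⟨d, rfl⟩ : ∃ d', d = d' + 1 := Nat.exists_eq_succ_of_ne_zero fun hd0 ↦
    (hL.pow_lt hτ hi (hheavy i hi)).not_ge (by rwa [show L.height + 1 = #Q by omega])
  let P : Finset ι := {j ∈ J | 4 ^ (L.height + 1) * (#(C j) : ℝ) <
    4 ^ (#Q + 1) * #(nbhdIn G (L.grow hi).verts (C j))}
  by_cases hP : #J ≤ 2 * #P
  · refine ⟨L.grow hi, by simp [height_grow], by rw [height_grow]; omega, P, filter_subset _ _, ?_,
      fun j hj ↦ largePart_fresh_of_le _ (by positivity) ?_⟩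
    · exact hP.trans (Nat.mul_le_mul_right _ (Nat.le_self_pow (by omega) 2))
    · obtain ⟨hj, hnew⟩ := mem_filter.1 hj
      have hpow : (1 : ℝ) ≤ 4 ^ L.height := one_le_pow₀ (by norm_num)
      have := mul_le_mul_of_nonneg_right hpow (#(C j)).cast_nonneg
      rw [below_grow]
      rw [pow_succ] at hnew
      linarith [hseen j hj]
  · have hPJ : P ⊆ J := filter_subset _ _
    have hsplit := card_sdiff_add_card_eq_card hPJ
    obtain ⟨L', h1, hQ, J', hJ', hcard, hL'⟩ := ih d (by omega) (J := J \ P)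
      (fun j hj ↦ hC j (sdiff_subset hj)) (fun a ha j hj ↦ hBC a ha j (sdiff_subset hj))
      (hL.grow hexp hτ hn hheavy hi hmax) (by rw [height_grow]; omega) fun j hj ↦ by
        obtain ⟨hj, hjP⟩ := mem_sdiff.1 hj
        exact not_lt.1 fun h ↦ hjP (mem_filter.2 ⟨hj, h⟩)
    refine ⟨L', h1, hQ, J', hJ'.trans sdiff_subset, ?_, hL'⟩
    calc #J ≤ 2 * #(J \ P) := by omega
      _ ≤ 2 * (2 ^ (d + 1) * #J') := by gcongr
      _ = 2 ^ (d + 1 + 1) * #J' := by ring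

end IsGrowing

end Levelling

theorem Coherent.exists_levelling (hG : Coherent G Γ Γ) (hb : b ∉ Q) (hQ : Q.Nonempty)
    (hB : ∀ j ∈ Q, 16 * Γ ≤ #(B j)) (hexp : ExpandingOn G (insert b Q) B τ) (hτ : 4 ≤ τ)
    (hn : #(B b) ≤ n) (hτn : n ≤ (τ / 2) ^ #Q) (hx : x ∈ B b) {J : Finset ι} {C : ι → Finset V}
    (hC : ∀ j ∈ J, 4 * Γ ≤ #(C j)) (hBC : ∀ i ∈ Q, ∀ j ∈ J, Disjoint (B i) (C j))
    (hdeg : ∀ j ∈ J, MaxDegLE G {x} (C j) (4 ^ (#Q + 1))⁻¹) :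
    ∃ L : Levelling G B x b Q, 1 ≤ L.height ∧ L.height ≤ #Q ∧ ∃ J' ⊆ J,
      #J ≤ 2 ^ #Q * #J' ∧ ∀ j ∈ J', LargePart (4 ^ (#Q + 1)) (L.fresh (C j)) (C j) := by
  have hQpos := hQ.card_pos
  have hn0 : 0 ≤ n := (Nat.cast_nonneg _).trans hn
  have hverts : (Levelling.single G Q hx).verts = {x} := union_empty {x}
  obtain ⟨L, h1, hLQ, J', hJ', hcard, hL⟩ :=
    (Levelling.isGrowing_single hb hexp (by linarith) hn hx).exists_largePart_fresh hG hb hB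
      (hexp.mono (subset_insert b Q)) hτ hn0 hτn hC hBC (#Q - 1)
      (by rw [Levelling.single_height]; omega) fun j hj ↦ by
        have := hdeg j hj x (mem_singleton_self x)
        rw [hverts, Levelling.single_height, pow_zero, one_mul]
        rwa [inv_mul_eq_div, le_div_iff₀' (by positivity)] at this
  rw [Nat.sub_add_cancel hQpos] at hcard
  exact ⟨L, h1, hLQ, J', hJ', hcard, hL⟩

end Growth

/-! ### Size-biased averaging -/

section Averaging

variable {ι α : Type*} {Ω : Finset α}

theorem exists_lt_of_sum_mul_lt {π F : α → ℝ} {c : ℝ} (h0 : ∀ a ∈ Ω, 0 ≤ π a)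
    (h1 : ∑ a ∈ Ω, π a = 1) (hF : ∑ a ∈ Ω, π a * F a < c) : ∃ a ∈ Ω, 0 < π a ∧ F a < c := by
  by_contra! h
  refine hF.not_ge ?_
  calc c = ∑ a ∈ Ω, π a * c := by rw [← sum_mul, h1, one_mul]
    _ ≤ ∑ a ∈ Ω, π a * F a := sum_le_sum fun a ha ↦ by
      rcases (h0 a ha).eq_or_lt with hπ | hπ
      · simp [← hπ]
      · exact mul_le_mul_of_nonneg_left (h a ha hπ) hπ.le

/-- The method of conditional expectations for a sum of unary and pairwise costs. -/
theorem exists_pairwise_cost_lt [Nonempty α] {π : ι → α → ℝ} {g : ι → ι → α → α → ℝ}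
    (hg : ∀ i a b, g i i a b = 0) (J : Finset ι) (h0 : ∀ i ∈ J, ∀ a ∈ Ω, 0 ≤ π i a)
    (h1 : ∀ i ∈ J, ∑ a ∈ Ω, π i a = 1) (f : ι → α → ℝ) {c : ℝ}
    (hc : ∑ i ∈ J, ∑ a ∈ Ω, π i a * f i a +
      ∑ i ∈ J, ∑ j ∈ J, ∑ a ∈ Ω, π i a * ∑ b ∈ Ω, π j b * g i j a b < c) :
    ∃ T : ι → α, (∀ i ∈ J, T i ∈ Ω ∧ 0 < π i (T i)) ∧
      ∑ i ∈ J, f i (T i) + ∑ i ∈ J, ∑ j ∈ J, g i j (T i) (T j) < c := by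
  induction J using Finset.induction_on generalizing f c with
  | empty => exact ⟨fun _ ↦ Classical.arbitrary α, by simp, by simpa using hc⟩
  | insert k J hk ih =>
    simp only [forall_mem_insert] at h0 h1
    obtain ⟨a, ha, hpos, hlt⟩ := exists_lt_of_sum_mul_lt h0.1 h1.1 (c := c)
      (F := fun a ↦ f k a + ∑ i ∈ J, ∑ b ∈ Ω, π i b * (f i b + g k i a b + g i k b a) +
        ∑ i ∈ J, ∑ j ∈ J, ∑ b ∈ Ω, π i b * ∑ b' ∈ Ω, π j b' * g i j b b') (by
        refine lt_of_eq_of_lt ?_ hc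
        have hleft (i : ι) : ∑ a ∈ Ω, π k a * ∑ b ∈ Ω, π i b * g i k b a =
            ∑ b ∈ Ω, π i b * ∑ a ∈ Ω, π k a * g i k b a := by
          simp only [mul_sum]
          rw [sum_comm]
          exact sum_congr rfl fun b _ ↦ sum_congr rfl fun a _ ↦ mul_left_comm _ _ _
        have hpull (h : ι → α → ℝ) : ∑ a ∈ Ω, π k a * ∑ i ∈ J, h i a =
            ∑ i ∈ J, ∑ a ∈ Ω, π k a * h i a := by
          simp only [mul_sum]
          exact sum_comm
        simp only [sum_insert hk, hg, mul_add, sum_add_distrib, mul_zero, sum_const_zero, zero_add,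
          ← sum_mul, h1.1, one_mul, hpull, hleft]
        ring)
    obtain ⟨T, hT, hTc⟩ := ih h0.2 h1.2 (fun i b ↦ f i b + g k i a b + g i k b a)
      (lt_sub_iff_add_lt'.2 (by rwa [← add_assoc]))
    have hoff : ∀ i ∈ J, Function.update T k a i = T i := fun i hi ↦
      Function.update_of_ne (ne_of_mem_of_not_mem hi hk) ..
    refine ⟨Function.update T k a, ?_, ?_⟩
    · simp only [forall_mem_insert, Function.update_self]
      exact ⟨⟨ha, hpos⟩, fun i hi ↦ (hoff i hi).symm ▸ hT i hi⟩
    · have hpair : ∑ i ∈ J, ∑ j ∈ J, g i j (Function.update T k a i) (Function.update T k a j) =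
          ∑ i ∈ J, ∑ j ∈ J, g i j (T i) (T j) :=
        sum_congr rfl fun i hi ↦ sum_congr rfl fun j hj ↦ by rw [hoff i hi, hoff j hj]
      have hrow (h : ι → α → ℝ) : ∑ i ∈ J, h i (Function.update T k a i) = ∑ i ∈ J, h i (T i) :=
        sum_congr rfl fun i hi ↦ by rw [hoff i hi]
      simp only [sum_insert hk, Function.update_self, hg, zero_add, sum_add_distrib, hpair] at hTc ⊢
      rw [hrow f, hrow fun i b ↦ g k i a b, hrow fun i b ↦ g i k b a]
      linarith

theorem sum_sizeBiased_le {ν W F : α → ℝ} {w p : ℝ} (hν : ∀ a ∈ Ω, 0 ≤ ν a) (hF : ∀ a, 0 ≤ F a)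
    (hw : 0 < w) (h : ∑ a ∈ Ω, ν a * F a ≤ p * w) :
    ∑ a ∈ Ω, ν a * W a / w * (F a / W a) ≤ p := by
  have hcancel (a : α) : W a * (F a / W a) ≤ F a := by
    rcases eq_or_ne (W a) 0 with hW | hW
    · simpa [hW] using hF a
    · exact (mul_div_cancel₀ (F a) hW).le
  calc
    _ = ∑ a ∈ Ω, ν a * (W a * (F a / W a)) / w := sum_congr rfl fun a _ ↦ by ring
    _ ≤ ∑ a ∈ Ω, ν a * F a / w := sum_le_sum fun a ha ↦
      div_le_div_of_nonneg_right (mul_le_mul_of_nonneg_left (hcancel a) (hν a ha)) hw.le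
    _ ≤ p := by
      rw [← sum_div]
      exact (div_le_iff₀ hw).2 h

/-- Under the product of the size-biased laws `μ a * W i a / w i` the expected total cost is less
than `1`; hence some outcome violates none of the required inequalities. -/
theorem exists_forall_lt_of_sizeBiased [Nonempty α] {μ : α → ℝ} {J : Finset ι} {w : ι → ℝ}
    {W f : ι → α → ℝ} {g : ι → ι → α → α → ℝ} {p q : ℝ}
    (hμ : ∀ a ∈ Ω, 0 ≤ μ a) (hw : ∀ i ∈ J, 0 < w i) (hW0 : ∀ i a, 0 ≤ W i a)
    (hf0 : ∀ i a, 0 ≤ f i a) (hg0 : ∀ i j a b, 0 ≤ g i j a b)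
    (hW : ∀ i ∈ J, ∑ a ∈ Ω, μ a * W i a = w i)
    (hf : ∀ i ∈ J, ∑ a ∈ Ω, μ a * f i a ≤ p * w i)
    (hg : ∀ i ∈ J, ∀ j ∈ J, i ≠ j →
      ∑ a ∈ Ω, μ a * ∑ b ∈ Ω, μ b * g i j a b ≤ q * (w i * w j))
    (hq : 0 ≤ q) (hpq : #J * p + #J * #J * q < 1) :
    ∃ T : ι → α, ∀ i ∈ J, T i ∈ Ω ∧ f i (T i) < W i (T i) ∧
      ∀ j ∈ J, i ≠ j → g i j (T i) (T j) < W i (T i) * W j (T j) := by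
  have hpair : ∀ i ∈ J, ∀ j ∈ J, ∑ a ∈ Ω, μ a * W i a / w i * ∑ b ∈ Ω, μ b * W j b / w j *
      (if i = j then 0 else g i j a b / (W i a * W j b)) ≤ q := fun i hi j hj ↦ by
    by_cases hij : i = j
    · simpa [hij] using hq
    have hprod := sum_sizeBiased_le (Ω := Ω ×ˢ Ω) (ν := fun x ↦ μ x.1 * μ x.2)
      (W := fun x ↦ W i x.1 * W j x.2) (F := fun x ↦ g i j x.1 x.2)
      (fun x hx ↦ mul_nonneg (hμ _ (mem_product.1 hx).1) (hμ _ (mem_product.1 hx).2))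
      (fun x ↦ hg0 i j _ _) (mul_pos (hw i hi) (hw j hj)) (p := q)
      (by simpa only [sum_product, mul_sum, mul_assoc] using hg i hi j hj hij)
    refine (le_of_eq ?_).trans hprod
    simp only [sum_product, mul_sum, if_neg hij]
    exact sum_congr rfl fun a _ ↦ sum_congr rfl fun b _ ↦ by
      rw [← mul_assoc, div_mul_div_comm, mul_mul_mul_comm]
  obtain ⟨T, hT, hTc⟩ := exists_pairwise_cost_lt
    (g := fun i j a b ↦ if i = j then 0 else g i j a b / (W i a * W j b)) (by simp) J
    (π := fun i a ↦ μ a * W i a / w i)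
    (fun i hi a ha ↦ div_nonneg (mul_nonneg (hμ a ha) (hW0 i a)) (hw i hi).le)
    (fun i hi ↦ by rw [← sum_div, hW i hi, div_self (hw i hi).ne'])
    (fun i a ↦ f i a / W i a)
    (lt_of_le_of_lt (add_le_add (sum_le_sum fun i hi ↦
      sum_sizeBiased_le hμ (hf0 i) (hw i hi) (hf i hi)) (sum_le_sum fun i hi ↦
      sum_le_sum (hpair i hi))) (by simpa [mul_assoc] using hpq))
  have hWpos : ∀ i ∈ J, 0 < W i (T i) := fun i hi ↦ (hW0 i _).lt_of_ne' fun h ↦ by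
    simpa [h] using (hT i hi).2
  have hf1 : ∀ i ∈ J, 0 ≤ f i (T i) / W i (T i) := fun i _ ↦ div_nonneg (hf0 i _) (hW0 i _)
  have hg1 : ∀ i ∈ J, ∀ j ∈ J,
      0 ≤ if i = j then 0 else g i j (T i) (T j) / (W i (T i) * W j (T j)) := fun i _ j _ ↦ by
    split_ifs
    exacts [le_rfl, div_nonneg (hg0 i j _ _) (mul_nonneg (hW0 i _) (hW0 j _))]
  refine ⟨T, fun i hi ↦ ⟨(hT i hi).1, ?_, fun j hj hij ↦ ?_⟩⟩
  · rw [← div_lt_one (hWpos i hi)]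
    linarith [single_le_sum hf1 hi, sum_nonneg fun i hi ↦ sum_nonneg (hg1 i hi)]
  · rw [← div_lt_one (mul_pos (hWpos i hi) (hWpos j hj))]
    have := single_le_sum (hg1 i hi) hj
    rw [if_neg hij] at this
    linarith [sum_nonneg hf1, single_le_sum (fun i hi ↦ sum_nonneg (hg1 i hi)) hi]

theorem exists_mul_lt_and_forall_lt_of_sizeBiased [Nonempty α] {μ : α → ℝ} {J : Finset ι}
    {w : ι → ℝ} {W f : ι → α → ℝ} {g : ι → ι → α → α → ℝ} {p q κ : ℝ}
    (hμ : ∀ a ∈ Ω, 0 ≤ μ a) (hμ1 : ∑ a ∈ Ω, μ a = 1) (hw : ∀ i ∈ J, 0 < w i)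
    (hW0 : ∀ i a, 0 ≤ W i a) (hf0 : ∀ i a, 0 ≤ f i a) (hg0 : ∀ i j a b, 0 ≤ g i j a b)
    (hW : ∀ i ∈ J, ∑ a ∈ Ω, μ a * W i a = w i)
    (hf : ∀ i ∈ J, ∑ a ∈ Ω, μ a * f i a ≤ p * w i)
    (hg : ∀ i ∈ J, ∀ j ∈ J, i ≠ j →
      ∑ a ∈ Ω, μ a * ∑ b ∈ Ω, μ b * g i j a b ≤ q * (w i * w j))
    (hκ : 0 ≤ κ) (hq : 0 ≤ q) (hpq : #J * (p + κ) + #J * #J * q < 1) :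
    ∃ T : ι → α, ∀ i ∈ J, T i ∈ Ω ∧ κ * w i < W i (T i) ∧ f i (T i) < W i (T i) ∧
      ∀ j ∈ J, i ≠ j → g i j (T i) (T j) < W i (T i) * W j (T j) := by
  set small : ι → α → ℝ := fun i a ↦ if W i a ≤ κ * w i then W i a else 0 with hsmall
  have hsmall0 (i : ι) (a : α) : 0 ≤ small i a := by
    simp only [hsmall]
    split_ifs
    exacts [hW0 i a, le_rfl]
  have hsmall_le : ∀ i ∈ J, ∑ a ∈ Ω, μ a * small i a ≤ κ * w i := fun i hi ↦ calc
    _ ≤ ∑ a ∈ Ω, μ a * (κ * w i) := sum_le_sum fun a ha ↦ by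
      refine mul_le_mul_of_nonneg_left ?_ (hμ a ha)
      simp only [hsmall]
      split_ifs with h
      exacts [h, mul_nonneg hκ (hw i hi).le]
    _ = κ * w i := by rw [← sum_mul, hμ1, one_mul]
  obtain ⟨T, hT⟩ := exists_forall_lt_of_sizeBiased (f := fun i a ↦ f i a + small i a)
    (p := p + κ) hμ hw hW0 (fun i a ↦ add_nonneg (hf0 i a) (hsmall0 i a)) hg0 hW
    (fun i hi ↦ by
      simp only [mul_add, add_mul, sum_add_distrib]
      exact add_le_add (hf i hi) (hsmall_le i hi))
    hg hq hpq
  refine ⟨T, fun i hi ↦ ?_⟩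
  obtain ⟨hTΩ, hunary, hpair⟩ := hT i hi
  refine ⟨hTΩ, ?_, by linarith [hsmall0 i (T i)], hpair⟩
  by_contra! h
  simp only [hsmall, if_pos h] at hunary
  linarith [hf0 i (T i)]

end Averaging

/-! ### Random subsets -/

section RandomSubset

variable {p : ℝ} {D : Finset V}

/-- The probability that a random subset of `D` equals `T`, when the elements of `D` are chosen
independently with probability `p`. -/
def bernoulliWeight (p : ℝ) (D T : Finset V) : ℝ :=
  p ^ #T * (1 - p) ^ #(D \ T)

theorem bernoulliWeight_nonneg (h0 : 0 ≤ p) (h1 : p ≤ 1) (T : Finset V) :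
    0 ≤ bernoulliWeight p D T :=
  mul_nonneg (pow_nonneg h0 _) (pow_nonneg (sub_nonneg.2 h1) _)

theorem sum_bernoulliWeight_subset {A : Finset V} (hA : A ⊆ D) :
    ∑ T ∈ D.powerset, bernoulliWeight p D T * (if A ⊆ T then 1 else 0) = p ^ #A := by
  have hprod := prod_add (fun _ ↦ p) (fun d ↦ if d ∈ A then 0 else 1 - p) D
  have hleft : ∏ d ∈ D, (p + if d ∈ A then 0 else 1 - p) = p ^ #A := by
    rw [← prod_subset hA fun d _ hd ↦ by simp [hd], ← prod_const]
    exact prod_congr rfl fun d hd ↦ by simp [hd]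
  rw [← hleft, hprod]
  refine sum_congr rfl fun T _ ↦ ?_
  rw [bernoulliWeight, prod_const, mul_assoc]
  congr 1
  split_ifs with hAT
  · rw [mul_one, ← prod_const]
    exact prod_congr rfl fun d hd ↦ by rw [if_neg fun h ↦ (mem_sdiff.1 hd).2 (hAT h)]
  · obtain ⟨d, hdA, hdT⟩ := not_subset.1 hAT
    rw [mul_zero]
    refine (prod_eq_zero (i := d) (mem_sdiff.2 ⟨hA hdA, hdT⟩) ?_).symm
    exact if_pos hdA

theorem sum_bernoulliWeight : ∑ T ∈ D.powerset, bernoulliWeight p D T = 1 := by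
  simpa using sum_bernoulliWeight_subset (p := p) (empty_subset D)

theorem card_inter_eq_sum (S T : Finset V) :
    (#(S ∩ T) : ℝ) = ∑ d ∈ S, if {d} ⊆ T then 1 else 0 := by
  simp [← filter_mem_eq_inter]

theorem sum_bernoulliWeight_mul_card {S : Finset V} (hS : S ⊆ D) :
    ∑ T ∈ D.powerset, bernoulliWeight p D T * #(S ∩ T) = p * #S := by
  simp only [card_inter_eq_sum, mul_sum]
  rw [sum_comm, sum_congr rfl fun d hd ↦ sum_bernoulliWeight_subset
    (singleton_subset_iff.2 (hS hd))]
  simp [mul_comm]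

theorem sum_bernoulliWeight_mul_card_mul_card {N S : Finset V} (hN : N ⊆ D) (hS : S ⊆ D) :
    ∑ T ∈ D.powerset, bernoulliWeight p D T * (#(N ∩ T) * #(S ∩ T)) =
      p ^ 2 * #N * #S + (p - p ^ 2) * #(N ∩ S) := by
  have hpair (T : Finset V) : (#(N ∩ T) : ℝ) * #(S ∩ T) =
      ∑ d ∈ N, ∑ e ∈ S, if {d, e} ⊆ T then 1 else 0 := by
    rw [card_inter_eq_sum, card_inter_eq_sum, sum_mul_sum]
    refine sum_congr rfl fun d _ ↦ sum_congr rfl fun e _ ↦ ?_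
    simp only [insert_subset_iff, singleton_subset_iff, ite_zero_mul_ite_zero, mul_one]
  have hcard (d e : V) : p ^ #({d, e} : Finset V) = p ^ 2 + if d = e then p - p ^ 2 else 0 := by
    split_ifs with h
    · simp [h]
    · rw [card_pair h, add_zero]
  calc
    _ = ∑ d ∈ N, ∑ e ∈ S, ∑ T ∈ D.powerset,
        bernoulliWeight p D T * if {d, e} ⊆ T then 1 else 0 := by
      simp only [hpair, mul_sum]
      rw [sum_comm]
      exact sum_congr rfl fun d _ ↦ sum_comm
    _ = ∑ d ∈ N, ∑ e ∈ S, (p ^ 2 + if d = e then p - p ^ 2 else 0) :=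
      sum_congr rfl fun d hd ↦ sum_congr rfl fun e he ↦ by
        rw [sum_bernoulliWeight_subset (insert_subset (hN hd) (singleton_subset_iff.2 (hS he))),
          hcard]
    _ = _ := by
      simp only [sum_add_distrib, sum_const, sum_ite_eq, ← sum_filter, filter_mem_eq_inter,
        nsmul_eq_mul]
      ring

end RandomSubset

/-! ### Private covers -/

section HitCounts

variable {ι : Type*} {G : SimpleGraph V}

/-- The number of pairs `(v, d)` with `v ∈ C` and `d ∈ S v ∩ T`. -/
def hitCount (S : V → Finset V) (C T : Finset V) : ℝ :=
  ∑ v ∈ C, (#(S v ∩ T) : ℝ)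

/-- How far `hitCount S C T` is from counting every vertex of `C` at most once: the number of
ordered pairs of distinct hits of the same vertex. -/
def hitExcess (S : V → Finset V) (C T : Finset V) : ℝ :=
  ∑ v ∈ C, (#(S v ∩ T) * #(S v ∩ T) - #(S v ∩ T) : ℝ)

/-- The number of edges between `C` and `C'`, each end counted with its multiplicity in
`hitCount S C T` and `hitCount S C' T'`. -/
def hitEdges (G : SimpleGraph V) (S : V → Finset V) (C C' T T' : Finset V) : ℝ :=
  ∑ u ∈ C, ∑ v ∈ nbhdIn G {u} C', (#(S u ∩ T) * #(S v ∩ T') : ℝ)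

/-- The number of hits of vertices of `C` by `T`, each counted once for every neighbour of the
vertex in `D ∩ T'`. -/
def hitConflicts (G : SimpleGraph V) (S : V → Finset V) (D C T T' : Finset V) : ℝ :=
  ∑ v ∈ C, (#(S v ∩ T) * #(nbhdIn G {v} D ∩ T') : ℝ)

section Moments

variable {S : V → Finset V} {D C C' : Finset V} {p lam : ℝ} {r : ℕ}

theorem hitCount_nonneg (S : V → Finset V) (C T : Finset V) : 0 ≤ hitCount S C T :=
  sum_nonneg fun _ _ ↦ Nat.cast_nonneg _

theorem hitExcess_nonneg (S : V → Finset V) (C T : Finset V) : 0 ≤ hitExcess S C T :=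
  sum_nonneg fun v _ ↦ sub_nonneg.2 (by exact_mod_cast Nat.le_mul_self _)

theorem sum_hitCount (hS : ∀ v ∈ C, S v ⊆ D ∧ #(S v) = r) :
    ∑ T ∈ D.powerset, bernoulliWeight p D T * hitCount S C T = p * r * #C := by
  simp only [hitCount, mul_sum]
  rw [sum_comm, sum_congr rfl fun v hv ↦ sum_bernoulliWeight_mul_card (hS v hv).1,
    sum_congr rfl fun v hv ↦ by rw [(hS v hv).2], sum_const, nsmul_eq_mul, mul_comm]

theorem sum_hitExcess_le (hS : ∀ v ∈ C, S v ⊆ D ∧ #(S v) = r) :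
    ∑ T ∈ D.powerset, bernoulliWeight p D T * hitExcess S C T ≤ (p * r) ^ 2 * #C := by
  have hvertex : ∀ v ∈ C, ∑ T ∈ D.powerset, bernoulliWeight p D T *
      (#(S v ∩ T) * #(S v ∩ T) - #(S v ∩ T)) ≤ (p * r) ^ 2 := fun v hv ↦ by
    simp only [mul_sub, sum_sub_distrib]
    rw [sum_bernoulliWeight_mul_card_mul_card (hS v hv).1 (hS v hv).1,
      sum_bernoulliWeight_mul_card (hS v hv).1, inter_self, (hS v hv).2]
    nlinarith [mul_nonneg (sq_nonneg p) (Nat.cast_nonneg (α := ℝ) r)]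
  simp only [hitExcess, mul_sum]
  rw [sum_comm]
  exact (sum_le_sum hvertex).trans_eq (by rw [sum_const, nsmul_eq_mul, mul_comm])

theorem sum_hitEdges_le (hp : 0 ≤ p) (hS : ∀ v ∈ C, S v ⊆ D ∧ #(S v) = r)
    (hS' : ∀ v ∈ C', S v ⊆ D ∧ #(S v) = r) (hdeg : MaxDegLE G C C' lam) :
    ∑ T ∈ D.powerset, bernoulliWeight p D T * ∑ T' ∈ D.powerset,
      bernoulliWeight p D T' * hitEdges G S C C' T T' ≤
      lam * ((p * r * #C) * (p * r * #C')) := by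
  have hinner (T : Finset V) : ∑ T' ∈ D.powerset, bernoulliWeight p D T' *
      hitEdges G S C C' T T' = ∑ u ∈ C, p * r * #(nbhdIn G {u} C') * #(S u ∩ T) := by
    simp only [hitEdges, mul_sum]
    rw [sum_comm]
    refine sum_congr rfl fun u _ ↦ ?_
    rw [← sum_hitCount fun v hv ↦ hS' v (nbhdIn_subset _ _ hv), sum_mul]
    simp only [hitCount, mul_sum, sum_mul]
    exact sum_congr rfl fun T' _ ↦ sum_congr rfl fun v _ ↦ by ring
  simp only [hinner, mul_sum]
  rw [sum_comm]
  calc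
    _ = ∑ u ∈ C, p * r * #(nbhdIn G {u} C') * (p * r) := sum_congr rfl fun u hu ↦ by
      rw [← (hS u hu).2, ← sum_bernoulliWeight_mul_card (hS u hu).1, mul_sum]
      exact sum_congr rfl fun T _ ↦ by ring
    _ ≤ ∑ _ ∈ C, p * r * (lam * #C') * (p * r) := by
      gcongr with _ hu
      exact hdeg _ hu
    _ = _ := by
      rw [sum_const, nsmul_eq_mul]
      ring

theorem sum_card_nbhdIn_inter_le (hS : ∀ v ∈ C', S v ⊆ D ∧ #(S v) = r)
    (hdeg : MaxDegLE G D C lam) :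
    ∑ v ∈ C, ∑ w ∈ C', (#(nbhdIn G {v} D ∩ S w) : ℝ) ≤ lam * r * #C * #C' := by
  rw [sum_comm]
  have hcol : ∀ w ∈ C', ∑ v ∈ C, (#(nbhdIn G {v} D ∩ S w) : ℝ) ≤ lam * r * #C := fun w hw ↦ by
    have hcount : ∑ v ∈ C, #(nbhdIn G {v} D ∩ S w) = ∑ d ∈ S w, #(nbhdIn G {d} C) := by
      convert sum_card_bipartiteAbove_eq_sum_card_bipartiteBelow (s := C) (t := S w)
        (fun v d ↦ G.Adj v d) using 3 with v _ d
      · ext d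
        simp only [mem_inter, mem_nbhdIn_singleton, mem_bipartiteAbove]
        exact ⟨fun h ↦ ⟨h.2, h.1.2⟩, fun h ↦ ⟨⟨(hS w hw).1 h.1, h.2⟩, h.1⟩⟩
      · ext v
        simp only [mem_nbhdIn_singleton, mem_bipartiteBelow, G.adj_comm d]
    calc
      _ = ∑ d ∈ S w, (#(nbhdIn G {d} C) : ℝ) := by exact_mod_cast hcount
      _ ≤ ∑ _ ∈ S w, lam * #C := by
        gcongr with _ hd
        exact hdeg _ ((hS w hw).1 hd)
      _ = lam * r * #C := by
        rw [sum_const, (hS w hw).2, nsmul_eq_mul]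
        ring
  exact (sum_le_sum hcol).trans_eq (by rw [sum_const, nsmul_eq_mul, mul_comm])

theorem sum_hitConflicts_mul_hitCount_le {b : ℕ} (hp : 0 ≤ p)
    (hS : ∀ v ∈ C, S v ⊆ D ∧ #(S v) = r) (hS' : ∀ v ∈ C', S v ⊆ D ∧ #(S v) = r)
    (hb : ∀ v ∈ C, #(nbhdIn G {v} D) ≤ r * b) (hdeg : MaxDegLE G D C lam) :
    ∑ T ∈ D.powerset, bernoulliWeight p D T * ∑ T' ∈ D.powerset,
      bernoulliWeight p D T' * (hitConflicts G S D C T T' * hitCount S C' T') ≤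
      (p * r * b + lam) * ((p * r * #C) * (p * r * #C')) := by
  have hinner : ∀ v ∈ C, ∀ w ∈ C', ∑ T' ∈ D.powerset, bernoulliWeight p D T' *
      (#(nbhdIn G {v} D ∩ T') * #(S w ∩ T')) ≤
        p ^ 2 * (r * b) * r + p * #(nbhdIn G {v} D ∩ S w) := fun v hv w hw ↦ by
    rw [sum_bernoulliWeight_mul_card_mul_card (nbhdIn_subset _ _) (hS' w hw).1, (hS' w hw).2]
    have hbv : (#(nbhdIn G {v} D) : ℝ) ≤ r * b := by exact_mod_cast hb v hv
    gcongr
    linarith [sq_nonneg p]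
  have hsplit (T : Finset V) : ∑ T' ∈ D.powerset, bernoulliWeight p D T' *
      (hitConflicts G S D C T T' * hitCount S C' T') = ∑ v ∈ C, #(S v ∩ T) * ∑ w ∈ C',
        ∑ T' ∈ D.powerset, bernoulliWeight p D T' *
          (#(nbhdIn G {v} D ∩ T') * #(S w ∩ T')) := by
    simp only [hitConflicts, hitCount, sum_mul_sum]
    simp only [mul_sum]
    rw [sum_comm]
    refine sum_congr rfl fun v _ ↦ ?_
    rw [sum_comm]
    exact sum_congr rfl fun w _ ↦ sum_congr rfl fun T' _ ↦ by ring
  calc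
    _ = ∑ v ∈ C, p * r * ∑ w ∈ C', ∑ T' ∈ D.powerset, bernoulliWeight p D T' *
        (#(nbhdIn G {v} D ∩ T') * #(S w ∩ T')) := by
      simp only [hsplit]
      rw [sum_congr rfl fun T _ ↦ mul_sum .., sum_comm]
      refine sum_congr rfl fun v hv ↦ ?_
      rw [← (hS v hv).2, ← sum_bernoulliWeight_mul_card (hS v hv).1, sum_mul]
      exact sum_congr rfl fun T _ ↦ (mul_assoc _ _ _).symm
    _ ≤ ∑ v ∈ C, p * r * ∑ w ∈ C', (p ^ 2 * (r * b) * r + p * #(nbhdIn G {v} D ∩ S w)) :=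
      sum_le_sum fun v hv ↦ mul_le_mul_of_nonneg_left (sum_le_sum (hinner v hv)) (by positivity)
    _ = p * r * (p ^ 2 * (r * b) * r * #C * #C' +
        p * ∑ v ∈ C, ∑ w ∈ C', (#(nbhdIn G {v} D ∩ S w) : ℝ)) := by
      simp only [← mul_sum, sum_add_distrib, sum_const, nsmul_eq_mul]
      ring
    _ ≤ p * r * (p ^ 2 * (r * b) * r * #C * #C' + p * (lam * r * #C * #C')) := by
      gcongr
      exact sum_card_nbhdIn_inter_le hS' hdeg
    _ = _ := by ring

end Moments

end HitCounts

section Samples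

variable {ι : Type*} {G : SimpleGraph V} {S : V → Finset V} {D : Finset V} {J : Finset ι}
  {C : ι → Finset V} {lam lam' : ℝ} {r b : ℕ}

theorem hitEdges_nonneg (C C' T T' : Finset V) : 0 ≤ hitEdges G S C C' T T' :=
  sum_nonneg fun _ _ ↦ sum_nonneg fun _ _ ↦ by positivity

theorem hitConflicts_nonneg (C T T' : Finset V) : 0 ≤ hitConflicts G S D C T T' :=
  sum_nonneg fun _ _ ↦ by positivity

/-- Random sets `T i ⊆ D`, size-biased by the number of hits in `C i`. -/
theorem exists_samples {p κ ρ : ℝ} (hp0 : 0 < p) (hp1 : p ≤ 1) (hr : 1 ≤ r) (hκ : 0 ≤ κ)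
    (hρ : 0 < ρ) (hlam0 : 0 ≤ lam)
    (hC : ∀ j ∈ J, (C j).Nonempty) (hS : ∀ j ∈ J, ∀ v ∈ C j, S v ⊆ D ∧ #(S v) = r)
    (hrb : ∀ j ∈ J, ∀ v ∈ C j, #(nbhdIn G {v} D) ≤ r * b)
    (hD : ∀ j ∈ J, MaxDegLE G D (C j) lam)
    (hdeg : (J : Set ι).Pairwise fun i j ↦ MaxDegLE G (C i) (C j) lam)
    (hsmall : #J * (8 * (p * r) + κ) +
      #J * #J * (lam / ρ + 8 * #J * (p * r * b + lam)) < 1) :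
    ∃ T : ι → Finset V, ∀ i ∈ J, T i ⊆ D ∧
      κ * (p * r * #(C i)) < hitCount S (C i) (T i) ∧
      8 * hitExcess S (C i) (T i) < hitCount S (C i) (T i) ∧ ∀ j ∈ J, i ≠ j →
        hitEdges G S (C i) (C j) (T i) (T j) <
          ρ * (hitCount S (C i) (T i) * hitCount S (C j) (T j)) ∧
        8 * #J * hitConflicts G S D (C i) (T i) (T j) < hitCount S (C i) (T i) := by
  have hw : ∀ i ∈ J, 0 < p * r * #(C i) := fun i hi ↦ mul_pos
    (mul_pos hp0 (by exact_mod_cast hr)) (by exact_mod_cast (hC i hi).card_pos)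
  obtain ⟨T, hT⟩ := exists_mul_lt_and_forall_lt_of_sizeBiased (Ω := D.powerset)
    (μ := bernoulliWeight p D) (W := fun i ↦ hitCount S (C i))
    (f := fun i T ↦ 8 * hitExcess S (C i) T)
    (g := fun i j T T' ↦ ρ⁻¹ * hitEdges G S (C i) (C j) T T' +
      8 * #J * (hitConflicts G S D (C i) T T' * hitCount S (C j) T'))
    (fun T _ ↦ bernoulliWeight_nonneg hp0.le hp1 T) sum_bernoulliWeight hw
    (fun i T ↦ hitCount_nonneg _ _ _)
    (fun i T ↦ mul_nonneg (by norm_num) (hitExcess_nonneg _ _ _))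
    (fun i j T T' ↦ add_nonneg (mul_nonneg (inv_nonneg.2 hρ.le) (hitEdges_nonneg _ _ _ _))
      (mul_nonneg (by positivity) (mul_nonneg (hitConflicts_nonneg _ _ _) (hitCount_nonneg _ _ _))))
    (fun i hi ↦ sum_hitCount (hS i hi))
    (fun i hi ↦ by
      simp only [mul_left_comm _ (8 : ℝ), ← mul_sum]
      linarith [sum_hitExcess_le (p := p) (hS i hi)])
    (fun i hi j hj hij ↦ by
      simp only [mul_add, sum_add_distrib, mul_left_comm _ ρ⁻¹, mul_left_comm _ (8 * (#J : ℝ)),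
        ← mul_sum]
      exact (add_le_add (mul_le_mul_of_nonneg_left
        (sum_hitEdges_le hp0.le (hS i hi) (hS j hj) (hdeg hi hj hij)) (inv_nonneg.2 hρ.le))
        (mul_le_mul_of_nonneg_left (sum_hitConflicts_mul_hitCount_le hp0.le (hS i hi) (hS j hj)
          (hrb i hi) (hD i hi)) (by positivity))).trans_eq (by ring))
    hκ (q := lam / ρ + 8 * #J * (p * r * b + lam)) (by positivity) hsmall
  refine ⟨T, fun i hi ↦ ?_⟩
  obtain ⟨hTD, hcount, hexcess, hpair⟩ := hT i hi
  refine ⟨mem_powerset.1 hTD, hcount, hexcess, fun j hj hij ↦ ?_⟩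
  have hlt := hpair j hj hij
  have hWj := hitCount_nonneg S (C j) (T j)
  have hedges := hitEdges_nonneg (G := G) (S := S) (C i) (C j) (T i) (T j)
  have hconf := hitConflicts_nonneg (G := G) (S := S) (D := D) (C i) (T i) (T j)
  constructor
  · rw [← inv_mul_lt_iff₀ hρ]
    linarith [mul_nonneg (show (0 : ℝ) ≤ 8 * #J by positivity) (mul_nonneg hconf hWj)]
  · refine lt_of_mul_lt_mul_right ?_ hWj
    linarith [mul_nonneg (inv_nonneg.2 hρ.le) hedges]

end Samples

section PrivateCovers

variable {ι : Type*} {G : SimpleGraph V} {S : V → Finset V} {D : Finset V} {J : Finset ι}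
  {C X T : ι → Finset V} {lam lam' : ℝ} {r b : ℕ}

/-- Each `X j` is covered by a subset `T j` of `D` that has no neighbours in the other sets
`X i`. -/
structure IsPrivateCover (G : SimpleGraph V) (D : Finset V) (J : Finset ι)
    (X T : ι → Finset V) : Prop where
  subset : ∀ j ∈ J, T j ⊆ D
  covers : ∀ j ∈ J, Covers G (T j : Set V) (X j)
  anticomplete : (J : Set ι).Pairwise fun i j ↦ Anticomplete G (T i : Set V) (X j)

theorem IsPrivateCover.mono {X' : ι → Finset V} (h : IsPrivateCover G D J X T)
    (hX : ∀ j ∈ J, X' j ⊆ X j) : IsPrivateCover G D J X' T where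
  subset := h.subset
  covers j hj := (h.covers j hj).mono_right (hX j hj)
  anticomplete _ hi j hj hij := (h.anticomplete hi hj hij).mono subset_rfl (hX j hj)

/-- The vertices of `C i` that are hit by `T i` and have no neighbour in any other `T j`. -/
def privateHits (G : SimpleGraph V) (S : V → Finset V) (D : Finset V) (J : Finset ι)
    (C T : ι → Finset V) (i : ι) : Finset V :=
  {v ∈ C i | (S v ∩ T i).Nonempty ∧ ∀ j ∈ J, j ≠ i → Disjoint (nbhdIn G {v} D) (T j)}

theorem isPrivateCover_privateHits (hT : ∀ j ∈ J, T j ⊆ D)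
    (hS : ∀ j ∈ J, ∀ v ∈ C j, S v ⊆ nbhdIn G {v} D) :
    IsPrivateCover G D J (privateHits G S D J C T) T where
  subset := hT
  covers j hj v hv := by
    obtain ⟨hvC, ⟨d, hd⟩, -⟩ := mem_filter.1 (mem_coe.1 hv)
    obtain ⟨hdS, hdT⟩ := mem_inter.1 hd
    exact ⟨d, hdT, (mem_nbhdIn_singleton.1 (hS j hj v hvC hdS)).2.symm⟩
  anticomplete i hi j _ hij d hd v hv hdv :=
    disjoint_left.1 ((mem_filter.1 (mem_coe.1 hv)).2.2 i hi hij)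
      (mem_nbhdIn_singleton.2 ⟨hT i hi hd, hdv.symm⟩) hd

/-- A vertex with `n` hits and `c` conflicts is private unless `c ≥ 1`, and
`n - (n ^ 2 - n) - n * c` is at most `1`, and nonpositive if `n = 0` or `c ≥ 1`. -/
theorem hitCount_le_card_privateHits_add (i : ι) :
    hitCount S (C i) (T i) ≤ #(privateHits G S D J C T i) + hitExcess S (C i) (T i) +
      ∑ j ∈ J.erase i, hitConflicts G S D (C i) (T i) (T j) := by
  simp only [hitCount, hitExcess, hitConflicts, privateHits, card_filter, Nat.cast_sum]
  rw [sum_comm, ← sum_add_distrib, ← sum_add_distrib]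
  refine sum_le_sum fun v _ ↦ ?_
  rw [← mul_sum]
  set n := #(S v ∩ T i)
  set c := ∑ j ∈ J.erase i, (#(nbhdIn G {v} D ∩ T j) : ℝ)
  have hc0 : 0 ≤ c := sum_nonneg fun _ _ ↦ Nat.cast_nonneg _
  rcases Nat.eq_zero_or_pos n with hn0 | hn0
  · simp only [hn0, Nat.cast_zero]
    split_ifs <;> simp
  have hn1 : (1 : ℝ) ≤ n := by exact_mod_cast hn0
  by_cases hpriv : ∀ j ∈ J, j ≠ i → Disjoint (nbhdIn G {v} D) (T j)
  · rw [if_pos ⟨card_pos.1 hn0, hpriv⟩]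
    push_cast
    nlinarith
  · push Not at hpriv
    obtain ⟨j, hj, hji, hdisj⟩ := hpriv
    have hc1 : 1 ≤ c := by
      refine le_trans ?_ (single_le_sum (fun k _ ↦ Nat.cast_nonneg _) (mem_erase.2 ⟨hji, hj⟩))
      exact_mod_cast card_pos.2 (not_disjoint_iff_nonempty_inter.1 hdisj)
    have := Nat.cast_nonneg (α := ℝ) (if (S v ∩ T i).Nonempty ∧ ∀ j ∈ J, j ≠ i →
      Disjoint (nbhdIn G {v} D) (T j) then 1 else 0)
    nlinarith

theorem sum_card_nbhdIn_privateHits_le (i j : ι) :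
    ∑ u ∈ privateHits G S D J C T i, (#(nbhdIn G {u} (privateHits G S D J C T j)) : ℝ) ≤
      hitEdges G S (C i) (C j) (T i) (T j) := by
  have hone {i : ι} {v : V} (hv : v ∈ privateHits G S D J C T i) : (1 : ℝ) ≤ #(S v ∩ T i) := by
    exact_mod_cast card_pos.2 (mem_filter.1 hv).2.1
  have hsub (i : ι) : privateHits G S D J C T i ⊆ C i := filter_subset _ _
  refine (sum_le_sum fun u hu ↦ ?_).trans (sum_le_sum_of_subset_of_nonneg (hsub i)
    fun u _ _ ↦ sum_nonneg fun v _ ↦ by positivity)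
  calc
    (#(nbhdIn G {u} (privateHits G S D J C T j)) : ℝ) =
        ∑ v ∈ nbhdIn G {u} (privateHits G S D J C T j), 1 := by simp
    _ ≤ ∑ v ∈ nbhdIn G {u} (privateHits G S D J C T j), (#(S u ∩ T i) * #(S v ∩ T j) : ℝ) :=
      sum_le_sum fun v hv ↦ one_le_mul_of_one_le_of_one_le (hone hu) (hone (nbhdIn_subset _ _ hv))
    _ ≤ _ := sum_le_sum_of_subset_of_nonneg (nbhdIn_mono subset_rfl (hsub j))
      fun v _ _ ↦ by positivity

theorem exists_half_maxDegLE {X : ι → Finset V} (hlam : 0 < lam)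
    (h : (J : Set ι).Pairwise fun i j ↦
      4 * #J * ∑ u ∈ X i, (#(nbhdIn G {u} (X j)) : ℝ) ≤ lam * #(X i) * #(X j)) :
    ∃ X' : ι → Finset V, (∀ i ∈ J, LargePart 2 (X' i) (X i)) ∧
      (J : Set ι).Pairwise fun i j ↦ MaxDegLE G (X' i) (X' j) lam := by
  set bad : ι → ι → Finset V := fun i j ↦
    {u ∈ X i | lam / 2 * #(X j) < (#(nbhdIn G {u} (X j)) : ℝ)} with hbad
  have hcard : ∀ i ∈ J, ∀ j ∈ J.erase i, (#(bad i j) : ℝ) ≤ #(X i) / (2 * #J) := by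
    intro i hi j hj
    obtain ⟨hji, hj⟩ := mem_erase.1 hj
    have hJ : (0 : ℝ) < #J := by exact_mod_cast card_pos.2 ⟨i, hi⟩
    have hmarkov : #(bad i j) * (lam / 2 * #(X j)) ≤ ∑ u ∈ X i, (#(nbhdIn G {u} (X j)) : ℝ) := by
      rw [← nsmul_eq_mul, ← sum_const]
      exact (sum_le_sum fun u hu ↦ (mem_filter.1 hu).2.le).trans
        (sum_le_sum_of_subset_of_nonneg (filter_subset _ _) fun _ _ _ ↦ Nat.cast_nonneg _)
    rcases (X j).eq_empty_or_nonempty with hXj | hXj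
    · simp only [hbad, hXj, nbhdIn, filter_empty, card_empty, Nat.cast_zero, mul_zero,
        lt_self_iff_false, filter_false]
      positivity
    have hXj : (0 : ℝ) < lam * #(X j) := mul_pos hlam (by exact_mod_cast hXj.card_pos)
    rw [le_div_iff₀ (by positivity)]
    refine le_of_mul_le_mul_left ?_ hXj
    nlinarith [h hi hj hji.symm, mul_le_mul_of_nonneg_left hmarkov hJ.le]
  have hlarge : ∀ i ∈ J, LargePart 2 (X i \ (J.erase i).biUnion (bad i)) (X i) := by
    refine fun i hi ↦ ⟨sdiff_subset, ?_⟩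
    have hJ : (0 : ℝ) < #J := by exact_mod_cast card_pos.2 ⟨i, hi⟩
    have hbads : (#((J.erase i).biUnion (bad i)) : ℝ) ≤ #(X i) / 2 := calc
      (#((J.erase i).biUnion (bad i)) : ℝ) ≤ ∑ j ∈ J.erase i, (#(bad i j) : ℝ) := by
        exact_mod_cast card_biUnion_le
      _ ≤ #(J.erase i) * (#(X i) / (2 * #J)) := by
        simpa only [nsmul_eq_mul] using sum_le_card_nsmul _ _ _ (hcard i hi)
      _ ≤ #J * (#(X i) / (2 * #J)) := by gcongr; exact erase_subset _ _
      _ = #(X i) / 2 := by field_simp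
    have hsplit : (#(X i) : ℝ) ≤
        #((J.erase i).biUnion (bad i)) + #(X i \ (J.erase i).biUnion (bad i)) := by
      exact_mod_cast card_le_card_sdiff_add_card.trans_eq (add_comm _ _)
    linarith
  refine ⟨_, hlarge, fun i _ j hj hij u hu ↦ ?_⟩
  obtain ⟨huX, hu⟩ := mem_sdiff.1 hu
  have hdeg : (#(nbhdIn G {u} (X j)) : ℝ) ≤ lam / 2 * #(X j) := by
    by_contra! hlt
    exact hu (mem_biUnion.2 ⟨j, mem_erase.2 ⟨hij.symm, hj⟩, mem_filter.2 ⟨huX, hlt⟩⟩)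
  refine ((hlarge j hj).maxDegLE (X := {u}) (lam := lam / 2) (by positivity) (by simpa [MaxDegLE])
    u (mem_singleton_self u)).trans_eq (by ring)

theorem three_mul_hitCount_le_card_privateHits {i : ι} (hi : i ∈ J)
    (hexc : 8 * hitExcess S (C i) (T i) ≤ hitCount S (C i) (T i))
    (hconf : ∀ j ∈ J, i ≠ j →
      8 * #J * hitConflicts G S D (C i) (T i) (T j) ≤ hitCount S (C i) (T i)) :
    3 * hitCount S (C i) (T i) ≤ 4 * #(privateHits G S D J C T i) := by
  have hJ : (0 : ℝ) < #J := by exact_mod_cast card_pos.2 ⟨i, hi⟩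
  have hsum : ∑ j ∈ J.erase i, hitConflicts G S D (C i) (T i) (T j) ≤
      hitCount S (C i) (T i) / 8 := calc
    _ ≤ #(J.erase i) * (hitCount S (C i) (T i) / (8 * #J)) := by
      rw [← nsmul_eq_mul]
      refine sum_le_card_nsmul _ _ _ fun j hj ↦ ?_
      rw [le_div_iff₀ (by positivity), mul_comm]
      exact hconf j (mem_of_mem_erase hj) (ne_of_mem_erase hj).symm
    _ ≤ #J * (hitCount S (C i) (T i) / (8 * #J)) :=
      mul_le_mul_of_nonneg_right (by exact_mod_cast card_le_card (erase_subset _ _))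
        (div_nonneg (hitCount_nonneg _ _ _) (by positivity))
    _ = hitCount S (C i) (T i) / 8 := by field_simp
  linarith [hitCount_le_card_privateHits_add (G := G) (S := S) (D := D) (J := J) (C := C) (T := T)
    i]

/-- The samples are drawn with density `(64 * #J ^ 3 * r * b)⁻¹`. -/
theorem exists_samples_of_almostRegular (hJ : J.Nonempty) (hr : 1 ≤ r) (hb : 1 ≤ b)
    (hlam : 0 ≤ lam) (hlam' : 64 * #J ^ 3 * lam ≤ lam') (hlam'0 : 0 < lam') (hlam'1 : lam' ≤ 1)
    (hC : ∀ j ∈ J, (C j).Nonempty) (hS : ∀ j ∈ J, ∀ v ∈ C j, S v ⊆ D ∧ #(S v) = r)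
    (hrb : ∀ j ∈ J, ∀ v ∈ C j, #(nbhdIn G {v} D) ≤ r * b)
    (hD : ∀ j ∈ J, MaxDegLE G D (C j) lam)
    (hdeg : (J : Set ι).Pairwise fun i j ↦ MaxDegLE G (C i) (C j) lam) :
    ∃ T : ι → Finset V, ∀ i ∈ J, T i ⊆ D ∧
      #(C i) < 256 * #J ^ 4 * b * hitCount S (C i) (T i) ∧
      8 * hitExcess S (C i) (T i) < hitCount S (C i) (T i) ∧ ∀ j ∈ J, i ≠ j →
        hitEdges G S (C i) (C j) (T i) (T j) <
          lam' / (8 * #J) * (hitCount S (C i) (T i) * hitCount S (C j) (T j)) ∧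
        8 * #J * hitConflicts G S D (C i) (T i) (T j) < hitCount S (C i) (T i) := by
  have hm : (1 : ℝ) ≤ #J := by exact_mod_cast hJ.card_pos
  have hr' : (1 : ℝ) ≤ r := by exact_mod_cast hr
  have hb' : (1 : ℝ) ≤ b := by exact_mod_cast hb
  have hp1 : 1 ≤ 64 * (#J : ℝ) ^ 3 * r * b :=
    one_le_mul_of_one_le_of_one_le (one_le_mul_of_one_le_of_one_le
      (by linarith [one_le_pow₀ hm (n := 3)]) hr') hb'
  have hsmall : #J * (8 * ((64 * (#J : ℝ) ^ 3 * r * b)⁻¹ * r) + 1 / (4 * #J)) + #J * #J *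
      (lam / (lam' / (8 * #J)) + 8 * #J * ((64 * (#J : ℝ) ^ 3 * r * b)⁻¹ * r * b + lam)) < 1 := by
    have hsum : #J * (8 * ((64 * (#J : ℝ) ^ 3 * r * b)⁻¹ * r) + 1 / (4 * #J)) + #J * #J *
        (lam / (lam' / (8 * #J)) + 8 * #J * ((64 * (#J : ℝ) ^ 3 * r * b)⁻¹ * r * b + lam)) =
        1 / (8 * #J ^ 2 * b) + 3 / 8 + (64 * #J ^ 3 * lam) / (8 * lam') +
          (64 * #J ^ 3 * lam) / 8 := by
      field_simp
      ring
    have hhits : 1 / (8 * (#J : ℝ) ^ 2 * b) ≤ 1 / 8 :=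
      one_div_le_one_div_of_le (by norm_num)
        (by linarith [one_le_mul_of_one_le_of_one_le (one_le_pow₀ hm (n := 2)) hb'])
    have hedges : (64 * #J ^ 3 * lam) / (8 * lam') ≤ 1 / 8 := by
      rw [div_le_div_iff₀ (by positivity) (by norm_num)]
      linarith
    linarith
  obtain ⟨T, hT⟩ := exists_samples (κ := 1 / (4 * #J)) (ρ := lam' / (8 * #J))
    (inv_pos.2 (by linarith)) (inv_le_one_of_one_le₀ hp1) hr (by positivity) (by positivity) hlam
    hC hS hrb hD hdeg hsmall
  refine ⟨T, fun i hi ↦ ⟨(hT i hi).1, ?_, (hT i hi).2.2⟩⟩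
  have hmean : 1 / (4 * (#J : ℝ)) * ((64 * (#J : ℝ) ^ 3 * r * b)⁻¹ * r * #(C i)) =
      #(C i) / (256 * #J ^ 4 * b) := by
    field_simp
    norm_num
  rw [mul_comm, ← div_lt_iff₀ (by positivity), ← hmean]
  exact (hT i hi).2.1

theorem exists_isPrivateCover (hJ : J.Nonempty) (hr : 1 ≤ r) (hb : 1 ≤ b) (hlam : 0 ≤ lam)
    (hlam' : 64 * #J ^ 3 * lam ≤ lam') (hlam'0 : 0 < lam') (hlam'1 : lam' ≤ 1)
    (hC : ∀ j ∈ J, (C j).Nonempty)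
    (hrD : ∀ j ∈ J, ∀ v ∈ C j, r ≤ #(nbhdIn G {v} D) ∧ #(nbhdIn G {v} D) ≤ r * b)
    (hD : ∀ j ∈ J, MaxDegLE G D (C j) lam)
    (hdeg : (J : Set ι).Pairwise fun i j ↦ MaxDegLE G (C i) (C j) lam) :
    ∃ X T : ι → Finset V, IsPrivateCover G D J X T ∧
      (∀ j ∈ J, LargePart (1024 * #J ^ 4 * b) (X j) (C j)) ∧
      (J : Set ι).Pairwise fun i j ↦ MaxDegLE G (X i) (X j) lam' := by
  choose! S hSD hScard using fun v (hv : r ≤ #(nbhdIn G {v} D)) ↦ exists_subset_card_eq hv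
  obtain ⟨T, hT⟩ := exists_samples_of_almostRegular hJ hr hb hlam hlam' hlam'0 hlam'1 hC
    (fun j hj v hv ↦
      ⟨(hSD v (hrD j hj v hv).1).trans (nbhdIn_subset _ _), hScard v (hrD j hj v hv).1⟩)
    (fun j hj v hv ↦ (hrD j hj v hv).2) hD hdeg
  set X := privateHits G S D J C T
  have hX : ∀ i ∈ J, 3 * hitCount S (C i) (T i) ≤ 4 * #(X i) := fun i hi ↦
    three_mul_hitCount_le_card_privateHits hi (hT i hi).2.2.1.le
      fun j hj hij ↦ ((hT i hi).2.2.2 j hj hij).2.le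
  obtain ⟨X', hX', hdeg'⟩ := exists_half_maxDegLE (G := G) (X := X) hlam'0 fun i hi j hj hij ↦ by
    have hJ : (0 : ℝ) < #J := by exact_mod_cast hJ.card_pos
    calc
      4 * #J * ∑ u ∈ X i, (#(nbhdIn G {u} (X j)) : ℝ)
        ≤ 4 * #J * (lam' / (8 * #J) * (hitCount S (C i) (T i) * hitCount S (C j) (T j))) := by
          gcongr
          exact (sum_card_nbhdIn_privateHits_le i j).trans ((hT i hi).2.2.2 j hj hij).1.le
      _ = lam' / 2 * (hitCount S (C i) (T i) * hitCount S (C j) (T j)) := by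
        field_simp
        ring
      _ ≤ lam' / 2 * (4 / 3 * #(X i) * (4 / 3 * #(X j))) := by
        gcongr
        · exact hitCount_nonneg _ _ _
        · linarith [hX i hi]
        · linarith [hX j hj]
      _ ≤ lam' * #(X i) * #(X j) := by
        linarith [show 0 ≤ lam' * #(X i) * #(X j) by positivity]
  refine ⟨X', T, (isPrivateCover_privateHits (fun j hj ↦ (hT j hj).1)
    fun j hj v hv ↦ hSD v (hrD j hj v hv).1).mono fun j hj ↦ (hX' j hj).subset, fun j hj ↦
    ⟨(hX' j hj).subset.trans (filter_subset _ _), (hT j hj).2.1.le.trans ?_⟩, hdeg'⟩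
  calc
    _ ≤ 256 * (#J : ℝ) ^ 4 * b * (4 * #(X' j)) := by
      gcongr
      linarith [hX j hj, (hX' j hj).card_le]
    _ = 1024 * (#J : ℝ) ^ 4 * b * #(X' j) := by ring

end PrivateCovers

section DyadicPigeonhole

variable {ι : Type*} {G : SimpleGraph V}

theorem exists_card_le_card_mul_card_fiber {α β : Type*} {s : Finset α} {t : Finset β} {f : α → β}
    (hf : ∀ a ∈ s, f a ∈ t) (ht : t.Nonempty) :
    ∃ y ∈ t, #s ≤ #t * #{a ∈ s | f a = y} := by
  obtain ⟨y, hy, hmax⟩ := exists_max_image t (fun y ↦ #{a ∈ s | f a = y}) ht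
  exact ⟨y, hy, (card_le_mul_card_image_of_maps_to hf _ hmax).trans_eq (mul_comm _ _)⟩

theorem exists_largePart_of_forall_exists {β : Type*} {J : Finset ι} {C : ι → Finset V}
    {t : Finset β} {R : β → ι → V → Prop} (ht : t.Nonempty)
    (hR : ∀ j ∈ J, ∀ v ∈ C j, ∃ y ∈ t, R y j v) :
    ∃ y ∈ t, ∃ J' ⊆ J, #J ≤ #t * #J' ∧ ∃ C' : ι → Finset V,
      ∀ j ∈ J', LargePart #t (C' j) (C j) ∧ ∀ v ∈ C' j, R y j v := by
  have : Nonempty β := ht.to_type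
  choose! f hft hf using hR
  choose! y hyt hy using fun j (hj : j ∈ J) ↦ exists_card_le_card_mul_card_fiber (hft j hj) ht
  obtain ⟨y₀, hy₀, hcard⟩ := exists_card_le_card_mul_card_fiber hyt ht
  refine ⟨y₀, hy₀, {j ∈ J | y j = y₀}, filter_subset _ _, hcard,
    fun j ↦ {v ∈ C j | f j v = y₀}, fun j hj ↦ ?_⟩
  obtain ⟨hjJ, rfl⟩ := mem_filter.1 hj
  refine ⟨⟨filter_subset _ _, by exact_mod_cast hy j hjJ⟩, fun v hv ↦ ?_⟩
  obtain ⟨hvC, hvf⟩ := mem_filter.1 hv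
  exact hvf ▸ hf j hjJ v hvC

theorem exists_almostRegular {D : Finset V} {J : Finset ι} {C : ι → Finset V} {a b : ℕ}
    (ha : 1 ≤ a) (hb : 2 ≤ b) (hD : #D < b ^ a) (hcov : ∀ j ∈ J, Covers G (D : Set V) (C j)) :
    ∃ r ≥ 1, ∃ J' ⊆ J, #J ≤ a * #J' ∧ ∃ C' : ι → Finset V, ∀ j ∈ J', LargePart a (C' j) (C j) ∧
      ∀ v ∈ C' j, r ≤ #(nbhdIn G {v} D) ∧ #(nbhdIn G {v} D) ≤ r * b := by
  have hscale : ∀ j ∈ J, ∀ v ∈ C j, ∃ i ∈ range a,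
      b ^ i ≤ #(nbhdIn G {v} D) ∧ #(nbhdIn G {v} D) ≤ b ^ i * b := by
    intro j hj v hv
    obtain ⟨d, hd, hdv⟩ := hcov j hj v hv
    have hpos : #(nbhdIn G {v} D) ≠ 0 :=
      card_ne_zero_of_mem (mem_nbhdIn_singleton.2 ⟨hd, hdv.symm⟩)
    refine ⟨Nat.log b #(nbhdIn G {v} D), mem_range.2 (Nat.log_lt_of_lt_pow hpos
      ((card_le_card (nbhdIn_subset _ _)).trans_lt hD)), Nat.pow_log_le_self b hpos, ?_⟩
    rw [← pow_succ]
    exact (Nat.lt_pow_succ_log_self hb _).le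
  obtain ⟨i, -, J', hJ', hcard, C', hC'⟩ := exists_largePart_of_forall_exists
    (R := fun i _ v ↦ b ^ i ≤ #(nbhdIn G {v} D) ∧ #(nbhdIn G {v} D) ≤ b ^ i * b)
    (nonempty_range_iff.2 (by omega)) hscale
  rw [card_range] at hcard hC'
  exact ⟨b ^ i, Nat.one_le_pow _ _ (by omega), J', hJ', hcard, C', hC'⟩

end DyadicPigeonhole

/-! ### Rainbow paths -/

section Paths

variable {ι : Type*} {G : SimpleGraph V}

/-- `z 0, …, z l` is an induced walk: two of its vertices are adjacent exactly when they are
consecutive. The values `z i` for `i > l` are junk. -/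
structure IsInducedPath (G : SimpleGraph V) (z : ℕ → V) (l : ℕ) : Prop where
  adj : ∀ i < l, G.Adj (z i) (z (i + 1))
  not_adj : ∀ i j, i + 1 < j → j ≤ l → ¬ G.Adj (z i) (z j)

/-- The vertices `z i` with `i ∈ s` lie in blocks of `A` of distinct colours `q i`, all in `Q`. -/
structure RainbowOn {α : Type*} (A : ι → Finset V) (Q : Finset ι) (z : α → V) (q : α → ι)
    (s : Set α) : Prop where
  color_mem : ∀ i ∈ s, q i ∈ Q
  mem_block : ∀ i ∈ s, z i ∈ A (q i)
  color_injOn : s.InjOn q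

/-- A walk with a chord can be shortcut. -/
theorem exists_isInducedPath_comp {z : ℕ → V} {n : ℕ} (hz : ∀ i < n, G.Adj (z i) (z (i + 1))) :
    ∃ (l : ℕ) (φ : ℕ → ℕ), StrictMono φ ∧ φ 0 = 0 ∧ φ l = n ∧ IsInducedPath G (z ∘ φ) l := by
  induction n using Nat.strong_induction_on generalizing z with
  | _ n ih =>
    by_cases hchord : ∃ i j, i + 1 < j ∧ j ≤ n ∧ G.Adj (z i) (z j)
    · obtain ⟨i, j, hij, hjn, hadj⟩ := hchord
      let ψ : ℕ → ℕ := fun a ↦ if a ≤ i then a else a + (j - i - 1)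
      have hψ : StrictMono ψ := fun a b hab ↦ by grind
      have hwalk : ∀ a < n - (j - i - 1), G.Adj ((z ∘ ψ) a) ((z ∘ ψ) (a + 1)) := fun a ha ↦ by
        obtain hai | rfl | hai := lt_trichotomy a i
        · simpa [ψ, hai.le, Nat.succ_le_of_lt hai] using hz a (by omega)
        · simpa [ψ, show a + 1 + (j - a - 1) = j by omega] using hadj
        · simpa [ψ, hai.not_ge, show ¬ a + 1 ≤ i by omega, add_right_comm] using
            hz (a + (j - i - 1)) (by omega)
      obtain ⟨l, φ, hφ, hφ0, hφl, hpath⟩ := ih _ (by omega) hwalk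
      refine ⟨l, ψ ∘ φ, hψ.comp hφ, by simp [ψ, hφ0], ?_, hpath⟩
      rw [Function.comp_apply, hφl]
      grind
    · push Not at hchord
      exact ⟨n, id, strictMono_id, rfl, rfl, hz, hchord⟩

theorem adj_update {g : ℕ → V} {n : ℕ} {u : V} (hg : ∀ i < n, G.Adj (g i) (g (i + 1)))
    (hu : G.Adj (g n) u) :
    ∀ i < n + 1, G.Adj (Function.update g (n + 1) u i) (Function.update g (n + 1) u (i + 1)) := by
  intro i hi
  rw [Function.update_of_ne hi.ne]
  obtain rfl | hin := eq_or_ne i n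
  · rwa [Function.update_self]
  · rw [Function.update_of_ne (by omega)]
    exact hg i (by omega)

theorem exists_walk_of_covers {M : ℕ → Finset V} {n : ℕ}
    (hM : ∀ i < n, Covers G (M i : Set V) (M (i + 1))) {r : V} (hr : r ∈ M n) :
    ∃ g : ℕ → V, g n = r ∧ (∀ i ≤ n, g i ∈ M i) ∧ ∀ i < n, G.Adj (g i) (g (i + 1)) := by
  induction n generalizing r with
  | zero => exact ⟨fun _ ↦ r, rfl, fun i hi ↦ by rwa [Nat.le_zero.1 hi], by simp⟩
  | succ n ih =>
    obtain ⟨r', hr', hadj⟩ := hM n (Nat.lt_succ_self n) r hr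
    obtain ⟨g, hgn, hgM, hg⟩ := ih (fun i hi ↦ hM i (by omega)) hr'
    refine ⟨Function.update g (n + 1) r, by simp, fun i hi ↦ ?_, adj_update hg (hgn ▸ hadj)⟩
    obtain rfl | hin := eq_or_ne i (n + 1)
    · rwa [Function.update_self]
    · rw [Function.update_of_ne hin]
      exact hgM i (by omega)

/-- The sequence `g s, …, g 1, g 0, h 1, h 2, …`. -/
def splice {α : Type*} (s : ℕ) (g h : ℕ → α) (p : ℕ) : α :=
  if p ≤ s then g (s - p) else h (p - s)

section Splice

variable {α : Type*} {s t : ℕ}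

theorem splice_of_le {g h : ℕ → α} {p : ℕ} (hp : p ≤ s) : splice s g h p = g (s - p) :=
  if_pos hp

theorem splice_of_lt {g h : ℕ → α} {p : ℕ} (hp : s < p) : splice s g h p = h (p - s) :=
  if_neg hp.not_ge

theorem splice_of_ge {g h : ℕ → α} (h0 : g 0 = h 0) {p : ℕ} (hp : s ≤ p) :
    splice s g h p = h (p - s) := by
  obtain rfl | hlt := hp.eq_or_lt
  · rw [splice_of_le le_rfl, Nat.sub_self, h0]
  · exact splice_of_lt hlt

theorem adj_splice {g h : ℕ → V} (h0 : g 0 = h 0) (hg : ∀ i < s, G.Adj (g i) (g (i + 1)))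
    (hh : ∀ i < t, G.Adj (h i) (h (i + 1))) :
    ∀ p < s + t, G.Adj (splice s g h p) (splice s g h (p + 1)) := by
  intro p hp
  obtain hps | hps := lt_or_ge p s
  · rw [splice_of_le hps.le, splice_of_le hps, show s - p = s - (p + 1) + 1 by omega]
    exact (hg _ (by omega)).symm
  · rw [splice_of_ge h0 hps, splice_of_ge h0 (by omega), Nat.sub_add_comm hps]
    exact hh _ (by omega)

theorem not_adj_splice {g h : ℕ → V} (h0 : g 0 = h 0)
    (hg : ∀ i j, i + 1 < j → j < s → ¬ G.Adj (g i) (g j))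
    (hh : ∀ i j, i + 1 < j → j ≤ t → ¬ G.Adj (h i) (h j))
    (hgh : ∀ i ∈ Set.Ioo 0 s, ∀ j ∈ Set.Ioc 0 t, ¬ G.Adj (g i) (h j)) :
    ∀ i j, 0 < i → i + 1 < j → j ≤ s + t → ¬ G.Adj (splice s g h i) (splice s g h j) := by
  intro i j hi hij hj
  obtain hjs | hjs := le_or_gt j s
  · rw [splice_of_le hjs, splice_of_le (by omega), G.adj_comm]
    exact hg _ _ (by omega) (by omega)
  · rw [splice_of_lt hjs]
    obtain his | his := lt_or_ge i s
    · rw [splice_of_le his.le]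
      exact hgh _ ⟨by omega, by omega⟩ _ ⟨by omega, by omega⟩
    · rw [splice_of_ge h0 his]
      exact hh _ _ (by omega) (by omega)

end Splice

namespace RainbowOn

variable {α β : Type*} {A : ι → Finset V} {Q Q₁ Q₂ : Finset ι} {z z' : α → V} {q q' : α → ι}
  {s t : Set α}

theorem mono (h : RainbowOn A Q₁ z q s) (hQ : Q₁ ⊆ Q₂) : RainbowOn A Q₂ z q s :=
  ⟨fun i hi ↦ hQ (h.color_mem i hi), h.mem_block, h.color_injOn⟩

theorem congr (h : RainbowOn A Q z q s) (hz : s.EqOn z z') (hq : s.EqOn q q') :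
    RainbowOn A Q z' q' s :=
  ⟨fun i hi ↦ hq hi ▸ h.color_mem i hi, fun i hi ↦ hq hi ▸ hz hi ▸ h.mem_block i hi,
    hq.injOn_iff.1 h.color_injOn⟩

theorem comp (h : RainbowOn A Q z q s) {t : Set β} {φ : β → α} (hφ : t.InjOn φ)
    (hts : Set.MapsTo φ t s) : RainbowOn A Q (z ∘ φ) (q ∘ φ) t :=
  ⟨fun _ hi ↦ h.color_mem _ (hts hi), fun _ hi ↦ h.mem_block _ (hts hi),
    h.color_injOn.comp hφ hts⟩

theorem union (hs : RainbowOn A Q₁ z q s) (ht : RainbowOn A Q₂ z q t) (hQ : Disjoint Q₁ Q₂) :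
    RainbowOn A (Q₁ ∪ Q₂) z q (s ∪ t) := by
  have hne : ∀ i ∈ s, ∀ j ∈ t, q i ≠ q j := fun i hi j hj ↦
    disjoint_iff_ne.1 hQ _ (hs.color_mem i hi) _ (ht.color_mem j hj)
  refine ⟨?_, ?_, ?_⟩
  · rintro i (hi | hi)
    exacts [mem_union_left _ (hs.color_mem i hi), mem_union_right _ (ht.color_mem i hi)]
  · rintro i (hi | hi)
    exacts [hs.mem_block i hi, ht.mem_block i hi]
  · rintro i (hi | hi) j (hj | hj) hij
    exacts [hs.color_injOn hi hj hij, (hne i hi j hj hij).elim, (hne j hj i hi hij.symm).elim,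
      ht.color_injOn hi hj hij]

theorem splice {g h : ℕ → V} {c d : ℕ → ι} {s t : ℕ} (hg : RainbowOn A Q₁ g c (Set.Iio s))
    (hh : RainbowOn A Q₂ h d (Set.Ioc 0 t)) (hQ : Disjoint Q₁ Q₂) :
    RainbowOn A (Q₁ ∪ Q₂) (splice s g h) (splice s c d) (Set.Ioc 0 (s + t)) := by
  rw [← Set.Ioc_union_Ioc_eq_Ioc (Nat.zero_le s) (Nat.le_add_right s t)]
  have hleft : RainbowOn A Q₁ (g ∘ (s - ·)) (c ∘ (s - ·)) (Set.Ioc 0 s) :=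
    hg.comp (fun i hi j hj hij ↦ by simp only [Set.mem_Ioc] at hi hj hij; omega)
      fun i hi ↦ by simp only [Set.mem_Ioc, Set.mem_Iio] at hi ⊢; omega
  have hright : RainbowOn A Q₂ (h ∘ (· - s)) (d ∘ (· - s)) (Set.Ioc s (s + t)) :=
    hh.comp (fun i hi j hj hij ↦ by simp only [Set.mem_Ioc] at hi hj hij; omega)
      fun i hi ↦ by simp only [Set.mem_Ioc] at hi ⊢; omega
  exact (hleft.congr (fun i hi ↦ (splice_of_le hi.2).symm)
    fun i hi ↦ (splice_of_le hi.2).symm).union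
    (hright.congr (fun i hi ↦ (splice_of_lt hi.1).symm) fun i hi ↦ (splice_of_lt hi.1).symm) hQ

end RainbowOn

namespace Levelling

variable {A : ι → Finset V} {x : V} {b : ι} {Q : Finset ι}

theorem exists_walk (L : Levelling G A x b Q) {r : V} (hr : r ∈ L.top) :
    ∃ g : ℕ → V, g 0 = x ∧ g L.height = r ∧ (∀ i ≤ L.height, g i ∈ L.level i) ∧
      ∀ i < L.height, G.Adj (g i) (g (i + 1)) := by
  obtain ⟨g, hgr, hgL, hg⟩ := exists_walk_of_covers L.covers hr
  exact ⟨g, mem_singleton.1 (L.level_zero_subset (hgL 0 (Nat.zero_le _))), hgr, hgL, hg⟩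

theorem rainbowOn (L : Levelling G A x b Q) {g : ℕ → V} (hg : ∀ i ≤ L.height, g i ∈ L.level i) :
    RainbowOn A (insert b Q) g L.color (Set.Iic L.height) :=
  ⟨fun _ hi ↦ L.color_mem_insert hi, fun i hi ↦ L.level_subset i hi (hg i hi), L.color_injOn⟩

theorem rainbowOn_Ioc (L : Levelling G A x b Q) {g : ℕ → V}
    (hg : ∀ i ≤ L.height, g i ∈ L.level i) : RainbowOn A Q g L.color (Set.Ioc 0 L.height) :=
  ⟨fun i hi ↦ L.color_mem i hi.1 hi.2, fun i hi ↦ L.level_subset i hi.2 (hg i hi.2),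
    L.color_injOn.mono fun _ hi ↦ hi.2⟩

theorem rainbowOn_update (L : Levelling G A x b Q) {g : ℕ → V}
    (hg : ∀ i ≤ L.height, g i ∈ L.level i) (u : V) :
    RainbowOn A (insert b Q) (Function.update g (L.height + 1) u) L.color
      (Set.Iio (L.height + 1)) := by
  rw [← Order.succ_eq_add_one, Order.Iio_succ]
  refine L.rainbowOn fun i hi ↦ ?_
  rw [Order.succ_eq_add_one, Function.update_of_ne (by omega)]
  exact hg i hi

end Levelling

/-- An induced path `z 0, …, z l` from `x` to `y` which is rainbow except for its first vertex,
with colours `q i` in `Q`, and whose internal vertices have no neighbours in `S`. -/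
structure IsLink (G : SimpleGraph V) (A : ι → Finset V) (Q : Finset ι) (S : Set V) (x y : V)
    (l : ℕ) (z : ℕ → V) (q : ℕ → ι) : Prop where
  start : z 0 = x
  finish : z l = y
  isInducedPath : IsInducedPath G z l
  rainbowOn : RainbowOn A Q z q (Set.Ioc 0 l)
  not_adj : ∀ i ∈ Set.Ioo 0 l, ∀ v ∈ S, ¬ G.Adj (z i) v

/-- `x` and `y` are joined by a link of length `l`. -/
def Linked (G : SimpleGraph V) (A : ι → Finset V) (Q : Finset ι) (S : Set V) (x y : V) (l : ℕ) :
    Prop :=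
  ∃ z q, IsLink G A Q S x y l z q

theorem exists_linked_of_walk {A : ι → Finset V} {Q : Finset ι} {S : Set V} {n : ℕ} {z : ℕ → V}
    {q : ℕ → ι} (hn : 0 < n) (hz : ∀ i < n, G.Adj (z i) (z (i + 1)))
    (hq : RainbowOn A Q z q (Set.Ioc 0 n)) (hS : ∀ i ∈ Set.Ioo 0 n, ∀ v ∈ S, ¬ G.Adj (z i) v) :
    ∃ l, 0 < l ∧ l ≤ n ∧ Linked G A Q S (z 0) (z n) l := by
  obtain ⟨l, φ, hφ, hφ0, hφl, hpath⟩ := exists_isInducedPath_comp hz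
  have hl : 0 < l := hφ.lt_iff_lt.1 (by omega)
  have hpos : ∀ {i}, 0 < i → 0 < φ i := fun hi ↦ hφ0 ▸ hφ hi
  refine ⟨l, hl, hφl ▸ hφ.le_apply, z ∘ φ, q ∘ φ, by simp [hφ0], by simp [hφl], hpath,
    hq.comp hφ.injective.injOn fun i hi ↦ ⟨hpos hi.1, hφl ▸ hφ.monotone hi.2⟩,
    fun i hi ↦ hS (φ i) ⟨hpos hi.1, hφl ▸ hφ hi.2⟩⟩

/-- The walk goes down the first levelling from `x` to the common root and up the second one. -/
theorem Levelling.exists_linked {A : ι → Finset V} {w : V} {i₀ : ι} {Q₁ Q₂ : Finset ι}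
    (L₁ : Levelling G A w i₀ Q₁) (L₂ : Levelling G A w i₀ Q₂) (hi₀ : i₀ ∉ Q₂)
    (hQ : Disjoint Q₁ Q₂) {S : Set V} {Y : Finset V} (hY : Y ⊆ L₁.top)
    (hYS : Anticomplete G (Y : Set V) S) (hS₁ : Anticomplete G (L₁.below : Set V) S)
    (hS₂ : Anticomplete G (L₂.below : Set V) S) {x y : V} (hx : ∃ r ∈ Y, G.Adj r x)
    (hy : y ∈ L₂.top) :
    ∃ l, 0 < l ∧ l ≤ L₁.height + 1 + L₂.height ∧ Linked G A (insert i₀ (Q₁ ∪ Q₂)) S x y l := by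
  obtain ⟨r, hrY, hrx⟩ := hx
  obtain ⟨g, hg0, hgr, hgL, hg⟩ := L₁.exists_walk (hY hrY)
  obtain ⟨h, hh0, hhy, hhL, hh⟩ := L₂.exists_walk hy
  set g' := Function.update g (L₁.height + 1) x
  have hg'i : ∀ i ≤ L₁.height, g' i = g i := fun i hi ↦ Function.update_of_ne (by omega) _ _
  have hg'x : g' (L₁.height + 1) = x := Function.update_self _ _ _
  have h0 : g' 0 = h 0 := by rw [hg'i 0 (Nat.zero_le _), hg0, hh0]
  have hrainbow := (L₁.rainbowOn_update hgL x).splice (L₂.rainbowOn_Ioc hhL)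
    (disjoint_insert_left.2 ⟨hi₀, hQ⟩)
  rw [insert_union] at hrainbow
  obtain ⟨l, hl, hln, hlink⟩ := exists_linked_of_walk (S := S) (by omega)
    (adj_splice h0 (adj_update hg (hgr ▸ hrx)) hh) hrainbow fun i hi v hv ↦ by
      obtain his | his := le_or_gt i (L₁.height + 1)
      · obtain ⟨p, hp⟩ : ∃ p, L₁.height + 1 - i = p := ⟨_, rfl⟩
        have hip : p ≤ L₁.height := by have := hi.1; omega
        rw [splice_of_le his, hp, hg'i p hip]
        obtain rfl | hlt := hip.eq_or_lt
        · exact hgr ▸ hYS r hrY v hv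
        · exact hS₁ _ (L₁.level_subset_below hlt (hgL p hip)) v hv
      · have hlt : i - (L₁.height + 1) < L₂.height := by have := hi.2; omega
        rw [splice_of_lt his]
        exact hS₂ _ (L₂.level_subset_below hlt (hhL _ hlt.le)) v hv
  refine ⟨l, hl, hln, ?_⟩
  rwa [splice_of_le (Nat.zero_le _), Nat.sub_zero, hg'x,
    splice_of_ge h0 (Nat.le_add_right _ _), Nat.add_sub_cancel_left, hhy] at hlink

end Paths

/-! ### Linking a vertex to private covers -/

section LinkedCovers

variable {ι : Type*} {G : SimpleGraph V} {A : ι → Finset V} {I : Finset ι} {Γ m lam : ℝ} {k : ℕ}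

/-- A blockade of width at least `m` and linkage at most `lam`. -/
structure IsSparseBlockade (G : SimpleGraph V) (A : ι → Finset V) (I : Finset ι) (m lam : ℝ) :
    Prop where
  pairwiseDisjoint : (I : Set ι).PairwiseDisjoint A
  le_card : ∀ i ∈ I, m ≤ #(A i)
  maxDegLE : (I : Set ι).Pairwise fun i j ↦ MaxDegLE G (A i) (A j) lam

theorem Levelling.exists_top_subset {x : V} {b : ι} {Q : Finset ι} (L : Levelling G A x b Q)
    (hL : 1 ≤ L.height) : ∃ i ∈ Q, L.top ⊆ A i :=
  ⟨L.color L.height, L.color_mem _ hL le_rfl, L.level_subset _ le_rfl⟩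

theorem Coherent.exists_root (hG : Coherent G Γ Γ) (hΓ : 0 < Γ) (hk : 1 ≤ k)
    (hA : IsSparseBlockade G A I m lam) (hlam : 0 ≤ lam) {i₀ : ι} (hi₀ : i₀ ∈ I)
    (hmI : 64 * #I * Γ ≤ m) (hk' : #(A i₀) ≤ (m / (16 * Γ) / 2) ^ k) :
    ∃ x ∈ A i₀, ∀ Q ⊆ I.erase i₀, #Q = k → ∀ J ⊆ I.erase i₀, Disjoint Q J →
      ∀ (C : ι → Finset V) (R : ℝ), 0 < R → (∀ j ∈ J, LargePart R (C j) (A j)) →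
      lam * (R * 4 ^ (k + 1)) ≤ 1 → R * (4 * Γ) ≤ m →
      ∃ L : Levelling G A x i₀ Q, 1 ≤ L.height ∧ L.height ≤ k ∧ ∃ J' ⊆ J,
        #J ≤ 2 ^ k * #J' ∧ ∃ C' : ι → Finset V,
          ∀ j ∈ J', LargePart (4 ^ (k + 1)) (C' j) (C j) ∧ L.Reaches (C' j) := by
  have hI1 : (1 : ℝ) ≤ #I := by exact_mod_cast card_pos.2 ⟨i₀, hi₀⟩
  have hIΓ : Γ ≤ #I * Γ := le_mul_of_one_le_left hΓ.le hI1
  obtain ⟨B, hBA, hexp⟩ := hG.exists_expandingOn hΓ hA.pairwiseDisjoint hA.le_card (by linarith)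
    (by linarith)
  have hB : ∀ i ∈ I, 16 * Γ ≤ #(B i) := fun i hi ↦ by
    linarith [hA.le_card i hi, (hBA i hi).card_le]
  have hB₀ : (0 : ℝ) < #(B i₀) := by linarith [hB i₀ hi₀]
  obtain ⟨x, hx⟩ := card_pos.1 (by exact_mod_cast hB₀ : 0 < #(B i₀))
  have hxA : {x} ⊆ A i₀ := singleton_subset_iff.2 ((hBA i₀ hi₀).subset hx)
  refine ⟨x, (hBA i₀ hi₀).subset hx, fun Q hQ hQk J hJ hQJ C R hR hC hlamR hm ↦ ?_⟩
  have hQI : Q ⊆ I := hQ.trans (erase_subset _ _)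
  have hJI : J ⊆ I := hJ.trans (erase_subset _ _)
  have hsize : ∀ j ∈ J, 4 * Γ ≤ #(C j) := fun j hj ↦
    le_of_mul_le_mul_left ((hm.trans (hA.le_card j (hJI hj))).trans (hC j hj).card_le) hR
  have hlamR' : lam * R ≤ (4 ^ (k + 1))⁻¹ := by
    rwa [← one_div, le_div_iff₀ (by positivity), mul_assoc]
  have hdisj : ∀ i ∈ Q, ∀ j ∈ J, Disjoint (B i) (C j) := fun i hi j hj ↦
    (hA.pairwiseDisjoint (hQI hi) (hJI hj) (disjoint_iff_ne.1 hQJ i hi j hj)).mono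
      (hBA i (hQI hi)).subset (hC j hj).subset
  have hdeg : ∀ j ∈ J, MaxDegLE G {x} (C j) (4 ^ (k + 1))⁻¹ := fun j hj ↦
    ((hC j hj).maxDegLE hlam ((hA.maxDegLE hi₀ (hJI hj)
      (ne_of_mem_erase (hJ hj)).symm).mono_left hxA)).mono hlamR'
  subst hQk
  obtain ⟨L, h1, hLQ, J', hJ', hcard, hL⟩ := hG.exists_levelling
    (fun h ↦ notMem_erase i₀ I (hQ h)) (card_pos.1 hk) (fun j hj ↦ hB j (hQI hj))
    (hexp.mono (insert_subset hi₀ hQI))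
    ((le_div_iff₀ (by positivity)).2 (by linarith))
    (by exact_mod_cast card_le_card (hBA i₀ hi₀).subset) hk' hx hsize hdisj hdeg
  have hBA' : ∀ j ∈ insert i₀ Q, B j ⊆ A j := fun j hj ↦
    (hBA j (insert_subset hi₀ hQI hj)).subset
  exact ⟨L.mono subset_rfl hBA', h1, hLQ, J', hJ', hcard, fun j ↦ L.fresh (C j), fun j hj ↦
    ⟨hL j hj, (L.reaches_fresh (C j)).map_mono subset_rfl hBA'⟩⟩

theorem Coherent.exists_levelling_pair (hG : Coherent G Γ Γ) (hΓ : 0 < Γ) (hk : 1 ≤ k)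
    (hA : IsSparseBlockade G A I m lam) {i₀ : ι} {I₁ I₂ I₃ : Finset ι} (hi₀ : i₀ ∈ I)
    (hI₁ : I₁ ⊆ I.erase i₀) (hI₂ : I₂ ⊆ I.erase i₀) (hI₃ : I₃ ⊆ I.erase i₀) (hk₁ : #I₁ = k)
    (hk₂ : #I₂ = k) (h₁₃ : Disjoint I₁ I₃) (h₂₃ : Disjoint I₂ I₃)
    (hlam : 0 ≤ lam) (hlam' : lam * 16 ^ (k + 1) ≤ 1) (hm : 4 ^ (k + 2) * Γ ≤ m)
    (hmI : 64 * #I * Γ ≤ m) (hk' : #(A i₀) ≤ (m / (16 * Γ) / 2) ^ k) :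
    ∃ (w : V) (L₁ : Levelling G A w i₀ I₁) (L₂ : Levelling G A w i₀ I₂),
      L₁.height ∈ Set.Icc 1 k ∧ L₂.height ∈ Set.Icc 1 k ∧ ∃ J ⊆ I₃, #I₃ ≤ 4 ^ k * #J ∧
        ∃ C : ι → Finset V, ∀ j ∈ J, LargePart (16 ^ (k + 1)) (C j) (A j) ∧
          L₁.Reaches (C j) ∧ L₂.Reaches (C j) := by
  have h4 : (1 : ℝ) ≤ 4 ^ (k + 1) := one_le_pow₀ (by norm_num)
  have h16 : (16 : ℝ) ^ (k + 1) = 4 ^ (k + 1) * 4 ^ (k + 1) := by rw [← mul_pow]; norm_num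
  have hm4 : 4 ^ (k + 1) * (4 * Γ) ≤ m := by rwa [← mul_assoc, ← pow_succ]
  obtain ⟨w, -, hroot⟩ := hG.exists_root hΓ hk hA hlam hi₀ hmI hk'
  obtain ⟨L₁, h1, h1k, J₁, hJ₁, hcard₁, C₁, hC₁⟩ := hroot I₁ hI₁ hk₁ I₃ hI₃ h₁₃ A 1 one_pos
    (fun j _ ↦ LargePart.refl (A j))
    ((mul_le_mul_of_nonneg_left (by nlinarith) hlam).trans hlam') (by nlinarith)
  obtain ⟨L₂, h2, h2k, J, hJ, hcard₂, C, hC⟩ := hroot I₂ hI₂ hk₂ J₁ (hJ₁.trans hI₃)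
    (h₂₃.mono_right hJ₁) C₁ (4 ^ (k + 1)) (by positivity) (fun j hj ↦ (hC₁ j hj).1)
    (h16 ▸ hlam') hm4
  refine ⟨w, L₁, L₂, ⟨h1, h1k⟩, ⟨h2, h2k⟩, J, hJ.trans hJ₁, ?_, C, fun j hj ↦ ?_⟩
  · calc #I₃ ≤ 2 ^ k * #J₁ := hcard₁
      _ ≤ 2 ^ k * (2 ^ k * #J) := Nat.mul_le_mul_left _ hcard₂
      _ = 4 ^ k * #J := by rw [← mul_assoc, ← mul_pow]; norm_num
  · have hj₁ := hC₁ j (hJ hj)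
    exact ⟨h16 ▸ LargePart.trans (by positivity) hj₁.1 (hC j hj).1,
      hj₁.2.mono (hC j hj).1.subset, (hC j hj).2⟩

theorem exists_graded_almostRegular {D₁ D₂ : Finset V} {J : Finset ι} {C : ι → Finset V}
    {a b N : ℕ} (ha : 1 ≤ a) (hb : 2 ≤ b) (hN : 1 ≤ N) (hD₂ : #D₂ < b ^ a) (hJ : a * N ≤ #J)
    (hC : ∀ j ∈ J, (C j).Nonempty) (hcov₁ : ∀ j ∈ J, Covers G (D₁ : Set V) (C j))
    (hcov₂ : ∀ j ∈ J, Covers G (D₂ : Set V) (C j))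
    (hdeg : ∀ j ∈ J, MaxDegLE G D₁ (C j) (4 * a)⁻¹) :
    ∃ r ≥ 1, ∃ J' ⊆ J, #J' = N ∧ ∃ j₀ ∈ J', ∃ Y ⊆ D₁, ∃ E : ι → Finset V,
      (∀ j ∈ J', LargePart (4 * a) (E j) (C j) ∧
        ∀ v ∈ E j, r ≤ #(nbhdIn G {v} D₂) ∧ #(nbhdIn G {v} D₂) ≤ r * b) ∧
      Covers G (Y : Set V) (E j₀) ∧ ∀ j ∈ J', j ≠ j₀ → Anticomplete G (Y : Set V) (E j) := by
  obtain ⟨r, hr, J₁, hJ₁, hcard, C', hC'⟩ := exists_almostRegular ha hb hD₂ hcov₂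
  obtain ⟨J', hJ', rfl⟩ := exists_subset_card_eq
    (Nat.le_of_mul_le_mul_left (hJ.trans hcard) ha : N ≤ #J₁)
  have hJ'J := hJ'.trans hJ₁
  have ha0 : (0 : ℝ) < a := by exact_mod_cast ha
  obtain ⟨j₀, hj₀, Y, hY, hYj₀, hYj⟩ := exists_subset_largePart_nbhdIn (card_pos.1 hN)
    (fun j hj ↦ (hC' j (hJ' hj)).1.nonempty (hC j (hJ'J hj)))
    (fun j hj ↦ (hcov₁ j (hJ'J hj)).mono_right (hC' j (hJ' hj)).1.subset)
    (fun j hj ↦ ((hC' j (hJ' hj)).1.maxDegLE (by positivity) (hdeg j (hJ'J hj))).mono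
      (by field_simp; rfl))
  let E : ι → Finset V := fun j ↦
    if j = j₀ then nbhdIn G Y (C' j₀) else C' j \ nbhdIn G Y (C' j)
  have hEj₀ : E j₀ = nbhdIn G Y (C' j₀) := if_pos rfl
  have hEj : ∀ j, j ≠ j₀ → E j = C' j \ nbhdIn G Y (C' j) := fun j hj ↦ if_neg hj
  have hE : ∀ j ∈ J', LargePart 4 (E j) (C' j) := fun j hj ↦ by
    rcases eq_or_ne j j₀ with rfl | hne
    · exact hEj₀ ▸ hYj₀
    · exact hEj j hne ▸ (hYj j hj).mono (by norm_num)
  refine ⟨r, hr, J', hJ'J, rfl, j₀, hj₀, Y, hY, E, fun j hj ↦ ⟨?_, fun v hv ↦ ?_⟩, ?_,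
    fun j _ hne ↦ ?_⟩
  · exact mul_comm (4 : ℝ) a ▸ LargePart.trans ha0.le (hC' j (hJ' hj)).1 (hE j hj)
  · exact (hC' j (hJ' hj)).2 v ((hE j hj).subset hv)
  · exact hEj₀ ▸ covers_nbhdIn Y (C' j₀)
  · exact hEj j hne ▸ anticomplete_sdiff_nbhdIn Y (C' j)

theorem exists_color_partition {n k : ℕ} (hI : 1 + 2 * k + n ≤ #I) :
    ∃ i₀ ∈ I, ∃ I₁ ⊆ I.erase i₀, ∃ I₂ ⊆ I.erase i₀, ∃ I₃ ⊆ I.erase i₀, #I₁ = k ∧ #I₂ = k ∧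
      n ≤ #I₃ ∧ Disjoint I₁ I₂ ∧ Disjoint I₁ I₃ ∧ Disjoint I₂ I₃ := by
  obtain ⟨i₀, hi₀⟩ := card_pos.1 (by omega : 0 < #I)
  have hcard := card_erase_of_mem hi₀
  obtain ⟨I₁, hI₁, hk₁⟩ := exists_subset_card_eq (by omega : k ≤ #(I.erase i₀))
  have hcard₁ := card_sdiff_of_subset hI₁
  obtain ⟨I₂, hI₂, hk₂⟩ := exists_subset_card_eq (by omega : k ≤ #(I.erase i₀ \ I₁))
  have hcard₂ := card_sdiff_of_subset hI₂
  exact ⟨i₀, hi₀, I₁, hI₁, I₂, hI₂.trans sdiff_subset, (I.erase i₀ \ I₁) \ I₂,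
    sdiff_subset.trans sdiff_subset, hk₁, hk₂, by omega, disjoint_sdiff.mono_right hI₂,
    disjoint_sdiff.mono_right sdiff_subset, disjoint_sdiff⟩

/-- The levellings `L₁` and `L₂` reach the sets `E j`, and the part `Y` of the last level of `L₁`
tells `E j₀` apart from the others: it covers `E j₀` and sees no other `E j`. -/
structure IsGradedPair {w : V} {i₀ : ι} {I₁ I₂ : Finset ι} (L₁ : Levelling G A w i₀ I₁)
    (L₂ : Levelling G A w i₀ I₂) (J : Finset ι) (j₀ : ι) (Y : Finset V) (E : ι → Finset V) :
    Prop where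
  reaches_left : ∀ j ∈ J, L₁.Reaches (E j)
  reaches_right : ∀ j ∈ J, L₂.Reaches (E j)
  subset : Y ⊆ L₁.top
  covers : Covers G (Y : Set V) (E j₀)
  anticomplete : ∀ j ∈ J, j ≠ j₀ → Anticomplete G (Y : Set V) (E j)

theorem IsGradedPair.exists_linked {w : V} {i₀ : ι} {I₁ I₂ : Finset ι}
    {L₁ : Levelling G A w i₀ I₁} {L₂ : Levelling G A w i₀ I₂} {J : Finset ι} {j₀ : ι}
    {Y : Finset V} {E : ι → Finset V} (h : IsGradedPair L₁ L₂ J j₀ Y E) (hi₀ : i₀ ∉ I₂)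
    (h₁₂ : Disjoint I₁ I₂) {X : ι → Finset V} (hX : ∀ j ∈ J, X j ⊆ E j) {x y : V}
    (hx : x ∈ E j₀) (hy : y ∈ L₂.top) :
    ∃ l, 0 < l ∧ l ≤ L₁.height + 1 + L₂.height ∧
      Linked G A (insert i₀ (I₁ ∪ I₂)) ((J.erase j₀).biUnion X : Finset V) x y l := by
  have hS : ∀ D : Finset V, (∀ j ∈ J, j ≠ j₀ → Anticomplete G (D : Set V) (E j)) →
      Anticomplete G (D : Set V) ((J.erase j₀).biUnion X : Finset V) := fun D hD d hd v hv ↦ by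
    obtain ⟨j, hj, hvj⟩ := mem_biUnion.1 (mem_coe.1 hv)
    exact hD j (mem_of_mem_erase hj) (ne_of_mem_erase hj) d hd v
      (hX j (mem_of_mem_erase hj) hvj)
  exact L₁.exists_linked L₂ hi₀ h₁₂ h.subset (hS _ h.anticomplete)
    (hS _ fun j hj _ ↦ (h.reaches_left j hj).anticomplete)
    (hS _ fun j hj _ ↦ (h.reaches_right j hj).anticomplete) (h.covers x hx) hy

theorem Coherent.exists_isGradedPair [Fintype V] (hG : Coherent G Γ Γ) (hΓ : 0 < Γ)
    (hk : 1 ≤ k) {a b N : ℕ} (ha : 1 ≤ a) (hb : 2 ≤ b) (hN : 1 ≤ N)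
    (hV : Fintype.card V < b ^ a) (hA : IsSparseBlockade G A I m lam)
    (hI : 1 + 2 * k + 4 ^ k * (a * N) ≤ #I) (hlam : 0 ≤ lam)
    (hlam' : lam * (16 ^ (k + 1) * (4 * a)) ≤ 1) (hm : 4 ^ (k + 2) * Γ ≤ m)
    (hmI : 64 * #I * Γ ≤ m) (hk' : Fintype.card V ≤ (m / (16 * Γ) / 2) ^ k) :
    ∃ i₀ ∈ I, ∃ I₁ ⊆ I.erase i₀, ∃ I₂ ⊆ I.erase i₀, ∃ J ⊆ I.erase i₀, Disjoint I₁ I₂ ∧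
      Disjoint (I₁ ∪ I₂) J ∧ #J = N ∧ ∃ (w : V) (L₁ : Levelling G A w i₀ I₁)
        (L₂ : Levelling G A w i₀ I₂), L₁.height ∈ Set.Icc 1 k ∧ L₂.height ∈ Set.Icc 1 k ∧
        ∃ j₀ ∈ J, ∃ (Y : Finset V) (E : ι → Finset V) (r : ℕ), IsGradedPair L₁ L₂ J j₀ Y E ∧
          1 ≤ r ∧ ∀ j ∈ J, LargePart (16 ^ (k + 1) * (4 * a)) (E j) (A j) ∧
            ∀ v ∈ E j, r ≤ #(nbhdIn G {v} L₂.top) ∧ #(nbhdIn G {v} L₂.top) ≤ r * b := by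
  have ha1 : (1 : ℝ) ≤ a := by exact_mod_cast ha
  have hlam4a : lam * 16 ^ (k + 1) ≤ (4 * (a : ℝ))⁻¹ := by
    rwa [← one_div, le_div_iff₀ (by positivity), mul_assoc]
  obtain ⟨i₀, hi₀, I₁, hI₁, I₂, hI₂, I₃, hI₃, hk₁, hk₂, hcard₃, h₁₂, h₁₃, h₂₃⟩ :=
    exists_color_partition hI
  obtain ⟨w, L₁, L₂, hL₁, hL₂, J₀, hJ₀, hcard₀, C, hC⟩ := hG.exists_levelling_pair hΓ hk hA hi₀
    hI₁ hI₂ hI₃ hk₁ hk₂ h₁₃ h₂₃ hlam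
    (hlam4a.trans (inv_le_one_of_one_le₀ (by linarith))) hm hmI
    (le_trans (by exact_mod_cast card_le_univ _) hk')
  obtain ⟨c, hc, htop⟩ := L₁.exists_top_subset hL₁.1
  have hdeg : ∀ j ∈ I₃, MaxDegLE G L₁.top (A j) lam := fun j hj ↦
    (hA.maxDegLE (mem_of_mem_erase (hI₁ hc)) (mem_of_mem_erase (hI₃ hj))
      (disjoint_left.1 h₁₃ hc <| · ▸ hj)).mono_left htop
  have hmpos : 0 < m := lt_of_lt_of_le (by positivity) hm
  obtain ⟨r, hr, J, hJ, hJN, j₀, hj₀, Y, hY, E, hE, hYj₀, hYj⟩ :=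
    exists_graded_almostRegular ha hb hN ((card_le_univ L₂.top).trans_lt hV)
      (Nat.le_of_mul_le_mul_left (hcard₃.trans hcard₀) (by positivity))
      (fun j hj ↦ (hC j hj).1.nonempty <| card_pos.1 <| by
        exact_mod_cast hmpos.trans_le (hA.le_card j (mem_of_mem_erase (hI₃ (hJ₀ hj)))))
      (fun j hj ↦ (hC j hj).2.1.covers) (fun j hj ↦ (hC j hj).2.2.covers)
      fun j hj ↦ ((hC j hj).1.maxDegLE hlam (hdeg j (hJ₀ hj))).mono hlam4a
  refine ⟨i₀, hi₀, I₁, hI₁, I₂, hI₂, J, (hJ.trans hJ₀).trans hI₃, h₁₂,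
    (disjoint_union_left.2 ⟨h₁₃, h₂₃⟩).mono_right (hJ.trans hJ₀), hJN, w, L₁, L₂, hL₁, hL₂, j₀,
    hj₀, Y, E, r, ⟨fun j hj ↦ (hC j (hJ hj)).2.1.mono (hE j hj).1.subset,
      fun j hj ↦ (hC j (hJ hj)).2.2.mono (hE j hj).1.subset, hY, hYj₀, hYj⟩, hr,
    fun j hj ↦ ⟨LargePart.trans (by positivity) (hC j (hJ hj)).1 (hE j hj).1, (hE j hj).2⟩⟩

theorem Coherent.exists_linked_isPrivateCover [Fintype V] (hG : Coherent G Γ Γ) (hΓ : 0 < Γ)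
    (hk : 1 ≤ k) {a b N : ℕ} (ha : 1 ≤ a) (hb : 2 ≤ b) (hN : 1 ≤ N)
    (hV : Fintype.card V < b ^ a) (hA : IsSparseBlockade G A I m lam)
    (hI : 1 + 2 * k + 4 ^ k * (a * N) ≤ #I) (hlam : 0 ≤ lam) {lam' : ℝ} (hlam'0 : 0 < lam')
    (hlam'1 : lam' ≤ 1) (hlam' : 64 * N ^ 3 * (lam * (16 ^ (k + 1) * (4 * a))) ≤ lam')
    (hm : 4 ^ (k + 2) * Γ ≤ m) (hmI : 64 * #I * Γ ≤ m)
    (hk' : Fintype.card V ≤ (m / (16 * Γ) / 2) ^ k) :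
    ∃ Q ⊆ I, ∃ J ⊆ I, Disjoint Q J ∧ #J = N ∧ ∃ j₀ ∈ J, ∃ (D : Finset V) (X T : ι → Finset V),
      IsPrivateCover G D J X T ∧
      (∀ j ∈ J, LargePart (16 ^ (k + 1) * (4 * a) * (1024 * N ^ 4 * b)) (X j) (A j)) ∧
      (J : Set ι).Pairwise (fun i j ↦ MaxDegLE G (X i) (X j) lam') ∧
      ∀ x ∈ X j₀, ∀ j ∈ J, ∀ y ∈ T j, ∃ l ∈ Icc 1 (2 * k + 1),
        Linked G A Q ((J.erase j₀).biUnion X : Finset V) x y l := by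
  have hN1 : (1 : ℝ) ≤ 64 * N ^ 3 := by
    exact_mod_cast (one_le_pow₀ hN : 1 ≤ N ^ 3).trans (Nat.le_mul_of_pos_left _ (by norm_num))
  have hlam1 : lam * (16 ^ (k + 1) * (4 * a)) ≤ 1 :=
    (le_mul_of_one_le_left (by positivity) hN1).trans (hlam'.trans hlam'1)
  obtain ⟨i₀, hi₀, I₁, hI₁, I₂, hI₂, J, hJ, h₁₂, hJ₁₂, rfl, w, L₁, L₂, hL₁, hL₂, j₀, hj₀, Y, E, r,
    hYE, hr, hE⟩ := hG.exists_isGradedPair hΓ hk ha hb hN hV hA hI hlam hlam1 hm hmI hk'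
  have hJI : J ⊆ I := hJ.trans (erase_subset _ _)
  have hmpos : 0 < m := lt_of_lt_of_le (by positivity) hm
  obtain ⟨c, hc, htop⟩ := L₂.exists_top_subset hL₂.1
  have hdeg : ∀ j ∈ J, MaxDegLE G L₂.top (A j) lam := fun j hj ↦
    (hA.maxDegLE (mem_of_mem_erase (hI₂ hc)) (hJI hj)
      (disjoint_left.1 hJ₁₂ (mem_union_right _ hc) <| · ▸ hj)).mono_left htop
  obtain ⟨X, T, hXT, hXE, hXX⟩ := exists_isPrivateCover ⟨j₀, hj₀⟩ hr (by omega)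
    (by positivity) hlam' hlam'0 hlam'1
    (fun j hj ↦ (hE j hj).1.nonempty <| card_pos.1 <| by
      exact_mod_cast hmpos.trans_le (hA.le_card j (hJI hj)))
    (fun j hj ↦ (hE j hj).2) (fun j hj ↦ (hE j hj).1.maxDegLE hlam (hdeg j hj))
    fun i hi j hj hij ↦ ((hE j hj).1.maxDegLE hlam
      (hA.maxDegLE (hJI hi) (hJI hj) hij)).mono_left (hE i hi).1.subset
  refine ⟨insert i₀ (I₁ ∪ I₂), insert_subset hi₀ ((union_subset hI₁ hI₂).trans (erase_subset _ _)),
    J, hJI, disjoint_insert_left.2 ⟨fun h ↦ notMem_erase i₀ I (hJ h), hJ₁₂⟩, rfl, j₀, hj₀, L₂.top,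
    X, T, hXT, fun j hj ↦ LargePart.trans (by positivity) (hE j hj).1 (hXE j hj), hXX,
    fun x hx j hj y hy ↦ ?_⟩
  obtain ⟨l, hl, hlk, hlink⟩ := hYE.exists_linked (fun h ↦ notMem_erase i₀ I (hI₂ h)) h₁₂
    (fun j hj ↦ (hXE j hj).subset) ((hXE j₀ hj₀).subset hx) (hXT.subset j hj hy)
  exact ⟨l, mem_Icc.2 ⟨hl, by linarith [hL₁.2, hL₂.2]⟩, hlink⟩

end LinkedCovers

/-! ### Rainbow handles -/

section Handles

variable {ι : Type*} {G : SimpleGraph V} {A : ι → Finset V} {Γ m lam : ℝ} {k : ℕ}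

/-- A walk `z 0, …, z n` that can serve as a handle between the blocks `F a` and `F b`: its interior
is an induced path, rainbow with colours in `Q`, and the only neighbours of the interior in the
blocks `F j` with `j ∈ J` are neighbours of `z 1` in `F a` and of `z (n - 1)` in `F b`. -/
structure IsRainbowHandle (G : SimpleGraph V) (A F : ι → Finset V) (Q J : Finset ι) (a b : ι)
    (n : ℕ) (z : ℕ → V) (q : ℕ → ι) : Prop where
  adj : ∀ i < n, G.Adj (z i) (z (i + 1))
  not_adj : ∀ i j, 0 < i → i + 1 < j → j < n → ¬ G.Adj (z i) (z j)
  rainbowOn : RainbowOn A Q z q (Set.Ioo 0 n)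
  eq_of_adj : ∀ i ∈ Set.Ioo 0 n, ∀ j ∈ J, ∀ w ∈ F j, G.Adj (z i) w →
    i = 1 ∧ j = a ∨ i + 1 = n ∧ j = b

/-- Any two vertices in distinct blocks `F j` with `j ∈ J` are joined by a rainbow handle of length
`n` whose colours lie in `I \ J`. -/
def HandleLinked (G : SimpleGraph V) (A F : ι → Finset V) (I J : Finset ι) (n : ℕ) : Prop :=
  ∀ a ∈ J, ∀ b ∈ J, a ≠ b → ∀ u ∈ F a, ∀ v ∈ F b, ∃ z q, z 0 = u ∧ z n = v ∧
    IsRainbowHandle G A F (I \ J) J a b n z q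

theorem Levelling.exists_isRainbowHandle {X F : ι → Finset V} {x : V} {b : ι} {P Q J : Finset ι}
    (L : Levelling G X x b P) (hX : ∀ j ∈ insert b P, X j ⊆ A j)
    (hQ : Disjoint (insert b P) Q) (hreach : ∀ j ∈ J, L.Reaches (F j)) {u r v : V}
    (hr : r ∈ L.top) (hru : G.Adj r u) {a a' : ι} (hrF : ∀ j ∈ J, ∀ w ∈ F j, G.Adj r w → j = a)
    {l : ℕ} {z : ℕ → V} {q : ℕ → ι} (hz0 : z 0 = x) (hz : IsInducedPath G z l)
    (hzv : G.Adj (z l) v) (hzq : RainbowOn A Q z q (Set.Ioc 0 l))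
    (hzX : ∀ i ∈ Set.Ioc 0 l, ∀ j ∈ P, ∀ w ∈ X j, ¬ G.Adj (z i) w)
    (hzF : ∀ i ∈ Set.Ioc 0 l, ∀ j ∈ J, ∀ w ∈ F j, G.Adj (z i) w → i = l ∧ j = a') :
    ∃ z' q', z' 0 = u ∧ z' (L.height + 1 + (l + 1)) = v ∧
      IsRainbowHandle G A F (insert b P ∪ Q) J a a' (L.height + 1 + (l + 1)) z' q' := by
  obtain ⟨g, hg0, hgr, hgL, hg⟩ := L.exists_walk hr
  set g' := Function.update g (L.height + 1) u
  set h := Function.update z (l + 1) v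
  have hg' : ∀ i ≤ L.height, g' i = g i := fun i hi ↦ Function.update_of_ne (by omega) _ _
  have hh : ∀ i ≤ l, h i = z i := fun i hi ↦ Function.update_of_ne (by omega) _ _
  have h0 : g' 0 = h 0 := by rw [hg' 0 (Nat.zero_le _), hh 0 (Nat.zero_le _), hg0, hz0]
  have hrainbow : RainbowOn A Q h q (Set.Ioc 0 l) :=
    ⟨hzq.color_mem, fun i hi ↦ hh i hi.2 ▸ hzq.mem_block i hi, hzq.color_injOn⟩
  refine ⟨splice (L.height + 1) g' h, splice (L.height + 1) L.color q, ?_, ?_,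
    adj_splice h0 (adj_update hg (hgr ▸ hru)) (adj_update hz.adj hzv),
    fun i j hi hij hj ↦ not_adj_splice (t := l) h0 (fun i j hij hj ↦ ?_) (fun i j hij hj ↦ ?_)
      (fun i hi j hj ↦ ?_) i j hi hij (by omega), ?_, fun i hi j hj w hw hadj ↦ ?_⟩
  · rw [splice_of_le (Nat.zero_le _), Nat.sub_zero]
    exact Function.update_self _ _ _
  · rw [splice_of_lt (by omega), Nat.add_sub_cancel_left]
    exact Function.update_self _ _ _
  · rw [hg' i (by omega), hg' j (by omega)]
    exact L.anticomplete i j hij (by omega) _ (hgL i (by omega)) _ (hgL j (by omega))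
  · rw [hh i (by omega), hh j hj]
    exact hz.not_adj i j hij hj
  · have hi' : i ≤ L.height := Nat.lt_succ_iff.1 hi.2
    rw [hg' i hi', hh j hj.2, G.adj_comm]
    exact hzX j hj _ (L.color_mem i hi.1 hi') _ (L.level_subset i hi' (hgL i hi'))
  · have hIoo : Set.Ioc 0 (L.height + 1 + l) = Set.Ioo 0 (L.height + 1 + (l + 1)) :=
      Set.ext fun i ↦ and_congr_right fun _ ↦ Nat.lt_succ_iff.symm
    exact hIoo ▸ ((L.mono subset_rfl hX).rainbowOn_update hgL u).splice hrainbow hQ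
  · obtain his | his := le_or_gt i (L.height + 1)
    · obtain ⟨p, hp⟩ : ∃ p, L.height + 1 - i = p := ⟨_, rfl⟩
      have hip : p ≤ L.height := by have := hi.1; omega
      rw [splice_of_le his, hp, hg' p hip] at hadj
      obtain rfl | hlt := hip.eq_or_lt
      · exact Or.inl ⟨by omega, hrF j hj w hw (hgr ▸ hadj)⟩
      · exact absurd hadj ((hreach j hj).anticomplete _ (L.level_subset_below hlt (hgL p hip)) w hw)
    · have hil : i - (L.height + 1) ≤ l := by have := hi.2; omega
      rw [splice_of_lt his, hh _ hil] at hadj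
      obtain ⟨hl, rfl⟩ := hzF _ ⟨by omega, hil⟩ j hj w hw hadj
      exact Or.inr ⟨by omega, rfl⟩

theorem IsPrivateCover.handleLinked {D : Finset V} {I J J' P Q : Finset ι} {X T F T' : ι → Finset V}
    {x : V} {b : ι} {L : Levelling G X x b P} {l : ℕ} (hXT : IsPrivateCover G D J X T)
    (hXA : ∀ j ∈ J, X j ⊆ A j) (hJI : J ⊆ I) (hQI : Q ⊆ I) (hQJ : Disjoint Q J) (hb : b ∈ J)
    (hP : P ⊆ J.erase b) (hJ' : J' ⊆ J.erase b) (hPJ' : Disjoint P J')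
    (hFT : IsPrivateCover G L.top J' F T') (hFX : ∀ j ∈ J', F j ⊆ X j)
    (hreach : ∀ j ∈ J', L.Reaches (F j)) (hl : 0 < l)
    (hlink : ∀ j ∈ J', ∀ v ∈ F j, ∃ y ∈ T j, G.Adj y v ∧
      Linked G A Q ((J.erase b).biUnion X : Finset V) x y l) :
    HandleLinked G A F I J' (L.height + 1 + (l + 1)) := by
  intro a ha a' ha' _ u hu v hv
  have hJ'J : J' ⊆ J := hJ'.trans (erase_subset _ _)
  have hbP : insert b P ⊆ J := insert_subset hb (hP.trans (erase_subset _ _))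
  obtain ⟨r, hr, hru⟩ := hFT.covers a ha u hu
  obtain ⟨y, hy, hyv, z, q, hz⟩ := hlink a' ha' v hv
  have hzX : ∀ i ∈ Set.Ioc 0 l, ∀ j ∈ J.erase b, ∀ w ∈ X j, G.Adj (z i) w → i = l ∧ j = a' := by
    intro i hi j hj w hw hadj
    obtain rfl | hil := hi.2.eq_or_lt
    · refine ⟨rfl, by_contra fun hja ↦ ?_⟩
      exact hXT.anticomplete (hJ'J ha') (mem_of_mem_erase hj) (Ne.symm hja) y hy w hw
        (hz.finish ▸ hadj)
    · exact absurd hadj (hz.not_adj i ⟨hi.1, hil⟩ w (mem_biUnion.2 ⟨j, hj, hw⟩))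
  obtain ⟨z', q', h0, hn, hz'⟩ := L.exists_isRainbowHandle (J := J')
    (fun j hj ↦ hXA j (hbP hj)) (hQJ.symm.mono_left hbP) hreach (hFT.subset a ha hr) hru
    (fun j hj w hw hadj ↦ by_contra fun hja ↦
      hFT.anticomplete ha hj (Ne.symm hja) r hr w hw hadj)
    hz.start hz.isInducedPath (hz.finish ▸ hyv) hz.rainbowOn
    (fun i hi j hj w hw hadj ↦ disjoint_left.1 hPJ' hj
      ((hzX i hi j (hP hj) w hw hadj).2 ▸ ha'))
    fun i hi j hj w hw ↦ hzX i hi j (hJ' hj) w (hFX j hj hw)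
  have hbJ' : b ∉ J' := fun h ↦ notMem_erase b J (hJ' h)
  have hcolors : insert b P ∪ Q ⊆ I \ J' := union_subset
    (subset_sdiff.2 ⟨hbP.trans hJI, disjoint_insert_left.2 ⟨hbJ', hPJ'⟩⟩)
    (subset_sdiff.2 ⟨hQI, hQJ.mono_right hJ'J⟩)
  exact ⟨z', q', h0, hn, hz'.adj, hz'.not_adj, hz'.rainbowOn.mono hcolors, hz'.eq_of_adj⟩

theorem Levelling.exists_extension_of_isSparseBlockade (hG : Coherent G Γ Γ) (hΓ : 0 < Γ)
    (hA : IsSparseBlockade G A I m lam) (hlam : 0 ≤ lam) {x : V} {b : ι} {Q J : Finset ι}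
    (L : Levelling G A x b Q) (hL : 1 ≤ L.height) (hQ : Q ⊆ I) (hJ : J ⊆ I)
    (hQJ : Disjoint (insert b Q) J) {r : ℕ} (hr : r < #J) {C : ι → Finset V} {R : ℝ} (hR : 0 < R)
    (hC : ∀ j ∈ J, LargePart R (C j) (A j)) (hreach : ∀ j ∈ J, L.Reaches (C j))
    (hlamR : lam * (R * 4 ^ r) ≤ 1) (hm : R * 4 ^ r * Γ ≤ m) :
    ∃ J' ⊆ J, #J' + r = #J ∧ ∃ L' : Levelling G A x b (Q ∪ (J \ J')),
      L'.height = L.height + r ∧ ∃ C' : ι → Finset V, ∀ j ∈ J',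
        LargePart (4 ^ r) (C' j) (C j) ∧ L'.Reaches (C' j) := by
  obtain ⟨i, hi, htop⟩ := L.exists_top_subset hL
  have hij : ∀ j ∈ J, i ≠ j := disjoint_iff_ne.1 hQJ i (mem_insert_of_mem hi)
  refine L.exists_extension hG hΓ r (lam := lam * R) (by positivity) (by linarith) hQJ hr
    (fun j hj ↦ (hC j hj).subset) hreach (fun j hj ↦ ?_)
    (fun i hi j hj hij ↦ (hA.pairwiseDisjoint (hJ hi) (hJ hj) hij).mono (hC i hi).subset
      (hC j hj).subset)
    (fun j hj ↦ (hC j hj).maxDegLE hlam ((hA.maxDegLE (hQ hi) (hJ hj) (hij j hj)).mono_left htop))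
    fun i hi j hj hij ↦ ((hC j hj).maxDegLE hlam (hA.maxDegLE (hJ hi) (hJ hj) hij)).mono_left
      (hC i hi).subset
  have := (hm.trans (hA.le_card j (hJ hj))).trans (hC j hj).card_le
  exact le_of_mul_le_mul_left (by linarith) hR

theorem Coherent.exists_root_forall_height (hG : Coherent G Γ Γ) (hΓ : 0 < Γ) (hk : 1 ≤ k)
    (hA : IsSparseBlockade G A I m lam) (hlam : 0 ≤ lam) {i₀ : ι} (hi₀ : i₀ ∈ I)
    (hmI : 64 * #I * Γ ≤ m) (hk' : #(A i₀) ≤ (m / (16 * Γ) / 2) ^ k) :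
    ∃ x ∈ A i₀, ∀ P ⊆ I.erase i₀, #P = k → ∀ J ⊆ I.erase i₀, Disjoint P J →
      ∀ (C : ι → Finset V) (R : ℝ), 0 < R → (∀ j ∈ J, LargePart R (C j) (A j)) →
      ∀ s ≥ k, 2 ^ k * s < #J → lam * (R * 4 ^ (k + 1 + s)) ≤ 1 → R * 4 ^ (k + 1 + s) * Γ ≤ m →
      ∃ J' ⊆ J, #J ≤ 2 ^ k * (#J' + s) ∧ ∃ L : Levelling G A x i₀ (P ∪ (J \ J')),
        L.height = s ∧ ∃ C' : ι → Finset V, ∀ j ∈ J',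
          LargePart (4 ^ (k + 1 + s)) (C' j) (C j) ∧ L.Reaches (C' j) := by
  obtain ⟨x, hx, hroot⟩ := hG.exists_root hΓ hk hA hlam hi₀ hmI hk'
  refine ⟨x, hx, fun P hP hPk J hJ hPJ C R hR hC s hs hsJ hlamR hm ↦ ?_⟩
  have hPI : P ⊆ I := hP.trans (erase_subset _ _)
  have hJI : J ⊆ I := hJ.trans (erase_subset _ _)
  have hpow : ∀ t ≤ k + 1 + s, (4 : ℝ) ^ t ≤ 4 ^ (k + 1 + s) := fun t ↦
    pow_le_pow_right₀ (by norm_num)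
  have hlamR₀ : lam * (R * 4 ^ (k + 1)) ≤ 1 := le_trans
    (mul_le_mul_of_nonneg_left (mul_le_mul_of_nonneg_left (hpow _ (by omega)) hR.le) hlam) hlamR
  have hm₀ : R * (4 * Γ) ≤ m := by
    rw [← mul_assoc]
    exact le_trans (mul_le_mul_of_nonneg_right (mul_le_mul_of_nonneg_left
      (by simpa using hpow 1 (by omega)) hR.le) hΓ.le) hm
  obtain ⟨L₀, h1, hL₀, J₀, hJ₀, hcard₀, C₀, hC₀⟩ := hroot P hP hPk J hJ hPJ C R hR hC hlamR₀ hm₀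
  obtain ⟨r, hr⟩ := Nat.exists_eq_add_of_le (hL₀.trans hs)
  have hpow' : (4 : ℝ) ^ (k + 1) * 4 ^ r ≤ 4 ^ (k + 1 + s) :=
    (pow_add 4 (k + 1) r).symm.trans_le (hpow _ (by omega))
  have hRpow : R * 4 ^ (k + 1) * 4 ^ r ≤ R * 4 ^ (k + 1 + s) :=
    (mul_assoc R _ _).trans_le (mul_le_mul_of_nonneg_left hpow' hR.le)
  have hsJ₀ : s < #J₀ := lt_of_mul_lt_mul_left (hsJ.trans_le hcard₀) (Nat.zero_le _)
  obtain ⟨J', hJ', hcard, L, hL, C', hC'⟩ := L₀.exists_extension_of_isSparseBlockade hG hΓ hA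
    hlam h1 hPI (hJ₀.trans hJI)
    (disjoint_insert_left.2 ⟨fun h ↦ notMem_erase i₀ I (hJ (hJ₀ h)), hPJ.mono_right hJ₀⟩)
    (by omega : r < #J₀) (by positivity)
    (fun j hj ↦ LargePart.trans hR.le (hC j (hJ₀ hj)) (hC₀ j hj).1) (fun j hj ↦ (hC₀ j hj).2)
    ((mul_le_mul_of_nonneg_left hRpow hlam).trans hlamR)
    ((mul_le_mul_of_nonneg_right hRpow hΓ.le).trans hm)
  refine ⟨J', hJ'.trans hJ₀, hcard₀.trans (Nat.mul_le_mul_left _ (by omega)),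
    L.mono (union_subset_union_right (sdiff_subset_sdiff hJ₀ subset_rfl)) fun _ _ ↦ subset_rfl,
    hL.trans hr.symm, C', fun j hj ↦ ⟨?_, (hC' j hj).2.map_mono _ _⟩⟩
  exact (LargePart.trans (by positivity) (hC₀ j (hJ' hj)).1 (hC' j hj).1).mono hpow'

theorem Levelling.exists_isPrivateCover_top [Fintype V] {x : V} {i₀ : ι} {P J : Finset ι}
    (L : Levelling G A x i₀ P) (hL : 1 ≤ L.height) {a b N : ℕ} (ha : 1 ≤ a) (hb : 2 ≤ b)
    (hN : 1 ≤ N) (hV : Fintype.card V < b ^ a) (hA : IsSparseBlockade G A I m lam) (hm : 0 < m)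
    (hlam : 0 ≤ lam) (hP : P ⊆ I) (hJ : J ⊆ I) (hPJ : Disjoint P J) (hJN : a * N ≤ #J)
    {C : ι → Finset V} {R : ℝ} (hR : 0 ≤ R) (hC : ∀ j ∈ J, LargePart R (C j) (A j))
    (hreach : ∀ j ∈ J, L.Reaches (C j)) {lam' : ℝ} (hlam'0 : 0 < lam') (hlam'1 : lam' ≤ 1)
    (hlam' : 64 * N ^ 3 * (lam * (R * a)) ≤ lam') :
    ∃ J' ⊆ J, #J' = N ∧ ∃ F T : ι → Finset V, IsPrivateCover G L.top J' F T ∧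
      (∀ j ∈ J', F j ⊆ C j ∧ LargePart (R * a * (1024 * N ^ 4 * b)) (F j) (A j)) ∧
      (J' : Set ι).Pairwise fun i j ↦ MaxDegLE G (F i) (F j) lam' := by
  obtain ⟨r, hr, J₁, hJ₁, hcard, C', hC'⟩ := exists_almostRegular ha hb
    ((card_le_univ L.top).trans_lt hV) fun j hj ↦ (hreach j hj).covers
  obtain ⟨J', hJ', rfl⟩ := exists_subset_card_eq
    (Nat.le_of_mul_le_mul_left (hJN.trans hcard) ha : N ≤ #J₁)
  have hJ'J := hJ'.trans hJ₁
  have hCA : ∀ j ∈ J', LargePart (R * a) (C' j) (A j) := fun j hj ↦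
    LargePart.trans hR (hC j (hJ'J hj)) (hC' j (hJ' hj)).1
  obtain ⟨c, hc, htop⟩ := L.exists_top_subset hL
  obtain ⟨F, T, hFT, hFC, hFF⟩ := exists_isPrivateCover (card_pos.1 hN) hr (by omega)
    (by positivity) hlam' hlam'0 hlam'1
    (fun j hj ↦ (hCA j hj).nonempty <| card_pos.1 <| by
      exact_mod_cast hm.trans_le (hA.le_card j (hJ (hJ'J hj))))
    (fun j hj ↦ (hC' j (hJ' hj)).2)
    (fun j hj ↦ (hCA j hj).maxDegLE hlam ((hA.maxDegLE (hP hc) (hJ (hJ'J hj))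
      (disjoint_iff_ne.1 hPJ c hc j (hJ'J hj))).mono_left htop))
    fun i hi j hj hij ↦ ((hCA j hj).maxDegLE hlam
      (hA.maxDegLE (hJ (hJ'J hi)) (hJ (hJ'J hj)) hij)).mono_left (hCA i hi).subset
  exact ⟨J', hJ'J, rfl, F, T, hFT, fun j hj ↦
    ⟨(hFC j hj).subset.trans (hC' j (hJ' hj)).1.subset,
      LargePart.trans (by positivity) (hCA j hj) (hFC j hj)⟩, hFF⟩

theorem Coherent.exists_levelling_of_forall_exists [Fintype V] (hG : Coherent G Γ Γ) (hΓ : 0 < Γ)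
    (hk : 1 ≤ k) (hA : IsSparseBlockade G A I m lam) (hlam : 0 ≤ lam) {i₀ : ι} (hi₀ : i₀ ∈ I)
    {N n : ℕ} {t : Finset ℕ} (ht : t.Nonempty) (htn : ∀ l ∈ t, l + k ≤ n)
    {S : V → ℕ → ι → V → Prop} (hS : ∀ x ∈ A i₀, ∀ j ∈ I, ∀ v ∈ A j, ∃ l ∈ t, S x l j v)
    (hI : 1 + k + #t * (2 ^ k * (N + n + 1)) ≤ #I) (hlamt : lam * (#t * 4 ^ (k + 1 + n)) ≤ 1)
    (hm : #t * 4 ^ (k + 1 + n) * Γ ≤ m) (hmI : 64 * #I * Γ ≤ m)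
    (hk' : Fintype.card V ≤ (m / (16 * Γ) / 2) ^ k) :
    ∃ P ⊆ I.erase i₀, ∃ J ⊆ I.erase i₀, Disjoint P J ∧ N ≤ #J ∧ ∃ x ∈ A i₀, ∃ l ∈ t,
      ∃ L : Levelling G A x i₀ P, L.height + l = n ∧ ∃ C : ι → Finset V,
        ∀ j ∈ J, LargePart (#t * 4 ^ (k + 1 + n)) (C j) (A j) ∧ L.Reaches (C j) ∧
          ∀ v ∈ C j, S x l j v := by
  have hcard := card_erase_of_mem hi₀
  obtain ⟨P, hP, hPk⟩ := exists_subset_card_eq (by omega : k ≤ #(I.erase i₀))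
  have hcardP := card_sdiff_of_subset hP
  obtain ⟨x, hx, hroot⟩ := hG.exists_root_forall_height hΓ hk hA hlam hi₀ hmI
    (le_trans (by exact_mod_cast card_le_univ _) hk')
  obtain ⟨l, hl, H, hH, hcardH, C, hC⟩ := exists_largePart_of_forall_exists
    (J := I.erase i₀ \ P) (C := A) (R := S x) ht
    fun j hj v hv ↦ hS x hx j (mem_of_mem_erase (mem_sdiff.1 hj).1) v hv
  have hHI : H ⊆ I.erase i₀ := hH.trans sdiff_subset
  have hPH : Disjoint P H := disjoint_sdiff.mono_right hH
  have hNH : 2 ^ k * (N + n + 1) ≤ #H :=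
    Nat.le_of_mul_le_mul_left (le_trans (by omega) hcardH) ht.card_pos
  obtain ⟨s, rfl⟩ := Nat.exists_eq_add_of_le' ((Nat.le_add_right l k).trans (htn l hl))
  have ht0 : (0 : ℝ) < #t := by exact_mod_cast ht.card_pos
  have hpow : (#t : ℝ) * 4 ^ (k + 1 + s) ≤ #t * 4 ^ (k + 1 + (s + l)) :=
    mul_le_mul_of_nonneg_left (pow_le_pow_right₀ (by norm_num) (by omega)) ht0.le
  obtain ⟨J, hJ, hcardJ, L, rfl, C', hC'⟩ := hroot P hP hPk H hHI hPH C #t ht0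
    (fun j hj ↦ (hC j hj).1) s (by linarith [htn l hl])
    ((Nat.mul_lt_mul_of_pos_left (by omega) (by positivity)).trans_le hNH)
    ((mul_le_mul_of_nonneg_left hpow hlam).trans hlamt)
    ((mul_le_mul_of_nonneg_right hpow hΓ.le).trans hm)
  refine ⟨P ∪ (H \ J), union_subset hP (sdiff_subset.trans hHI), J, hJ.trans hHI,
    disjoint_union_left.2 ⟨hPH.mono_right hJ, sdiff_disjoint⟩, ?_, x, hx, l, hl, L, rfl, C',
    fun j hj ↦ ⟨?_, (hC' j hj).2, fun v hv ↦ (hC j (hJ hj)).2 v ((hC' j hj).1.subset hv)⟩⟩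
  · have := Nat.le_of_mul_le_mul_left (hNH.trans hcardJ) (by positivity)
    omega
  · exact (LargePart.trans ht0.le (hC j (hJ hj)).1 (hC' j hj).1).mono hpow

theorem Coherent.exists_handleLinked [Fintype V] (hG : Coherent G Γ Γ) (hΓ : 0 < Γ)
    (hk : 1 ≤ k) {a b N n : ℕ} (ha : 1 ≤ a) (hb : 2 ≤ b) (hN : 1 ≤ N)
    (hV : Fintype.card V < b ^ a) (hn : 3 * k + 1 ≤ n) {J Q : Finset ι} {D : Finset V}
    {X T : ι → Finset V} {j₀ : ι} (hX : IsSparseBlockade G X J m lam) (hXA : ∀ j ∈ J, X j ⊆ A j)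
    (hXT : IsPrivateCover G D J X T) (hJI : J ⊆ I) (hQI : Q ⊆ I) (hQJ : Disjoint Q J)
    (hj₀ : j₀ ∈ J) (hlink : ∀ x ∈ X j₀, ∀ j ∈ J, ∀ y ∈ T j, ∃ l ∈ Icc 1 (2 * k + 1),
      Linked G A Q ((J.erase j₀).biUnion X : Finset V) x y l)
    (hJ : 1 + k + (2 * k + 1) * (2 ^ k * (a * N + n + 1)) ≤ #J) (hlam : 0 ≤ lam) {lam' : ℝ}
    (hlam'0 : 0 < lam') (hlam'1 : lam' ≤ 1)
    (hlam' : 64 * N ^ 3 * (lam * ((2 * k + 1 : ℕ) * 4 ^ (k + 1 + n) * a)) ≤ lam')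
    (hm : (2 * k + 1 : ℕ) * 4 ^ (k + 1 + n) * Γ ≤ m) (hmJ : 64 * #J * Γ ≤ m)
    (hk' : Fintype.card V ≤ (m / (16 * Γ) / 2) ^ k) :
    ∃ J' ⊆ J, #J' = N ∧ ∃ F : ι → Finset V, HandleLinked G A F I J' (n + 2) ∧
      (∀ j ∈ J', LargePart ((2 * k + 1 : ℕ) * 4 ^ (k + 1 + n) * a * (1024 * N ^ 4 * b))
        (F j) (X j)) ∧
      (J' : Set ι).Pairwise fun i j ↦ MaxDegLE G (F i) (F j) lam' := by
  have hJ0 : (1 : ℝ) ≤ #J := by exact_mod_cast (by omega : 1 ≤ #J)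
  have ha1 : (1 : ℝ) ≤ a := by exact_mod_cast ha
  have hN1 : (1 : ℝ) ≤ 64 * N ^ 3 := by
    exact_mod_cast (one_le_pow₀ hN : 1 ≤ N ^ 3).trans (Nat.le_mul_of_pos_left _ (by norm_num))
  have hlam1 : lam * ((2 * k + 1 : ℕ) * 4 ^ (k + 1 + n)) ≤ 1 := calc
    lam * ((2 * k + 1 : ℕ) * 4 ^ (k + 1 + n)) ≤ lam * ((2 * k + 1 : ℕ) * 4 ^ (k + 1 + n) * a) :=
      mul_le_mul_of_nonneg_left (le_mul_of_one_le_right (by positivity) ha1) hlam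
    _ ≤ 64 * N ^ 3 * (lam * ((2 * k + 1 : ℕ) * 4 ^ (k + 1 + n) * a)) :=
      le_mul_of_one_le_left (by positivity) hN1
    _ ≤ 1 := hlam'.trans hlam'1
  have hcardIcc : #(Icc 1 (2 * k + 1)) = 2 * k + 1 := Nat.card_Icc 1 (2 * k + 1)
  have hS : ∀ x ∈ X j₀, ∀ j ∈ J, ∀ v ∈ X j, ∃ l ∈ Icc 1 (2 * k + 1), ∃ y ∈ T j, G.Adj y v ∧
      Linked G A Q ((J.erase j₀).biUnion X : Finset V) x y l := fun x hx j hj v hv ↦ by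
    obtain ⟨y, hy, hyv⟩ := hXT.covers j hj v hv
    obtain ⟨l, hl, hxy⟩ := hlink x hx j hj y hy
    exact ⟨l, hl, y, hy, hyv, hxy⟩
  obtain ⟨P, hP, J₁, hJ₁, hPJ₁, hcard, x, -, l, hl, L, rfl, C, hC⟩ :=
    hG.exists_levelling_of_forall_exists hΓ hk hX hlam hj₀ (N := a * N) (n := n)
      (nonempty_Icc.2 (by omega))
      (fun l hl ↦ by have := mem_Icc.1 hl; omega) hS (by rwa [hcardIcc]) (by rwa [hcardIcc])
      (by rwa [hcardIcc]) hmJ hk'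
  rw [hcardIcc] at hC
  rw [mem_Icc] at hl
  obtain ⟨J', hJ', hJ'N, F, T', hFT, hF, hFF⟩ := L.exists_isPrivateCover_top (by omega) ha hb hN hV
    hX (lt_of_lt_of_le (by positivity) hmJ) hlam (hP.trans (erase_subset _ _))
    (hJ₁.trans (erase_subset _ _)) hPJ₁ hcard (by positivity) (fun j hj ↦ (hC j hj).1)
    (fun j hj ↦ (hC j hj).2.1) hlam'0 hlam'1 hlam'
  refine ⟨J', hJ'.trans (hJ₁.trans (erase_subset _ _)), hJ'N, F, ?_, fun j hj ↦ (hF j hj).2, hFF⟩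
  have := hXT.handleLinked hXA hJI hQI hQJ hj₀ hP (hJ'.trans hJ₁) (hPJ₁.mono_right hJ') hFT
    (fun j hj ↦ (hF j hj).2.subset) (fun j hj ↦ (hC j (hJ' hj)).2.1.mono (hF j hj).1) hl.1
    fun j hj v hv ↦ (hC j (hJ' hj)).2.2 v ((hF j hj).1 hv)
  exact (by omega : L.height + 1 + (l + 1) = L.height + l + 2) ▸ this

end Handles

/-! ### Passing to a handle-linked sub-blockade -/

section Asymptotics

theorem IsSparseBlockade.mono {ι : Type*} {G : SimpleGraph V} {A : ι → Finset V} {I : Finset ι}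
    {m m' lam : ℝ} (hA : IsSparseBlockade G A I m lam) (hm : m' ≤ m) :
    IsSparseBlockade G A I m' lam :=
  ⟨hA.pairwiseDisjoint, fun i hi ↦ hm.trans (hA.le_card i hi), hA.maxDegLE⟩

theorem IsSparseBlockade.of_largePart {ι : Type*} {G : SimpleGraph V} {A X : ι → Finset V}
    {I J : Finset ι} {κ m lam lam' : ℝ} (hA : IsSparseBlockade G A I (κ * m) lam) (hκ : 0 < κ)
    (hJI : J ⊆ I) (hXA : ∀ j ∈ J, LargePart κ (X j) (A j))
    (hX : (J : Set ι).Pairwise fun i j ↦ MaxDegLE G (X i) (X j) lam') :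
    IsSparseBlockade G X J m lam' where
  pairwiseDisjoint i hi j hj hij :=
    (hA.pairwiseDisjoint (hJI hi) (hJI hj) hij).mono (hXA i hi).subset (hXA j hj).subset
  le_card j hj := le_of_mul_le_mul_left ((hA.le_card j (hJI hj)).trans (hXA j hj).card_le) hκ
  maxDegLE := hX

theorem exists_pos_le_one_mul_mul_le {C D y : ℝ} (hC : 0 < C) (hD : 0 < D) (hy : 0 < y) :
    ∃ x, 0 < x ∧ x ≤ 1 ∧ C * (x * D) ≤ y := by
  refine ⟨min 1 (y / (C * D)), by positivity, min_le_left _ _, ?_⟩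
  calc C * (min 1 (y / (C * D)) * D) = min 1 (y / (C * D)) * (C * D) := by ring
    _ ≤ y := (le_div_iff₀ (by positivity)).1 (min_le_right _ _)

theorem Coherent.exists_isSparseBlockade_handleLinked [Fintype V] {ι : Type*} {G : SimpleGraph V}
    {A : ι → Finset V} {I : Finset ι} {Γ m lam lam₁ lam' : ℝ} {k n a b M N : ℕ}
    (hG : Coherent G Γ Γ) (hΓ : 0 < Γ) (hk : 1 ≤ k) (hn : 3 * k + 1 ≤ n) (ha : 1 ≤ a) (hb : 2 ≤ b)
    (hN : 1 ≤ N) (hV : Fintype.card V < b ^ a)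
    (hM : 1 + k + (2 * k + 1) * (2 ^ k * (a * N + n + 1)) ≤ M)
    (hI : 1 + 2 * k + 4 ^ k * (a * M) ≤ #I) (hlam : 0 ≤ lam) (hlam₁0 : 0 < lam₁)
    (hlam₁1 : lam₁ ≤ 1) (hlam₁ : 64 * M ^ 3 * (lam * (16 ^ (k + 1) * (4 * a))) ≤ lam₁)
    (hlam'0 : 0 < lam') (hlam'1 : lam' ≤ 1)
    (hlam' : 64 * N ^ 3 * (lam₁ * ((2 * k + 1 : ℕ) * 4 ^ (k + 1 + n) * a)) ≤ lam')
    (hm : (4 ^ (k + 2) + 64 * #I + (2 * k + 1 : ℕ) * 4 ^ (k + 1 + n)) * Γ ≤ m)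
    (hk' : Fintype.card V ≤ (m / (16 * Γ) / 2) ^ k)
    (hA : IsSparseBlockade G A I (16 ^ (k + 1) * (4 * a) * (1024 * M ^ 4 * b) *
      ((2 * k + 1 : ℕ) * 4 ^ (k + 1 + n) * a * (1024 * N ^ 4 * b) * m)) lam) :
    ∃ J ⊆ I, #J = N ∧ ∃ F : ι → Finset V, (∀ j ∈ J, F j ⊆ A j) ∧
      IsSparseBlockade G F J m lam' ∧ HandleLinked G A F I J (n + 2) := by
  have ha0 : 0 < a := ha
  have hb0 : 0 < b := by omega
  have hN0 : 0 < N := hN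
  have hM0 : 0 < M := by omega
  set κ₀ : ℝ := 16 ^ (k + 1) * (4 * a) * (1024 * M ^ 4 * b) with hκ₀_def
  set κ₁ : ℝ := (2 * k + 1 : ℕ) * 4 ^ (k + 1 + n) * a * (1024 * N ^ 4 * b) with hκ₁_def
  have hκ₀ : 1 ≤ κ₀ := by
    rw [hκ₀_def]
    exact_mod_cast (by positivity : 0 < 16 ^ (k + 1) * (4 * a) * (1024 * M ^ 4 * b))
  have hκ₁ : 1 ≤ κ₁ := by
    rw [hκ₁_def]
    exact_mod_cast (by positivity : 0 < (2 * k + 1) * 4 ^ (k + 1 + n) * a * (1024 * N ^ 4 * b))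
  rw [add_mul, add_mul] at hm
  have hm₄ : 0 ≤ 4 ^ (k + 2) * Γ := by positivity
  have hmI : 0 ≤ 64 * #I * Γ := by positivity
  have hmn : 0 ≤ (2 * k + 1 : ℕ) * 4 ^ (k + 1 + n) * Γ := by positivity
  have hm0 : 0 ≤ m := by linarith
  have hm₁ : m ≤ κ₁ * m := le_mul_of_one_le_left hm0 hκ₁
  have hm₀ : m ≤ κ₀ * (κ₁ * m) := hm₁.trans (le_mul_of_one_le_left (hm0.trans hm₁) hκ₀)
  obtain ⟨Q, hQ, J, hJ, hQJ, hJM, j₀, hj₀, D, X, T, hXT, hXA, hXX, hlink⟩ :=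
    hG.exists_linked_isPrivateCover hΓ hk ha hb hM0 hV (hA.mono hm₀) hI hlam hlam₁0 hlam₁1 hlam₁
      (by linarith) (by linarith) hk'
  have hX : IsSparseBlockade G X J (κ₁ * m) lam₁ := hA.of_largePart (by positivity) hJ hXA hXX
  have hmJ : 64 * #J * Γ ≤ m :=
    (mul_le_mul_of_nonneg_right (by have := card_le_card hJ; gcongr) hΓ.le).trans
      (by linarith : 64 * #I * Γ ≤ m)
  obtain ⟨J', hJ', hJ'N, F, hF, hFX, hFF⟩ := hG.exists_handleLinked hΓ hk ha hb hN hV hn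
    (hX.mono hm₁) (fun j hj ↦ (hXA j hj).subset) hXT hJ hQ hQJ hj₀ hlink (hJM ▸ hM) hlam₁0.le
    hlam'0 hlam'1 hlam' (by linarith) hmJ hk'
  exact ⟨J', hJ'.trans hJ, hJ'N, F, fun j hj ↦ (hFX j hj).subset.trans (hXA j (hJ' hj)).subset,
    hX.of_largePart (by positivity) hJ' hFX hFF, hF⟩

theorem exists_forall_isSparseBlockade_handleLinked {k n a N : ℕ} (hk : 1 ≤ k)
    (hn : 3 * k + 1 ≤ n) (ha : 1 ≤ a) (hN : 1 ≤ N) {lam' : ℝ} (hlam'0 : 0 < lam')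
    (hlam'1 : lam' ≤ 1) :
    ∃ (K : ℕ) (D P lam : ℝ), 0 < K ∧ 0 < P ∧ 0 < lam ∧ ∀ {V ι : Type*} [Fintype V]
      {G : SimpleGraph V} {A : ι → Finset V} {I : Finset ι} {b : ℕ} {Γ m : ℝ}, Coherent G Γ Γ →
      0 < Γ → 2 ≤ b → Fintype.card V < b ^ a → #I = K → D * Γ ≤ m →
      Fintype.card V ≤ (m / (16 * Γ) / 2) ^ k → IsSparseBlockade G A I (P * b ^ 2 * m) lam →
      ∃ J ⊆ I, #J = N ∧ ∃ F : ι → Finset V, (∀ j ∈ J, F j ⊆ A j) ∧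
        IsSparseBlockade G F J m lam' ∧ HandleLinked G A F I J (n + 2) := by
  obtain ⟨M, hM⟩ : ∃ M, M = 1 + k + (2 * k + 1) * (2 ^ k * (a * N + n + 1)) := ⟨_, rfl⟩
  replace ha : 0 < a := ha
  replace hN : 0 < N := hN
  have hM0 : 0 < M := by omega
  obtain ⟨lam₁, hlam₁0, hlam₁1, hlam₁⟩ := exists_pos_le_one_mul_mul_le (C := 64 * N ^ 3)
    (D := (2 * k + 1 : ℕ) * 4 ^ (k + 1 + n) * a) (by positivity) (by positivity) hlam'0
  obtain ⟨lam, hlam0, -, hlam⟩ := exists_pos_le_one_mul_mul_le (C := 64 * M ^ 3)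
    (D := 16 ^ (k + 1) * (4 * a)) (by positivity) (by positivity) hlam₁0
  obtain ⟨K, hK⟩ : ∃ K, K = 1 + 2 * k + 4 ^ k * (a * M) := ⟨_, rfl⟩
  refine ⟨K, 4 ^ (k + 2) + 64 * K + (2 * k + 1 : ℕ) * 4 ^ (k + 1 + n),
    16 ^ (k + 1) * (4 * a) * (1024 * M ^ 4) *
      ((2 * k + 1 : ℕ) * 4 ^ (k + 1 + n) * a * (1024 * N ^ 4)), lam, by omega, by positivity, hlam0,
    fun hG hΓ hb hV hI hm hk' hA ↦ ?_⟩
  refine hG.exists_isSparseBlockade_handleLinked hΓ hk hn ha hb hN hV hM.ge (hI.trans hK).ge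
    hlam0.le hlam₁0 hlam₁1 hlam hlam'0 hlam'1 hlam₁ (hI ▸ hm) hk' ?_
  convert hA using 1
  ring

theorem exists_lt_pow_and_sq_le {n a : ℕ} (hn : 1 ≤ n) (ha : 1 ≤ a) :
    ∃ b : ℕ, 2 ≤ b ∧ n < b ^ a ∧ (b : ℝ) ^ 2 ≤ 4 * (n : ℝ) ^ (2 / a : ℝ) := by
  set y : ℝ := (n : ℝ) ^ (a⁻¹ : ℝ) with hy
  have hy1 : 1 ≤ y := Real.one_le_rpow (by exact_mod_cast hn) (by positivity)
  have hya : y ^ a = n := Real.rpow_inv_natCast_pow n.cast_nonneg (by omega)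
  have hy2 : (n : ℝ) ^ (2 / a : ℝ) = y ^ 2 := by
    rw [hy, ← Real.rpow_natCast, ← Real.rpow_mul n.cast_nonneg]
    congr 1
    push_cast
    ring
  refine ⟨⌊y⌋₊ + 1, by have := Nat.floor_pos.2 hy1; omega, ?_, ?_⟩
  · have : y ^ a < ((⌊y⌋₊ + 1 : ℕ) : ℝ) ^ a :=
      pow_lt_pow_left₀ (by exact_mod_cast Nat.lt_floor_add_one y) (by linarith) (by omega)
    rw [hya] at this
    exact_mod_cast this
  · have : ((⌊y⌋₊ + 1 : ℕ) : ℝ) ≤ 2 * y := by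
      push_cast
      linarith [Nat.floor_le (by linarith : 0 ≤ y)]
    calc ((⌊y⌋₊ + 1 : ℕ) : ℝ) ^ 2 ≤ (2 * y) ^ 2 := by gcongr
      _ = 4 * (n : ℝ) ^ (2 / a : ℝ) := by rw [hy2]; ring

theorem eventually_le_natCast_rpow (D : ℝ) {e : ℝ} (he : 0 < e) :
    ∀ᶠ n : ℕ in Filter.atTop, D ≤ (n : ℝ) ^ e :=
  ((tendsto_rpow_atTop he).comp tendsto_natCast_atTop_atTop).eventually_ge_atTop D

theorem le_rpow_div_pow {n c σ : ℝ} {k : ℕ} (hn : 0 < n)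
    (h : 32 ^ k ≤ n ^ (k * (c - σ) - 1)) :
    n ≤ (n ^ (1 - σ) / (16 * n ^ (1 - c)) / 2) ^ k := by
  have hdiv : n ^ (1 - σ) / (16 * n ^ (1 - c)) / 2 = n ^ (c - σ) / 32 := by
    rw [show c - σ = (1 - σ) - (1 - c) by ring, Real.rpow_sub hn (1 - σ)]
    ring
  rw [hdiv, div_pow, le_div_iff₀ (by positivity)]
  calc n * 32 ^ k ≤ n * n ^ (k * (c - σ) - 1) := by gcongr
    _ = (n ^ (c - σ)) ^ k := by
      rw [Real.rpow_sub_one hn.ne', mul_div_cancel₀ _ hn.ne', mul_comm (k : ℝ),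
        Real.rpow_mul hn.le, Real.rpow_natCast]

theorem exists_forall_handleLinked {k n N : ℕ} (hk : 1 ≤ k) (hn : 3 * k + 1 ≤ n) (hN : 1 ≤ N)
    {c σ σ' : ℝ} (hσ : σ < σ') (hc : 1 / (k : ℝ) < c - σ') {lam' : ℝ} (hlam'0 : 0 < lam')
    (hlam'1 : lam' ≤ 1) :
    ∃ (K N₀ : ℕ) (lam : ℝ), 0 < K ∧ 0 < N₀ ∧ 0 < lam ∧ ∀ {V ι : Type*} [Fintype V]
      {G : SimpleGraph V} {A : ι → Finset V} {I : Finset ι},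
      Coherent G ((Fintype.card V : ℝ) ^ (1 - c)) ((Fintype.card V : ℝ) ^ (1 - c)) →
      N₀ ≤ Fintype.card V → #I = K →
      IsSparseBlockade G A I ((Fintype.card V : ℝ) ^ (1 - σ)) lam →
      ∃ J ⊆ I, #J = N ∧ ∃ F : ι → Finset V, (∀ j ∈ J, F j ⊆ A j) ∧
        IsSparseBlockade G F J ((Fintype.card V : ℝ) ^ (1 - σ')) lam' ∧
        HandleLinked G A F I J (n + 2) := by
  have hk0 : (0 : ℝ) < k := by exact_mod_cast hk
  have hσ' : 0 < σ' - σ := sub_pos.2 hσ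
  obtain ⟨a, ha⟩ := exists_nat_gt (2 / (σ' - σ))
  have ha0 : (0 : ℝ) < a := (by positivity : 0 < 2 / (σ' - σ)).trans ha
  have ha1 : 1 ≤ a := by exact_mod_cast ha0
  have hε : 0 < σ' - σ - 2 / a := sub_pos.2 ((div_lt_comm₀ hσ' ha0).1 ha)
  have hcσ : 0 < c - σ' := lt_trans (by positivity) hc
  have hkc : 0 < k * (c - σ') - 1 := sub_pos.2 ((div_lt_iff₀' hk0).1 hc)
  obtain ⟨K, D, P, lam, hK, hP, hlam, h⟩ :=
    exists_forall_isSparseBlockade_handleLinked hk hn ha1 hN hlam'0 hlam'1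
  obtain ⟨N₀, hN₀⟩ := Filter.eventually_atTop.1 <| (eventually_le_natCast_rpow (4 * P) hε).and <|
    (eventually_le_natCast_rpow D hcσ).and (eventually_le_natCast_rpow (32 ^ k) hkc)
  refine ⟨K, N₀ + 1, lam, hK, by omega, hlam, fun {V ι _ G A I} hG hV hI hA ↦ ?_⟩
  obtain ⟨hP', hD, hk'⟩ := hN₀ _ (Nat.le_of_succ_le hV)
  obtain ⟨b, hb, hVb, hb2⟩ := exists_lt_pow_and_sq_le (by omega : 1 ≤ Fintype.card V) ha1
  have hV0 : (0 : ℝ) < Fintype.card V := by exact_mod_cast (by omega : 0 < Fintype.card V)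
  refine h hG (by positivity) hb hVb hI ?_ (le_rpow_div_pow hV0 hk') (hA.mono ?_)
  all_goals generalize (Fintype.card V : ℝ) = v at *
  · calc D * v ^ (1 - c) ≤ v ^ (c - σ') * v ^ (1 - c) := by gcongr
      _ = v ^ (1 - σ') := by rw [← Real.rpow_add hV0]; ring_nf
  · calc P * b ^ 2 * v ^ (1 - σ') ≤ P * (4 * v ^ (2 / a : ℝ)) * v ^ (1 - σ') := by gcongr
      _ = 4 * P * v ^ (2 / a : ℝ) * v ^ (1 - σ') := by ring
      _ ≤ v ^ (σ' - σ - 2 / a) * v ^ (2 / a : ℝ) * v ^ (1 - σ') := by gcongr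
      _ = v ^ (1 - σ) := by rw [← Real.rpow_add hV0, ← Real.rpow_add hV0]; ring_nf

end Asymptotics

/-! ### Rainbow copies of buildable graphs -/

section RainbowCopies

variable {ι : Type*} {G : SimpleGraph V} {H : SimpleGraph W} {A F : ι → Finset V} {I J : Finset ι}
  {S : Set W} {n : ℕ} {p : ℕ → W}

/-- `f` maps the vertices of the induced subgraph `H[S]` to an `A`-rainbow copy of it in `G`, the
image of `w` having colour `q w`. -/
structure IsRainbowCopyOn (G : SimpleGraph V) (H : SimpleGraph W) (S : Set W) (I : Finset ι)
    (A : ι → Finset V) (f : W → V) (q : W → ι) : Prop where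
  rainbowOn : RainbowOn A I f q S
  adj_iff : ∀ w ∈ S, ∀ w' ∈ S, G.Adj (f w) (f w') ↔ H.Adj w w'

theorem exists_eqOn_and_comp_eqOn {α β γ : Type*} {S : Set β} {s : Set α} {p : α → β}
    (hp : s.InjOn p) (hpS : ∀ i ∈ s, p i ∉ S) (f : β → γ) (z : α → γ) :
    ∃ f' : β → γ, S.EqOn f f' ∧ s.EqOn z (f' ∘ p) := by
  refine ⟨Function.extend (fun i : s ↦ p i) (fun i : s ↦ z i) f, fun w hw ↦ ?_, fun i hi ↦ ?_⟩
  · refine (Function.extend_apply' _ _ _ ?_).symm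
    rintro ⟨i, rfl⟩
    exact hpS i i.2 hw
  · exact (hp.injective.extend_apply (fun i : s ↦ z i) f ⟨i, hi⟩).symm

theorem RainbowOn.image {α β : Type*} {Q : Finset ι} {z : β → V} {q : β → ι} {φ : α → β}
    {s : Set α} (h : RainbowOn A Q (z ∘ φ) (q ∘ φ) s) : RainbowOn A Q z q (φ '' s) :=
  ⟨Set.forall_mem_image.2 h.color_mem, Set.forall_mem_image.2 h.mem_block,
    h.color_injOn.image_of_comp⟩

theorem RainbowOn.mono_blocks {α : Type*} {z : α → V} {q : α → ι} {s : Set α}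
    (h : RainbowOn F J z q s) (hFA : ∀ j ∈ J, F j ⊆ A j) : RainbowOn A J z q s :=
  ⟨h.color_mem, fun i hi ↦ hFA _ (h.color_mem i hi) (h.mem_block i hi), h.color_injOn⟩

theorem adj_iff_consecutive {z : ℕ → V} (hz : ∀ i, 0 < i → i + 1 < n → G.Adj (z i) (z (i + 1)))
    (hz' : ∀ i j, 0 < i → i + 1 < j → j < n → ¬ G.Adj (z i) (z j)) :
    ∀ i ∈ Set.Ioo 0 n, ∀ j ∈ Set.Ioo 0 n, G.Adj (z i) (z j) ↔ j = i + 1 ∨ i = j + 1 := by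
  rintro i ⟨hi, hin⟩ j ⟨hj, hjn⟩
  obtain hij | rfl | rfl | rfl | hij :
    i + 1 < j ∨ j = i + 1 ∨ i = j ∨ i = j + 1 ∨ j + 1 < i := by omega
  · exact iff_of_false (hz' i j hi hij hjn) (by omega)
  · exact iff_of_true (hz i hi hjn) (by omega)
  · exact iff_of_false (G.irrefl) (by omega)
  · exact iff_of_true (hz j hj hin).symm (by omega)
  · exact iff_of_false (fun h ↦ hz' j i hj hij hin h.symm) (by omega)

namespace IsHandle

theorem pos (hp : IsHandle H S n p) : 0 < n :=
  lt_of_lt_of_le two_pos hp.1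

theorem injOn (hp : IsHandle H S n p) : (Set.Iic n).InjOn p :=
  fun i hi j hj ↦ hp.2.1 i hi j hj

theorem zero_mem (hp : IsHandle H S n p) : p 0 ∈ S :=
  hp.2.2.1

theorem last_mem (hp : IsHandle H S n p) : p n ∈ S :=
  hp.2.2.2.1

theorem notMem (hp : IsHandle H S n p) : ∀ i ∈ Set.Ioo 0 n, p i ∉ S :=
  fun i hi ↦ hp.2.2.2.2.1 i hi.1 hi.2

theorem adj_interior_iff (hp : IsHandle H S n p) :
    ∀ i ∈ Set.Ioo 0 n, ∀ j ∈ Set.Ioo 0 n, H.Adj (p i) (p j) ↔ j = i + 1 ∨ i = j + 1 := by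
  obtain ⟨-, -, -, -, -, hadj, hnadj, -⟩ := hp
  exact adj_iff_consecutive (fun i _ hi ↦ hadj i (by omega)) fun i j _ hij hj ↦ hnadj i j hij hj.le

theorem adj_iff (hp : IsHandle H S n p) :
    ∀ i ∈ Set.Ioo 0 n, ∀ w ∈ S, H.Adj (p i) w ↔ i = 1 ∧ w = p 0 ∨ i + 1 = n ∧ w = p n := by
  have hS := hp.notMem
  obtain ⟨-, -, -, -, -, hadj, -, hdeg⟩ := hp
  rintro i ⟨hi, hin⟩ w hw
  constructor
  · intro h
    obtain rfl | rfl := hdeg i hi hin w (.inl hw) h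
    · obtain rfl : i = 1 := by
        by_contra
        exact hS (i - 1) ⟨by omega, by omega⟩ hw
      exact .inl ⟨rfl, rfl⟩
    · obtain rfl : i + 1 = n := by
        by_contra
        exact hS (i + 1) ⟨by omega, by omega⟩ hw
      exact .inr ⟨rfl, rfl⟩
  · rintro (⟨rfl, rfl⟩ | ⟨rfl, rfl⟩)
    · exact (hadj 0 (by omega)).symm
    · exact hadj i hin

theorem union_eq (hp : IsHandle H S n p) :
    S ∪ {w | ∃ j ≤ n, w = p j} = S ∪ p '' Set.Ioo 0 n := by
  refine Set.Subset.antisymm (Set.union_subset Set.subset_union_left ?_)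
    (Set.union_subset_union_right S ?_)
  · rintro _ ⟨j, hj, rfl⟩
    obtain rfl | hj0 := Nat.eq_zero_or_pos j
    · exact .inl hp.zero_mem
    obtain rfl | hjn := hj.eq_or_lt
    · exact .inl hp.last_mem
    · exact .inr ⟨j, ⟨hj0, hjn⟩, rfl⟩
  · rintro _ ⟨j, hj, rfl⟩
    exact ⟨j, hj.2.le, rfl⟩

end IsHandle

theorem IsRainbowHandle.adj_iff {Q : Finset ι} {a b : ι} {z : ℕ → V} {c : ℕ → ι} {f : W → V}
    {q : W → ι} (hz : IsRainbowHandle G A F Q J a b n z c) (hn : 0 < n)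
    (hf : RainbowOn F J f q S) {u v : W} (hu : u ∈ S) (hv : v ∈ S) (hzu : z 0 = f u)
    (hzv : z n = f v) (ha : q u = a) (hb : q v = b) :
    ∀ i ∈ Set.Ioo 0 n, ∀ w ∈ S, G.Adj (z i) (f w) ↔ i = 1 ∧ w = u ∨ i + 1 = n ∧ w = v := by
  intro i hi w hw
  constructor
  · intro h
    refine (hz.eq_of_adj i hi _ (hf.color_mem w hw) _ (hf.mem_block w hw) h).imp ?_ ?_
    · exact And.imp_right fun h ↦ hf.color_injOn hw hu (h.trans ha.symm)
    · exact And.imp_right fun h ↦ hf.color_injOn hw hv (h.trans hb.symm)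
  · rintro (⟨rfl, rfl⟩ | ⟨rfl, rfl⟩)
    · exact hzu ▸ (hz.adj 0 hn).symm
    · exact hzv ▸ hz.adj i hi.2

theorem IsRainbowCopyOn.exists_union_handle {f : W → V} {q : W → ι}
    (hf : IsRainbowCopyOn G H S J F f q) (hp : IsHandle H S n p) (hJI : J ⊆ I)
    (hFA : ∀ j ∈ J, F j ⊆ A j) (hF : HandleLinked G A F I J n) :
    ∃ f' q', IsRainbowCopyOn G H (S ∪ {w | ∃ j ≤ n, w = p j}) I A f' q' := by
  have hfS := hf.rainbowOn
  have hne : q (p 0) ≠ q (p n) := fun h ↦ hp.pos.ne <|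
    hp.injOn (Set.mem_Iic.2 n.zero_le) Set.self_mem_Iic (hfS.color_injOn hp.zero_mem hp.last_mem h)
  obtain ⟨z, c, hz0, hzn, hz⟩ := hF _ (hfS.color_mem _ hp.zero_mem) _
    (hfS.color_mem _ hp.last_mem) hne _ (hfS.mem_block _ hp.zero_mem) _
    (hfS.mem_block _ hp.last_mem)
  have hinj : (Set.Ioo 0 n).InjOn p := hp.injOn.mono fun i hi ↦ hi.2.le
  obtain ⟨f', hff', hzf'⟩ := exists_eqOn_and_comp_eqOn hinj hp.notMem f z
  obtain ⟨q', hqq', hcq'⟩ := exists_eqOn_and_comp_eqOn hinj hp.notMem q c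
  have hmixed : ∀ i ∈ Set.Ioo 0 n, ∀ w ∈ S, G.Adj (f' (p i)) (f' w) ↔ H.Adj (p i) w :=
    fun i hi w hw ↦ by
      rw [hp.adj_iff i hi w hw, ← hff' hw, show f' (p i) = z i from (hzf' hi).symm]
      exact hz.adj_iff hp.pos hfS hp.zero_mem hp.last_mem hz0 hzn rfl rfl i hi w hw
  refine ⟨f', q', hp.union_eq ▸ ⟨?_, ?_⟩⟩
  · rw [← union_sdiff_of_subset hJI]
    exact ((hfS.mono_blocks hFA).congr hff' hqq').union (hz.rainbowOn.congr hzf' hcq').image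
      disjoint_sdiff
  · rintro w (hw | ⟨i, hi, rfl⟩) w' (hw' | ⟨j, hj, rfl⟩)
    · rw [← hff' hw, ← hff' hw', hf.adj_iff w hw w' hw']
    · rw [G.adj_comm, H.adj_comm, hmixed j hj w hw]
    · exact hmixed i hi w' hw'
    · rw [hp.adj_interior_iff i hi j hj, show f' (p i) = z i from (hzf' hi).symm,
        show f' (p j) = z j from (hzf' hj).symm]
      exact adj_iff_consecutive (fun i _ hi ↦ hz.adj i (by omega)) hz.not_adj i hi j hj

theorem IsSparseBlockade.exists_not_adj {m lam : ℝ} (hA : IsSparseBlockade G A I m lam)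
    (hm : 0 < m) (hlam : lam < 1) {i j : ι} (hi : i ∈ I) (hj : j ∈ I) (hij : i ≠ j) :
    ∃ x ∈ A i, ∃ y ∈ A j, ¬ G.Adj x y := by
  have hpos : ∀ i ∈ I, (0 : ℝ) < #(A i) := fun i hi ↦ hm.trans_le (hA.le_card i hi)
  obtain ⟨x, hx⟩ : (A i).Nonempty := card_pos.1 (by exact_mod_cast hpos i hi)
  refine ⟨x, hx, ?_⟩
  by_contra! h
  have hnbhd : nbhdIn G {x} (A j) = A j :=
    (nbhdIn_subset _ _).antisymm fun y hy ↦ mem_nbhdIn_singleton.2 ⟨hy, h y hy⟩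
  have hdeg := hA.maxDegLE hi hj hij x hx
  rw [hnbhd] at hdeg
  nlinarith [hpos j hj]

theorem exists_isRainbowCopyOn_pair {u v : W} (huv : u ≠ v) (hadj : ¬ H.Adj u v) {a b : ι}
    (hab : a ≠ b) {x y : V} (hx : x ∈ A a) (hy : y ∈ A b) (hxy : ¬ G.Adj x y) :
    ∃ f q, IsRainbowCopyOn G H {u, v} {a, b} A f q := by
  have hadj' : ¬ H.Adj v u := fun h ↦ hadj h.symm
  have hyx : ¬ G.Adj y x := fun h ↦ hxy h.symm
  refine ⟨fun w ↦ if w = u then x else y, fun w ↦ if w = u then a else b, ⟨?_, ?_, ?_⟩, ?_⟩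
  · rintro w (rfl | rfl) <;> simp [huv.symm]
  · rintro w (rfl | rfl) <;> simp [huv.symm, hx, hy]
  · rintro w (rfl | rfl) w' (rfl | rfl) <;> simp [huv, huv.symm, hab, hab.symm]
  · rintro w (rfl | rfl) w' (rfl | rfl) <;> simp [huv.symm, hxy, hadj, hadj', hyx]

theorem BuildableOn.exists_forall_isRainbowCopyOn {β k : ℕ} (hS : BuildableOn H β S) (hk : 1 ≤ k)
    (hβ : 3 * k + 3 ≤ β) {c : ℝ} :
    ∀ {σ : ℝ}, 1 / (k : ℝ) < c - σ →
      ∃ (K N : ℕ) (lam : ℝ), 0 < K ∧ 0 < N ∧ 0 < lam ∧ ∀ {V ι : Type*} [Fintype V]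
        {G : SimpleGraph V} {A : ι → Finset V} {I : Finset ι},
        Coherent G ((Fintype.card V : ℝ) ^ (1 - c)) ((Fintype.card V : ℝ) ^ (1 - c)) →
        N ≤ Fintype.card V → #I = K →
        IsSparseBlockade G A I ((Fintype.card V : ℝ) ^ (1 - σ)) lam →
        ∃ f q, IsRainbowCopyOn G H S I A f q := by
  induction hS with
  | base u v huv hadj =>
    refine fun _ ↦ ⟨2, 1, 1 / 2, by norm_num, by norm_num, by norm_num,
      fun {V ι _ G A I} _ hV hI hA ↦ ?_⟩
    obtain ⟨a, b, hab, rfl⟩ := card_eq_two.1 hI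
    have hV0 : (0 : ℝ) < Fintype.card V := by exact_mod_cast hV
    obtain ⟨x, hx, y, hy, hxy⟩ := hA.exists_not_adj (Real.rpow_pos_of_pos hV0 _) (by norm_num)
      (mem_insert_self a _) (mem_insert_of_mem (mem_singleton_self b)) hab
    exact exists_isRainbowCopyOn_pair huv hadj hab hx hy hxy
  | handle S n p _ hp hn ih =>
    intro σ hσ
    obtain ⟨σ', hσσ', hσ'⟩ : ∃ σ', σ < σ' ∧ σ' < c - 1 / k := exists_between (by linarith)
    replace hσ' : 1 / (k : ℝ) < c - σ' := by linarith
    obtain ⟨K', N', lam', hK', hN', hlam', hcopy⟩ := ih hσ'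
    obtain ⟨n, rfl⟩ : ∃ n', n = n' + 2 := ⟨n - 2, by omega⟩
    obtain ⟨K, N, lam, hK, hN, hlam, hlinked⟩ := exists_forall_handleLinked hk
      (by omega : 3 * k + 1 ≤ n) hK' hσσ' hσ' (lt_min hlam' one_pos) (min_le_right lam' 1)
    refine ⟨K, N + N', lam, hK, by omega, hlam, fun {V ι _ G A I} hG hV hI hA ↦ ?_⟩
    obtain ⟨J, hJI, hJ, F, hFA, hF, hFlinked⟩ := hlinked hG (by omega) hI hA
    have hF' : IsSparseBlockade G F J _ lam' := ⟨hF.pairwiseDisjoint, hF.le_card,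
      hF.maxDegLE.mono' fun i j h ↦ h.mono (min_le_left _ _)⟩
    obtain ⟨f, q, hf⟩ := hcopy hG (by omega) hJ hF'
    exact hf.exists_union_handle hp hJI hFA hFlinked

theorem IsBlockade.isSparseBlockade [Fintype V] {I : Finset ℤ} {A : ℤ → Set V} {σ lam : ℝ}
    (hA : IsBlockade I A) (hσ : ShrinkageLE I A σ) (hlam : LinkageLE G I A lam) :
    IsSparseBlockade G (fun i ↦ (A i).toFinset) I ((Fintype.card V : ℝ) ^ (1 - σ)) lam := by
  refine ⟨fun i hi j hj hij ↦ Set.disjoint_toFinset.2 (hA.2 i hi j hj hij), fun i hi ↦ ?_,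
    fun i hi j hj hij v hv ↦ ?_⟩
  · simpa only [Set.ncard_eq_toFinset_card'] using hσ i hi
  · have hnbhd : G.neighborSet v ∩ A j = nbhdIn G {v} (A j).toFinset := by
      ext w
      simp [mem_nbhdIn_singleton, and_comm]
    have hdeg := hlam i hi j hj hij v (Set.mem_toFinset.1 hv)
    rwa [hnbhd, Set.ncard_coe_finset, Set.ncard_eq_toFinset_card'] at hdeg

theorem IsRainbowCopyOn.rainbowCopy [Fintype V] {I : Finset ℤ} {A : ℤ → Set V} {f : W → V}
    {q : W → ℤ} (hf : IsRainbowCopyOn G H Set.univ I (fun i ↦ (A i).toFinset) f q)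
    (hA : IsBlockade I A) : RainbowCopy G I A H := by
  have hq : Function.Injective q := Set.injOn_univ.1 hf.rainbowOn.color_injOn
  have hqI (w : W) : q w ∈ I := hf.rainbowOn.color_mem w (Set.mem_univ w)
  have hfA (w : W) : f w ∈ A (q w) :=
    Set.mem_toFinset.1 (hf.rainbowOn.mem_block w (Set.mem_univ w))
  have hinj : Function.Injective f := fun w w' h ↦ by
    by_contra hne
    exact Set.disjoint_left.1 (hA.2 _ (hqI w) _ (hqI w') (hq.ne hne)) (hfA w) (h ▸ hfA w')
  exact ⟨⟨⟨f, hinj⟩, hf.adj_iff _ (Set.mem_univ _) _ (Set.mem_univ _)⟩, q, hq,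
    fun w ↦ ⟨hqI w, hfA w⟩⟩

end RainbowCopies

/-- for every `β`-buildable graph `H` and every `σ > 0` with
`c - σ > 1/⌊(β-3)/3⌋`, there exist `K, N > 0` and `λ > 0` such that `(N,K,σ,λ,c)`
forces `H`. -/
theorem statement_19 (β : ℕ) (hβ : 2 ≤ β) (hβ3 : 1 ≤ (β - 3) / 3)
    (c : ℝ) (hc : 1 / (((β - 3) / 3 : ℕ) : ℝ) < c)
    {W : Type} [Fintype W] (H : SimpleGraph W) (hH : Buildable H β)
    (σ : ℝ) (hσ : 0 < σ) (hcσ : 1 / (((β - 3) / 3 : ℕ) : ℝ) < c - σ) :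
    ∃ (K N : ℕ) (lam : ℝ), 0 < K ∧ 0 < N ∧ 0 < lam ∧ Forces H N K σ lam c := by
  obtain ⟨K, N, lam, hK, hN, hlam, hcopy⟩ :=
    BuildableOn.exists_forall_isRainbowCopyOn hH hβ3 (by omega) hcσ
  refine ⟨K, N, lam, hK, hN, hlam, fun G hG hV I A hA hI hσA hlamA ↦ ?_⟩
  classical
  obtain ⟨f, q, hf⟩ := hcopy hG hV hI (hA.isSparseBlockade hσA hlamA)
  exact hf.rainbowCopy hA

end PurePairs
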